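/- arXiv:2212.03987 — 16 statements merged into one kernel-verified Lean document; each statement's English description precedes it below -/
import Mathlib

section
/- Let p be a prime and let u, v be positive integers with w = gcd(u, v). Let a_0, …, a_{v−1} and b_0, …, b_{u−1} be integers in {0, …, p−1}, and define J = Σ_{k=0}^{u/w−1} Σ_{r=0}^{v−1} a_r · p^{vk+r} and I = Σ_{k=0}^{v/w−1} Σ_{s=0}^{u−1} b_s · p^{uk+s}. Then the binomial coefficient C(J, I) is not divisible by p if and only if for every s ∈ {0, …, u−1}, writing t ∈ {0, …, w−1} for the residue of s modulo w, one has b_s ≤ min{ a_{θw+t} : θ ∈ {0, …, v/w − 1} }. -/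
theorem aux_choose_small (p c d : ℕ) (hp : p.Prime) (hc : c < p) :
    ¬ p ∣ Nat.choose c d ↔ d ≤ c := by
  constructor
  · intro h
    by_contra hd
    exact h (by rw [Nat.choose_eq_zero_of_lt (by omega)]; exact dvd_zero p)
  · intro h hdvd
    have h1 : p ∣ c.factorial := by
      rw [← Nat.choose_mul_factorial_mul_factorial h, mul_assoc]
      exact Dvd.dvd.mul_right hdvd _
    have := (hp.dvd_factorial).1 h1
    omega

theorem aux_lucas (p : ℕ) (hp : p.Prime) (n : ℕ) : ∀ (c d : ℕ → ℕ),
    (∀ i < n, c i < p) → (∀ i < n, d i < p) →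
    (¬ p ∣ Nat.choose (∑ i ∈ Finset.range n, c i * p ^ i) (∑ i ∈ Finset.range n, d i * p ^ i)
      ↔ ∀ i < n, d i ≤ c i) := by
  have : Fact p.Prime := ⟨hp⟩
  induction n with
  | zero => intro c d _ _; simp [hp.one_lt.ne']
  | succ n ih =>
    intro c d hc hd
    have key : ∀ e : ℕ → ℕ, ∑ i ∈ Finset.range (n + 1), e i * p ^ i
        = e 0 + p * ∑ i ∈ Finset.range n, e (i + 1) * p ^ i := by
      intro e
      rw [Finset.sum_range_succ', Finset.mul_sum, add_comm]
      congr 1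
      · simp
      · apply Finset.sum_congr rfl
        intro i _
        ring
    rw [key c, key d]
    have hL := @Choose.choose_modEq_choose_mod_mul_choose_div_nat
      (c 0 + p * ∑ i ∈ Finset.range n, c (i + 1) * p ^ i)
      (d 0 + p * ∑ i ∈ Finset.range n, d (i + 1) * p ^ i) p _
    rw [Nat.add_mul_mod_self_left, Nat.add_mul_mod_self_left, Nat.add_mul_div_left _ _ hp.pos,
      Nat.add_mul_div_left _ _ hp.pos, Nat.mod_eq_of_lt (hc 0 (by omega)),
      Nat.mod_eq_of_lt (hd 0 (by omega)), Nat.div_eq_of_lt (hc 0 (by omega)),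
      Nat.div_eq_of_lt (hd 0 (by omega)), zero_add, zero_add] at hL
    rw [hL.dvd_iff (dvd_refl p), hp.dvd_mul, not_or,
      aux_choose_small p _ _ hp (hc 0 (by omega)),
      ih (fun i => c (i + 1)) (fun i => d (i + 1)) (fun i hi => hc _ (by omega))
        (fun i hi => hd _ (by omega))]
    constructor
    · rintro ⟨h0, h1⟩ i hi
      cases i with
      | zero => exact h0
      | succ i => exact h1 i (by omega)
    · intro h
      exact ⟨h 0 (by omega), fun i hi => h _ (by omega)⟩

theorem aux_flatten (p v : ℕ) (a : ℕ → ℕ) (m : ℕ) :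
    ∑ k ∈ Finset.range m, ∑ r ∈ Finset.range v, a r * p ^ (v * k + r)
      = ∑ i ∈ Finset.range (v * m), a (i % v) * p ^ i := by
  induction m with
  | zero => simp
  | succ m ih =>
    rw [Finset.sum_range_succ, ih, Nat.mul_succ, Finset.sum_range_add]
    congr 1
    apply Finset.sum_congr rfl
    intro r hr
    rw [Nat.mul_add_mod, Nat.mod_eq_of_lt (Finset.mem_range.1 hr)]

/-- Lemma 4.4 (Lemma `13102022-1`): Lucas-type criterion for the non-vanishing mod `p`
of the binomial coefficient `C(J, I)` where `J` and `I` have the indicated base-`p`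
expansions. -/
theorem stmt_0 (p u v : ℕ) (hp : p.Prime) (hu : 0 < u) (hv : 0 < v)
    (w : ℕ) (hw : w = Nat.gcd u v)
    (a b : ℕ → ℕ)
    (ha : ∀ r < v, a r ≤ p - 1) (hb : ∀ s < u, b s ≤ p - 1)
    (J I : ℕ)
    (hJ : J = ∑ k ∈ Finset.range (u / w), ∑ r ∈ Finset.range v, a r * p ^ (v * k + r))
    (hI : I = ∑ k ∈ Finset.range (v / w), ∑ s ∈ Finset.range u, b s * p ^ (u * k + s)) :
    ¬ p ∣ Nat.choose J I ↔ ∀ s < u, ∀ θ < v / w, b s ≤ a (θ * w + s % w) := by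
  have hp1 := hp.one_lt
  have hwu : w ∣ u := hw ▸ Nat.gcd_dvd_left u v
  have hwv : w ∣ v := hw ▸ Nat.gcd_dvd_right u v
  have hw0 : 0 < w := Nat.pos_of_dvd_of_pos hwu hu
  have hL1 : v * (u / w) = Nat.lcm u v := by
    rw [Nat.lcm, ← hw, ← Nat.mul_div_assoc _ hwu, mul_comm]
  have hL2 : u * (v / w) = Nat.lcm u v := by
    rw [Nat.lcm, ← hw, ← Nat.mul_div_assoc _ hwv]
  rw [hJ, hI, aux_flatten, aux_flatten, hL1, hL2,
    aux_lucas p hp (Nat.lcm u v) (fun i => a (i % v)) (fun i => b (i % u))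
      (fun i _ => by have := ha (i % v) (Nat.mod_lt _ hv); omega)
      (fun i _ => by have := hb (i % u) (Nat.mod_lt _ hu); omega)]
  constructor
  · intro h s hs θ hθ
    have hr : θ * w + s % w < v := by
      have h1 := Nat.mod_lt s hw0
      have h2 : (θ + 1) * w ≤ v / w * w := Nat.mul_le_mul_right w hθ
      rw [Nat.div_mul_cancel hwv] at h2
      linarith [add_mul θ 1 w]
    have hcong : s ≡ θ * w + s % w [MOD Nat.gcd u v] := by
      rw [← hw]
      simp [Nat.ModEq]
    have hlt := Nat.chineseRemainder'_lt_lcm hcong hu.ne' hv.ne'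
    obtain ⟨h1, h2⟩ := (Nat.chineseRemainder' hcong).2
    have h3 := h _ hlt
    rw [h1, h2, Nat.mod_eq_of_lt hs, Nat.mod_eq_of_lt hr] at h3
    exact h3
  · intro h i _
    have h1 := h (i % u) (Nat.mod_lt _ hu) (i % v / w)
      (Nat.div_lt_div_of_lt_of_dvd hwv (Nat.mod_lt _ hv))
    rw [Nat.mod_mod_of_dvd _ hwu, ← Nat.mod_mod_of_dvd i hwv, mul_comm, Nat.div_add_mod] at h1
    exact h1
end

section
/- Let h, t, α be positive integers, let a_1, …, a_h be integers coprime to α, and let b, s ∈ {0, …, α−1}. Let N be the number of tuples (x_1, …, x_h) ∈ {0, …, tα+s}^h satisfying a_1x_1 + ⋯ + a_hx_h ≡ b (mod α), and let δ be the number of tuples (y_1, …, y_h) ∈ {0, …, s}^h satisfying a_1y_1 + ⋯ + a_hy_h ≡ b (mod α). Then N = ((tα+s+1)^h − (s+1)^h)/α + δ, and moreover 0 ≤ δ ≤ (s+1)^{h−1}. -/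
open Finset in
lemma aux_periodic (f : ℕ → ℕ) (p : ℕ) (hf : ∀ x, f (p + x) = f x) (t m : ℕ) :
    ∑ x ∈ range (t * p + m), f x = t * (∑ x ∈ range p, f x) + ∑ x ∈ range m, f x := by
  induction t with
  | zero => simp
  | succ t ih =>
    have e : (t + 1) * p + m = p + (t * p + m) := by ring
    rw [e, Finset.sum_range_add]
    simp only [hf]
    rw [ih]
    ring

/-- indicator of the congruence -/
def auxI (α : ℕ) (u v : ℤ) : ℕ := if u ≡ v [ZMOD (α : ℤ)] then 1 else 0

def auxC (α h : ℕ) (a : Fin h → ℤ) (n : ℕ) (b : ℤ) : ℕ :=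
  ∑ x ∈ Fintype.piFinset (fun _ : Fin h => Finset.range n), auxI α (∑ i, a i * (x i : ℤ)) b

lemma auxI_sub (α : ℕ) (u v w : ℤ) : auxI α (u + v) w = auxI α v (w - u) := by
  unfold auxI
  congr 1
  simp only [Int.modEq_iff_dvd, eq_iff_iff]
  rw [show w - (u + v) = w - u - v by ring]

lemma auxI_period (α : ℕ) (c u b : ℤ) (x : ℕ) :
    auxI α (c * ((α + x : ℕ) : ℤ) + u) b = auxI α (c * (x : ℤ) + u) b := by
  unfold auxI
  congr 1
  simp only [Int.modEq_iff_dvd, eq_iff_iff]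
  rw [show b - (c * ((α + x : ℕ) : ℤ) + u) = b - (c * (x : ℤ) + u) - α * c by push_cast; ring]
  exact dvd_sub_left (Dvd.intro _ rfl)

lemma auxI_one (α : ℕ) (hα : 0 < α) (c : ℤ) (hc : IsCoprime c (α : ℤ)) (u b : ℤ) :
    ∑ x ∈ Finset.range α, auxI α (c * (x : ℤ) + u) b = 1 := by
  unfold auxI
  rw [← Finset.card_filter, Finset.card_eq_one]
  obtain ⟨p, q, hpq⟩ := hc
  have hα' : (0 : ℤ) < α := by exact_mod_cast hα
  have h0 := Int.emod_nonneg (p * (b - u)) hα'.ne'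
  have h1 := Int.emod_lt_of_pos (p * (b - u)) hα'
  have h2 := Int.emod_add_mul_ediv (p * (b - u)) α
  refine ⟨(p * (b - u) % α).toNat, ?_⟩
  ext x
  simp only [Finset.mem_filter, Finset.mem_range, Finset.mem_singleton, Int.modEq_iff_dvd]
  constructor
  · rintro ⟨hx, k, hk⟩
    have : p * (b - u) % α = x := by
      have e : p * (b - u) = x + α * (p * k - q * x) := by
        linear_combination p * hk + (x : ℤ) * hpq
      rw [e, Int.add_mul_emod_self_left]
      exact Int.emod_eq_of_lt (by positivity) (by exact_mod_cast hx)
    omega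
  · intro hx
    have hx' : (x : ℤ) = p * (b - u) % α := by omega
    refine ⟨by omega, q * (b - u) + c * (p * (b - u) / α), ?_⟩
    rw [hx']
    linear_combination (-(b - u)) * hpq - c * h2

lemma auxC_succ (α h : ℕ) (a : Fin (h + 1) → ℤ) (n : ℕ) (b : ℤ) :
    auxC α (h + 1) a n b = ∑ x ∈ Finset.range n,
      ∑ y ∈ Fintype.piFinset (fun _ : Fin h => Finset.range n),
        auxI α (a 0 * (x : ℤ) + ∑ i, Fin.tail a i * (y i : ℤ)) b := by
  unfold auxC
  rw [← Finset.sum_product']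
  refine Finset.sum_bij' (fun x _ => (x 0, Fin.tail x)) (fun p _ => Fin.cons p.1 p.2) ?_ ?_ ?_ ?_ ?_
  · intro x hx
    simp only [Fintype.mem_piFinset, Finset.mem_product] at hx ⊢
    exact ⟨hx 0, fun i => hx _⟩
  · rintro ⟨x, y⟩ hx
    simp only [Fintype.mem_piFinset, Finset.mem_product] at hx ⊢
    intro i
    refine Fin.cases ?_ (fun j => ?_) i
    · simpa using hx.1
    · simpa using hx.2 j
  · intro x _
    simp
  · rintro ⟨x, y⟩ _
    simp
  · intro x _
    rw [Fin.sum_univ_succ]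
    rfl

lemma auxC_main (t α m : ℕ) (hα : 0 < α) (h : ℕ) (a : Fin h → ℤ)
    (ha : ∀ i, IsCoprime (a i) (α : ℤ)) (b : ℤ) :
    α * auxC α h a (t * α + m) b + m ^ h = α * auxC α h a m b + (t * α + m) ^ h := by
  induction h generalizing b with
  | zero => simp [auxC]
  | succ h ih =>
    have ih' := ih (Fin.tail a) (fun i => ha _)
    set M := t * α + m with hM
    have key : ∑ x ∈ Finset.range M, auxC α h (Fin.tail a) m (b - a 0 * (x : ℤ))
        = t * m ^ h + auxC α (h + 1) a m b := by
      rw [auxC_succ]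
      simp only [auxC, ← auxI_sub]
      rw [Finset.sum_comm, Finset.sum_comm (s := Finset.range m)]
      have hp : ∀ u : ℤ, ∑ x ∈ Finset.range M, auxI α (a 0 * (x : ℤ) + u) b
          = t + ∑ x ∈ Finset.range m, auxI α (a 0 * (x : ℤ) + u) b := by
        intro u
        have := aux_periodic (fun x : ℕ => auxI α (a 0 * (x : ℤ) + u) b) α
          (auxI_period α (a 0) u b) t m
        rw [auxI_one α hα (a 0) (ha 0), mul_one] at this
        exact this
      simp_rw [hp]
      simp [Finset.sum_add_distrib, Fintype.card_piFinset, mul_comm]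
    have e1 : auxC α (h + 1) a M b
        = ∑ x ∈ Finset.range M, auxC α h (Fin.tail a) M (b - a 0 * (x : ℤ)) := by
      rw [auxC_succ]
      simp only [auxC, ← auxI_sub]
    have e2 : α * auxC α (h + 1) a M b + M * m ^ h
        = α * (t * m ^ h + auxC α (h + 1) a m b) + M * M ^ h := by
      rw [← key, e1, Finset.mul_sum, Finset.mul_sum]
      have := Finset.sum_congr (rfl : Finset.range M = Finset.range M)
        (fun x _ => ih' (b - a 0 * (x : ℤ)))
      simpa [Finset.sum_add_distrib] using this
    have e3 : M * m ^ h = t * α * m ^ h + m ^ (h + 1) := by rw [hM]; ring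
    have e4 : M * M ^ h = M ^ (h + 1) := by ring
    rw [e3, e4] at e2
    linarith

lemma auxC_le (α m : ℕ) (hα : 0 < α) (hm : m ≤ α) (h : ℕ) (a : Fin (h + 1) → ℤ)
    (ha : ∀ i, IsCoprime (a i) (α : ℤ)) (b : ℤ) :
    auxC α (h + 1) a m b ≤ m ^ h := by
  rw [auxC_succ, Finset.sum_comm]
  calc _ ≤ ∑ y ∈ Fintype.piFinset (fun _ : Fin h => Finset.range m), 1 := by
        refine Finset.sum_le_sum fun y _ => ?_
        refine le_trans ?_ (auxI_one α hα (a 0) (ha 0) (∑ i, Fin.tail a i * (y i : ℤ)) b).le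
        exact Finset.sum_le_sum_of_subset (Finset.range_mono hm)
    _ = m ^ h := by simp [Fintype.card_piFinset]

/-- Lemma on the number of solutions of `a₁x₁ + ⋯ + a_h x_h ≡ b (mod α)` with
`xᵢ ∈ {0, …, tα+s}`: it equals `((tα+s+1)^h − (s+1)^h)/α + δ`, where `δ` is the number of
solutions with all coordinates in `{0, …, s}`, and `0 ≤ δ ≤ (s+1)^(h−1)`. -/
theorem stmt_1 (h t α : ℕ) (hh : 0 < h) (ht : 0 < t) (hα : 0 < α)
    (a : Fin h → ℤ) (ha : ∀ i, IsCoprime (a i) (α : ℤ))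
    (b s : ℕ) (hb : b < α) (hs : s < α)
    (N δ : ℕ)
    (hN : N = (Finset.filter
        (fun x : Fin h → ℕ => (∑ i, a i * (x i : ℤ)) ≡ (b : ℤ) [ZMOD (α : ℤ)])
        (Fintype.piFinset fun _ => Finset.range (t * α + s + 1))).card)
    (hδ : δ = (Finset.filter
        (fun y : Fin h → ℕ => (∑ i, a i * (y i : ℤ)) ≡ (b : ℤ) [ZMOD (α : ℤ)])
        (Fintype.piFinset fun _ => Finset.range (s + 1))).card) :
    N = ((t * α + s + 1) ^ h - (s + 1) ^ h) / α + δ ∧ δ ≤ (s + 1) ^ (h - 1) := by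
  have hN' : N = auxC α h a (t * α + (s + 1)) b := by
    rw [hN, Finset.card_filter]; rfl
  have hδ' : δ = auxC α h a (s + 1) b := by
    rw [hδ, Finset.card_filter]; rfl
  have key := auxC_main t α (s + 1) hα h a ha b
  rw [← hN', ← hδ', ← add_assoc] at key
  have hle : (s + 1) ^ h ≤ (t * α + s + 1) ^ h := Nat.pow_le_pow_left (by omega) h
  refine ⟨?_, ?_⟩
  · have e : (t * α + s + 1) ^ h - (s + 1) ^ h = α * N - α * δ := by omega
    have hlt : δ ≤ N := by
      by_contra hc
      have : α * N < α * δ := Nat.mul_lt_mul_of_pos_left (by omega) hα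
      omega
    rw [e, ← Nat.mul_sub, Nat.mul_div_cancel_left _ hα]
    omega
  · obtain ⟨k, rfl⟩ : ∃ k, h = k + 1 := ⟨h - 1, by omega⟩
    rw [hδ']
    exact auxC_le α (s + 1) hα hs k a ha b
end

section
/- Let h ≥ 1 and α ≥ 2 be integers, let a_1, …, a_h be integers coprime to α, and let b ∈ {0, …, α−1}. Let δ be the number of tuples (y_1, …, y_h) ∈ {0, …, α−2}^h satisfying a_1y_1 + ⋯ + a_hy_h ≡ b (mod α). If a_1 + ⋯ + a_h ≡ −b (mod α), then δ = ((α−1)^h − (−1)^h)/α + (−1)^h; otherwise δ = ((α−1)^h − (−1)^h)/α. -/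
/-- A linear congruence with unit coefficient has exactly one solution in `{0, …, α-1}`. -/
theorem count_one (α : ℕ) (hα : 2 ≤ α) (a c : ℤ) (ha : IsCoprime a (α : ℤ)) :
    (∑ y ∈ Finset.range α, if a * (y : ℤ) ≡ c [ZMOD (α : ℤ)] then (1 : ℤ) else 0) = 1 := by
  obtain ⟨u, v, huv⟩ := ha
  have hpos : (0 : ℤ) < α := by omega
  have key : ∀ y : ℤ, a * y ≡ c [ZMOD (α : ℤ)] ↔ y ≡ u * c [ZMOD (α : ℤ)] := by
    intro y
    rw [Int.modEq_iff_dvd, Int.modEq_iff_dvd]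
    constructor
    · rintro ⟨k, hk⟩
      exact ⟨u * k - v * y, by linear_combination u * hk + y * huv⟩
    · rintro ⟨k, hk⟩
      exact ⟨a * k + v * c, by linear_combination a * hk - c * huv⟩
  have hn := Int.emod_nonneg (u * c) hpos.ne'
  have hl := Int.emod_lt_of_pos (u * c) hpos
  rw [Finset.sum_eq_single ((u * c % α).toNat)]
  · rw [if_pos]
    rw [key, Int.toNat_of_nonneg hn]
    exact Int.mod_modEq _ _
  · intro y hy hne
    rw [if_neg]
    rw [key]
    intro h
    apply hne
    rw [Finset.mem_range] at hy
    have h2 : (y : ℤ) % α = u * c % α := h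
    rw [Int.emod_eq_of_lt (by omega) (by omega)] at h2
    omega
  · intro h
    exfalso
    apply h
    rw [Finset.mem_range]
    omega

theorem count_main (α : ℕ) (hα : 2 ≤ α) (h : ℕ) : ∀ (a : Fin h → ℤ)
    (_ : ∀ i, IsCoprime (a i) (α : ℤ)) (b : ℤ),
    (α : ℤ) * ((Finset.filter
        (fun y : Fin h → ℕ => (∑ i, a i * (y i : ℤ)) ≡ b [ZMOD (α : ℤ)])
        (Fintype.piFinset fun _ : Fin h => Finset.range (α - 1))).card : ℤ) =
    ((α : ℤ) - 1) ^ h - (-1) ^ h +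
      α * (-1) ^ h * (if (∑ i, a i) ≡ -b [ZMOD (α : ℤ)] then 1 else 0) := by
  induction h with
  | zero =>
    intro a _ b
    have : (0 ≡ b [ZMOD (α : ℤ)]) ↔ (0 ≡ -b [ZMOD (α : ℤ)]) := by
      simp [Int.modEq_iff_dvd]
    by_cases hb : 0 ≡ b [ZMOD (α : ℤ)]
    · simp [hb, this.1 hb]
    · have hb' : ¬ (0 ≡ -b [ZMOD (α : ℤ)]) := fun h => hb (this.2 h)
      simp [hb, hb']
  | succ h ih =>
    intro a ha b
    have hfib : (Finset.filter
        (fun y : Fin (h+1) → ℕ => (∑ i, a i * (y i : ℤ)) ≡ b [ZMOD (α : ℤ)])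
        (Fintype.piFinset fun _ : Fin (h+1) => Finset.range (α - 1))).card =
        ∑ k ∈ Finset.range (α - 1), (Finset.filter
        (fun y : Fin h → ℕ => (∑ i, a i.succ * (y i : ℤ)) ≡ b - a 0 * k [ZMOD (α : ℤ)])
        (Fintype.piFinset fun _ : Fin h => Finset.range (α - 1))).card := by
      have hiff : ∀ s t : ℤ, t + s ≡ b [ZMOD (α : ℤ)] ↔ s ≡ b - t [ZMOD (α : ℤ)] := by
        intro s t
        rw [Int.modEq_iff_dvd, Int.modEq_iff_dvd, sub_sub]
      rw [Finset.card_eq_sum_card_fiberwise (f := fun y => y 0) (t := Finset.range (α - 1))]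
      · refine Finset.sum_congr rfl fun k hk => ?_
        refine Finset.card_bij' (fun y _ => Fin.tail y) (fun y _ => Fin.cons k y) ?_ ?_ ?_ ?_
        · intro y hy
          simp only [Finset.mem_filter, Fintype.mem_piFinset, Fin.sum_univ_succ] at hy ⊢
          obtain ⟨⟨h1, h2⟩, rfl⟩ := hy
          exact ⟨fun i => h1 i.succ, (hiff _ _).1 h2⟩
        · intro y hy
          simp only [Finset.mem_filter, Fintype.mem_piFinset, Fin.sum_univ_succ, Fin.cons_zero,
            Fin.cons_succ, and_true] at hy ⊢
          refine ⟨fun i => ?_, (hiff _ _).2 hy.2⟩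
          refine Fin.cases ?_ (fun j => ?_) i
          · simpa using hk
          · simpa using hy.1 j
        · intro y hy
          have : y 0 = k := (Finset.mem_filter.1 hy).2
          subst this
          exact Fin.cons_self_tail y
        · intro y hy
          exact Fin.tail_cons _ _
      · intro y hy
        have hy' := (Finset.mem_filter.1 (Finset.mem_coe.1 hy)).1
        exact Finset.mem_coe.2 (Fintype.mem_piFinset.1 hy' 0)
    rw [hfib]
    push_cast
    rw [Finset.mul_sum, Finset.sum_congr rfl
      (fun (k : ℕ) _ => ih (fun i => a i.succ) (fun i => ha i.succ) (b - a 0 * (k : ℤ)))]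
    rw [Finset.sum_add_distrib, ← Finset.mul_sum]
    have hc := count_one α hα (a 0) (∑ i : Fin h, a i.succ + b) (ha 0)
    have hα1 : α = (α - 1) + 1 := by omega
    have hcast : ((α - 1 : ℕ) : ℤ) = (α : ℤ) - 1 := by omega
    have e1 : ∀ k : ℤ, (∑ i : Fin h, a i.succ ≡ -(b - a 0 * k) [ZMOD (α : ℤ)]) ↔
        (a 0 * k ≡ ∑ i : Fin h, a i.succ + b [ZMOD (α : ℤ)]) := by
      intro k
      rw [Int.modEq_iff_dvd, Int.modEq_iff_dvd, ← dvd_neg]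
      ring_nf
    have e2 : (∑ i, a i ≡ -b [ZMOD (α : ℤ)]) ↔
        (a 0 * ((α - 1 : ℕ) : ℤ) ≡ ∑ i : Fin h, a i.succ + b [ZMOD (α : ℤ)]) := by
      rw [Int.modEq_iff_dvd, Int.modEq_iff_dvd, hcast, Fin.sum_univ_succ]
      constructor
      · rintro ⟨k, hk⟩
        exact ⟨-k - a 0, by linear_combination -hk⟩
      · rintro ⟨k, hk⟩
        exact ⟨-k - a 0, by linear_combination -hk⟩
    have hr : Finset.range α = Finset.range ((α - 1) + 1) := congrArg _ hα1
    rw [hr, Finset.sum_range_succ] at hc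
    simp only [e1, e2]
    rw [eq_sub_of_add_eq hc, Finset.sum_const, Finset.card_range, nsmul_eq_mul, hcast]
    ring


/-- Item (iii) of the counting lemma: the number `δ` of solutions of
`a₁y₁ + ⋯ + a_h y_h ≡ b (mod α)` with `yᵢ ∈ {0, …, α−2}` equals
`((α−1)^h − (−1)^h)/α + (−1)^h` if `a₁ + ⋯ + a_h ≡ −b (mod α)`, and
`((α−1)^h − (−1)^h)/α` otherwise. -/
theorem stmt_2 (h α : ℕ) (hh : 1 ≤ h) (hα : 2 ≤ α)
    (a : Fin h → ℤ) (ha : ∀ i, IsCoprime (a i) (α : ℤ))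
    (b : ℕ) (hb : b < α)
    (δ : ℕ)
    (hδ : δ = (Finset.filter
        (fun y : Fin h → ℕ => (∑ i, a i * (y i : ℤ)) ≡ (b : ℤ) [ZMOD (α : ℤ)])
        (Fintype.piFinset fun _ : Fin h => Finset.range (α - 1))).card) :
    ((∑ i, a i) ≡ -(b : ℤ) [ZMOD (α : ℤ)] →
      (δ : ℤ) = (((α : ℤ) - 1) ^ h - (-1) ^ h) / α + (-1) ^ h) ∧
    (¬ (∑ i, a i) ≡ -(b : ℤ) [ZMOD (α : ℤ)] →
      (δ : ℤ) = (((α : ℤ) - 1) ^ h - (-1) ^ h) / α) := by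
  have hpos : (α : ℤ) ≠ 0 := by omega
  have hm := count_main α hα h a ha b
  rw [← hδ] at hm
  constructor
  · intro hc
    rw [if_pos hc] at hm
    have : ((α : ℤ) - 1) ^ h - (-1) ^ h = α * (δ - (-1) ^ h) := by linear_combination -hm
    rw [this, Int.mul_ediv_cancel_left _ hpos]
    ring
  · intro hc
    rw [if_neg hc] at hm
    have : ((α : ℤ) - 1) ^ h - (-1) ^ h = α * δ := by linear_combination -hm
    rw [this, Int.mul_ediv_cancel_left _ hpos]
end

section
/- Let α be a positive even integer, let h be a positive odd integer, and let a_1, …, a_h be integers coprime to α. Let δ be the number of tuples (y_1, …, y_h) ∈ {0, …, α/2}^h satisfying a_1y_1 + ⋯ + a_hy_h ≡ 0 (mod α). Then δ = ((α/2+1)^h − 1)/α + 1/2; equivalently, 2αδ = 2((α/2+1)^h − 1) + α. -/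
theorem aux_sum {A ι : Type*} [AddCommGroup A] (ψ : AddChar A ℂ) (s : Finset ι) (f : ι → A) :
    ψ (∑ i ∈ s, f i) = ∏ i ∈ s, ψ (f i) := by
  classical
  induction s using Finset.induction_on with
  | empty => simp
  | insert i s hi ih =>
    rw [Finset.sum_insert hi, Finset.prod_insert hi, AddChar.map_add_eq_mul, ih]

open Finset in
theorem aux_S (n : ℕ) (z w : ℂ) (hzw : z * w = 1) (hz : z ^ n = -1) :
    ∑ y ∈ range (n + 1), w ^ y = -∑ y ∈ range (n + 1), z ^ y := by
  rw [← Finset.sum_range_reflect (fun y => z ^ y), ← Finset.sum_neg_distrib]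
  apply Finset.sum_congr rfl
  intro y hy
  have hy' : y ≤ n := by simpa [Nat.lt_succ_iff] using hy
  have e : n + 1 - 1 - y = n - y := by omega
  rw [e]
  have h1 : z ^ (n - y) * z ^ y = -1 := by rw [← pow_add, Nat.sub_add_cancel hy', hz]
  have h2 : z ^ y * w ^ y = 1 := by rw [← mul_pow, hzw, one_pow]
  linear_combination (w ^ y) * h1 - z ^ (n - y) * h2

open Finset in
theorem aux_S1 (n : ℕ) (z : ℂ) (hz1 : z ≠ 1) (hz : z ^ n = 1) :
    ∑ y ∈ range (n + 1), z ^ y = 1 := by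
  rw [Finset.sum_range_succ, hz]
  have := geom_sum_mul z n
  rw [hz, sub_self] at this
  have h3 := (mul_eq_zero.1 this).resolve_right (sub_ne_zero.2 hz1)
  rw [h3, zero_add]

/-- Item (iv) of the counting lemma: for `α` even, `h` odd, the number `δ` of solutions of
`a₁y₁ + ⋯ + a_h y_h ≡ 0 (mod α)` with `yᵢ ∈ {0, …, α/2}` satisfies
`δ = ((α/2+1)^h − 1)/α + 1/2`, equivalently `2αδ = 2((α/2+1)^h − 1) + α`. -/
theorem stmt_3 (α h : ℕ) (hα : 0 < α) (hαe : Even α) (hh : 0 < h) (hho : Odd h)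
    (a : Fin h → ℤ) (ha : ∀ i, IsCoprime (a i) (α : ℤ))
    (δ : ℕ)
    (hδ : δ = (Finset.filter
        (fun y : Fin h → ℕ => (∑ i, a i * (y i : ℤ)) ≡ 0 [ZMOD (α : ℤ)])
        (Fintype.piFinset fun _ : Fin h => Finset.range (α / 2 + 1))).card) :
    2 * α * δ = 2 * ((α / 2 + 1) ^ h - 1) + α := by
  classical
  obtain ⟨n, hn⟩ := hαe
  have hn2 : α / 2 = n := by omega
  rw [hn2] at hδ ⊢
  have hn0 : 0 < n := by omega
  have : NeZero α := ⟨by omega⟩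
  set ψ := ZMod.stdAddChar (N := α) with hψ
  have hprim : ψ.IsPrimitive := ZMod.isPrimitive_stdAddChar α
  have hinj : ∀ x : ZMod α, ψ x = 1 → x = 0 := fun x hx => by
    apply ZMod.injective_stdAddChar (N := α)
    rw [AddChar.map_zero_eq_one]; exact hx
  have hnn : (n : ZMod α) + n = 0 := by
    have := ZMod.natCast_self α
    rw [← Nat.cast_add, ← hn]; exact this
  have hnne : (n : ZMod α) ≠ 0 := by
    intro h0
    rw [ZMod.natCast_eq_zero_iff] at h0
    have := Nat.le_of_dvd hn0 h0
    omega
  have hodd : ∀ i, ((a i : ℤ) : ZMod α) * n = n := by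
    intro i
    have h2 : IsCoprime (a i) 2 := (ha i).of_isCoprime_of_dvd_right ⟨n, by rw [hn]; push_cast; ring⟩
    have ho : Odd (a i) := Int.isCoprime_iff_gcd_eq_one.1 h2 |> fun h => by
      rw [← Int.not_even_iff_odd]
      intro he
      have : (2 : ℤ) ∣ 1 := by
        obtain ⟨u, v, huv⟩ := h2
        rw [← huv]
        exact dvd_add (Dvd.dvd.mul_left he.two_dvd _) (dvd_mul_left _ _)
      omega
    obtain ⟨k, hk⟩ := ho
    rw [hk]; push_cast
    linear_combination (k : ZMod α) * hnn
  have hunit : ∀ i, IsUnit ((a i : ℤ) : ZMod α) := by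
    intro i
    obtain ⟨u, v, huv⟩ := ha i
    have := congrArg (Int.cast : ℤ → ZMod α) huv
    push_cast at this
    rw [ZMod.natCast_self, mul_zero, add_zero] at this
    exact IsUnit.of_mul_eq_one _ (by rw [mul_comm]; exact this)
  let P : ZMod α → ℂ := fun t => ∏ i, ∑ y ∈ Finset.range (n + 1), (ψ (t * (a i : ℤ))) ^ y
  have hpow : ∀ (c : ZMod α) (y : ℕ), ψ c ^ y = ψ (c * y) := by
    intro c y
    rw [← AddChar.map_nsmul_eq_pow, nsmul_eq_mul, mul_comm]
  have hmain : ∑ t, P t = (α : ℂ) * δ := by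
    have h1 : ∀ t, P t = ∑ y ∈ Fintype.piFinset fun _ : Fin h => Finset.range (n + 1),
        ψ (t * ((∑ i, a i * (y i : ℤ) : ℤ) : ZMod α)) := by
      intro t
      simp only [P]
      rw [Finset.prod_univ_sum]
      apply Finset.sum_congr rfl
      intro y _
      push_cast
      rw [Finset.mul_sum, aux_sum]
      apply Finset.prod_congr rfl
      intro i _
      rw [hpow, mul_assoc]
    simp_rw [h1]
    rw [Finset.sum_comm]
    simp_rw [AddChar.sum_mulShift _ hprim, ZMod.card]
    rw [hδ, Finset.card_filter]
    push_cast
    rw [Finset.mul_sum]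
    apply Finset.sum_congr rfl
    intro y _
    have : ((∑ i, a i * (y i : ℤ) : ℤ) : ZMod α) = 0 ↔
        (∑ i, a i * (y i : ℤ)) ≡ 0 [ZMOD (α : ℤ)] := by
      rw [← ZMod.intCast_eq_intCast_iff, Int.cast_zero]
    push_cast at this
    simp only [this]
    split_ifs <;> simp
  have he : ∀ t : ZMod α, ψ (t * n) = 1 ∨ ψ (t * n) = -1 := by
    intro t
    have : ψ (t * n) * ψ (t * n) = 1 := by
      rw [← AddChar.map_add_eq_mul, ← mul_add, hnn, mul_zero, AddChar.map_zero_eq_one]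
    exact mul_self_eq_one_iff.1 this
  have hpt : ∀ (t : ZMod α) (i : Fin h), ψ (t * (a i : ℤ)) ^ n = ψ (t * n) := by
    intro t i
    rw [hpow, mul_assoc, hodd]
  have hP0 : P 0 = ((n : ℂ) + 1) ^ h := by
    simp [P]
  have hP : ∀ t : ZMod α, t ≠ 0 → P t + P (-t) = 1 + ψ (t * n) := by
    have hone : ∀ t : ZMod α, t ≠ 0 → ψ (t * n) = 1 → P t = 1 := by
      intro t ht h1
      apply Finset.prod_eq_one
      intro i _
      apply aux_S1
      · intro h2
        exact ht ((hunit i).mul_left_eq_zero.1 (hinj _ h2))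
      · rw [hpt, h1]
    intro t ht
    rcases he t with h1 | h1
    · have h2 : ψ (-t * n) = 1 := by
        rw [neg_mul, AddChar.map_neg_eq_inv, h1, inv_one]
      rw [hone t ht h1, hone (-t) (neg_ne_zero.2 ht) h2, h1]
    · have : P (-t) = - P t := by
        simp only [P]
        rw [Finset.prod_congr rfl (fun i _ => aux_S n (ψ (t * (a i : ℤ))) (ψ (-t * (a i : ℤ))) (by
          rw [← AddChar.map_add_eq_mul, neg_mul, add_neg_cancel, AddChar.map_zero_eq_one]) (by
          rw [hpt, h1]))]
        rw [Finset.prod_neg, Finset.card_univ, Fintype.card_fin, hho.neg_one_pow, neg_one_mul]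
      rw [this, h1]; ring
  have hsum : ∑ t, (P t + P (-t)) = 2 * ((α : ℂ) * δ) := by
    rw [Finset.sum_add_distrib, show ∑ t, P (-t) = ∑ t, P t from Equiv.sum_comp (Equiv.neg (ZMod α)) P, hmain]; ring
  have hE : ∑ t : ZMod α, (1 + ψ (t * n)) = α := by
    rw [Finset.sum_add_distrib, AddChar.sum_mulShift _ hprim, if_neg hnne]
    simp [ZMod.card]
  rw [← Finset.add_sum_erase _ _ (Finset.mem_univ (0 : ZMod α))] at hsum hE
  rw [Finset.sum_congr rfl (fun t ht => hP t (Finset.ne_of_mem_erase ht)), neg_zero, hP0] at hsum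
  rw [zero_mul, AddChar.map_zero_eq_one] at hE
  have hfin : 2 * (α : ℂ) * δ + 2 = 2 * ((n : ℂ) + 1) ^ h + α := by
    linear_combination hE - hsum
  have hfin' : 2 * α * δ + 2 = 2 * (n + 1) ^ h + α := by exact_mod_cast hfin
  have hpos : 1 ≤ (n + 1) ^ h := Nat.one_le_pow _ _ (by omega)
  omega
end

section
/- Let p be a prime. The number of quadruples (a, b, c, d) of integers satisfying 1 ≤ a ≤ p, 1 ≤ b ≤ p, 1 ≤ c ≤ min(a, b), 1 ≤ d ≤ min(a, b), and a + b ≤ c + d + p − 1 equals p(p+1)(p²+p+2)/8. -/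
open Finset in
theorem aux_lin (p : ℕ) (n : ℕ) (hn : n ≤ p) :
    ∑ c ∈ Icc 1 p, (n - c) = n.choose 2 := by
  have h1 : ∑ c ∈ Icc 1 p, (n - c) = ∑ c ∈ Icc 1 n, (n - c) := by
    symm
    apply sum_subset
    · intro x; simp only [mem_Icc]; omega
    · intro x; simp only [mem_Icc]; omega
  rw [h1]
  clear h1 hn
  induction n with
  | zero => simp
  | succ n ih =>
    rw [sum_Icc_succ_top (by omega)]
    have : ∑ c ∈ Icc 1 n, (n + 1 - c) = ∑ c ∈ Icc 1 n, ((n - c) + 1) := by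
      apply sum_congr rfl
      intro x; simp only [mem_Icc]; omega
    rw [this, sum_add_distrib, ih, Nat.choose_succ_succ' n 1]
    simp; omega

open Finset in
theorem aux_inner (p a b : ℕ) (ha : a ∈ Icc 1 p) (hb : b ∈ Icc 1 p) :
    (∑ c ∈ Icc 1 p, ∑ d ∈ Icc 1 p,
      if c ≤ min a b ∧ d ≤ min a b ∧ a + b ≤ c + d + p - 1 then 1 else 0)
      + (a + b - p).choose 2 = (min a b) ^ 2 := by
  simp only [mem_Icc] at ha hb
  rw [← aux_lin p (a + b - p) (by omega), ← sum_add_distrib]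
  have h : ∀ c ∈ Icc 1 p, ((∑ d ∈ Icc 1 p,
      if c ≤ min a b ∧ d ≤ min a b ∧ a + b ≤ c + d + p - 1 then 1 else 0) + (a + b - p - c))
      = if c ≤ min a b then min a b else 0 := by
    intro c hc
    simp only [mem_Icc] at hc
    rw [← card_filter]
    split_ifs with hcm
    · have : (Icc 1 p).filter (fun d => c ≤ min a b ∧ d ≤ min a b ∧ a + b ≤ c + d + p - 1)
        = Icc (a + b - p - c + 1) (min a b) := by
        ext d; simp only [mem_filter, mem_Icc]; omega
      rw [this, Nat.card_Icc]; omega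
    · rw [filter_false_of_mem (by intro d _; tauto)]
      simp; omega
  rw [sum_congr rfl h, ← sum_filter]
  have : (Icc 1 p).filter (fun c => c ≤ min a b) = Icc 1 (min a b) := by
    ext d; simp only [mem_filter, mem_Icc]; omega
  rw [this]; simp [sq]

open Finset in
theorem aux_ch (q a : ℕ) : ∑ b ∈ Icc 1 (a + q), (b - q).choose 2 = (a + 1).choose 3 := by
  induction a with
  | zero =>
    apply sum_eq_zero
    intro b hb
    simp only [mem_Icc] at hb
    rw [show b - q = 0 by omega]; rfl
  | succ a ih =>
    rw [show a + 1 + q = (a + q) + 1 by omega, sum_Icc_succ_top (by omega), ih,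
      show a + q + 1 - q = a + 1 by omega, Nat.choose_succ_succ' (a + 1) 2]
    exact add_comm _ _

open Finset in
theorem aux_ch2 (p : ℕ) :
    ∑ a ∈ Icc 1 p, ∑ b ∈ Icc 1 p, (a + b - p).choose 2 = (p + 2).choose 4 := by
  have h : ∀ a ∈ Icc 1 p, ∑ b ∈ Icc 1 p, (a + b - p).choose 2 = (a + 1).choose 3 := by
    intro a ha
    simp only [mem_Icc] at ha
    rw [← aux_ch (p - a) a, show a + (p - a) = p by omega]
    apply sum_congr rfl
    intro b _
    congr 1; omega
  rw [sum_congr rfl h]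
  clear h
  induction p with
  | zero => rfl
  | succ p ih =>
    rw [sum_Icc_succ_top (by omega), ih, Nat.choose_succ_succ' (p + 2) 3]
    ring

open Finset in
theorem aux_sq (p : ℕ) : 6 * ∑ i ∈ Icc 1 p, i ^ 2 = p * (p + 1) * (2 * p + 1) := by
  induction p with
  | zero => rfl
  | succ p ih => rw [sum_Icc_succ_top (by omega), mul_add, ih]; ring

open Finset in
theorem aux_min (p : ℕ) :
    6 * ∑ a ∈ Icc 1 p, ∑ b ∈ Icc 1 p, (min a b) ^ 2 = p * (p + 1) * (p ^ 2 + p + 1) := by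
  induction p with
  | zero => rfl
  | succ p ih =>
    rw [sum_Icc_succ_top (by omega), sum_Icc_succ_top (by omega)]
    have h : ∑ a ∈ Icc 1 p, ∑ b ∈ Icc 1 (p + 1), (min a b) ^ 2
        = ∑ a ∈ Icc 1 p, ((∑ b ∈ Icc 1 p, (min a b) ^ 2) + a ^ 2) := by
      apply sum_congr rfl
      intro a ha
      simp only [mem_Icc] at ha
      rw [sum_Icc_succ_top (by omega), min_eq_left (by omega : a ≤ p + 1)]
    have h2 : ∑ b ∈ Icc 1 p, (min (p + 1) b) ^ 2 = ∑ b ∈ Icc 1 p, b ^ 2 := by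
      apply sum_congr rfl
      intro a ha
      simp only [mem_Icc] at ha
      rw [min_eq_right (by omega)]
    rw [h, h2, sum_add_distrib, min_self]
    have := aux_sq p
    linarith

theorem aux_c4 (p : ℕ) : 24 * (p + 2).choose 4 + p * (p + 1) * (p + 2) = p ^ 2 * (p + 1) * (p + 2) := by
  have h2 : ∀ n : ℕ, 2 * (n + 1).choose 2 = (n + 1) * n := by
    intro n
    induction n with
    | zero => rfl
    | succ n ih => rw [Nat.choose_succ_succ' (n + 1) 1, mul_add, ih]; simp; ring
  have h3 : ∀ n : ℕ, 6 * (n + 2).choose 3 = (n + 2) * (n + 1) * n := by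
    intro n
    induction n with
    | zero => rfl
    | succ n ih =>
      rw [Nat.choose_succ_succ' (n + 2) 2, mul_add, ih]
      linarith [h2 (n + 1)]
  induction p with
  | zero => rfl
  | succ n ih =>
    rw [Nat.choose_succ_succ' (n + 2) 3]
    linarith [h3 n]

/-- Lemma A.1: the number of quadruples `(a, b, c, d)` with `1 ≤ a, b ≤ p`,
`1 ≤ c, d ≤ min(a, b)` and `a + b ≤ c + d + p − 1` equals `p(p+1)(p²+p+2)/8`. -/
theorem stmt_4 (p : ℕ) (hp : p.Prime) :
    ((Finset.Icc 1 p ×ˢ Finset.Icc 1 p ×ˢ Finset.Icc 1 p ×ˢ Finset.Icc 1 p).filter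
      (fun x : ℕ × ℕ × ℕ × ℕ =>
        x.2.2.1 ≤ min x.1 x.2.1 ∧ x.2.2.2 ≤ min x.1 x.2.1 ∧
        x.1 + x.2.1 ≤ x.2.2.1 + x.2.2.2 + p - 1)).card
    = p * (p + 1) * (p ^ 2 + p + 2) / 8 := by
  rw [Finset.card_filter]
  simp only [Finset.sum_product]
  have key : ∑ a ∈ Finset.Icc 1 p, ∑ b ∈ Finset.Icc 1 p,
      ((∑ c ∈ Finset.Icc 1 p, ∑ d ∈ Finset.Icc 1 p,
        if c ≤ min a b ∧ d ≤ min a b ∧ a + b ≤ c + d + p - 1 then 1 else 0)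
        + (a + b - p).choose 2)
      = ∑ a ∈ Finset.Icc 1 p, ∑ b ∈ Finset.Icc 1 p, (min a b) ^ 2 := by
    apply Finset.sum_congr rfl
    intro a ha
    apply Finset.sum_congr rfl
    intro b hb
    exact aux_inner p a b ha hb
  simp only [Finset.sum_add_distrib] at key
  rw [aux_ch2] at key
  have h1 := aux_min p
  rw [← key] at h1
  have h2 := aux_c4 p
  generalize (∑ a ∈ Finset.Icc 1 p, ∑ b ∈ Finset.Icc 1 p,
      ∑ c ∈ Finset.Icc 1 p, ∑ d ∈ Finset.Icc 1 p,
        if c ≤ min a b ∧ d ≤ min a b ∧ a + b ≤ c + d + p - 1 then 1 else 0) = S at h1 ⊢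
  generalize (p + 2).choose 4 = C at h1 h2
  have h3 : p * (p + 1) * (p ^ 2 + p + 2) = 8 * S := by linarith
  rw [h3, Nat.mul_div_cancel_left S (by norm_num)]
end

section
/- Let b, m, n be positive integers with b ≥ 2, and let L be the set of tuples (a_0, …, a_{m−1}, b_0, …, b_{n−1}) of integers with 0 ≤ a_r ≤ b−1 for every r ∈ {0, …, m−1} and 0 ≤ b_s ≤ min{ min(a_r, b−1−a_r) : r ∈ {0, …, m−1} } for every s ∈ {0, …, n−1}. If b is odd, then #L = 2^{−n}·((b+1)^n + Σ_{i=1}^{(b−1)/2} ((2i+1)^m − (2i−1)^m)(b−2i+1)^n). If b is even, then #L = 2^{m−n}·Σ_{i=1}^{b/2} (i^m − (i−1)^m)(b−2i+2)^n. -/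
lemma aux_card (b m n : ℕ) (hb : 2 ≤ b) (hm : 0 < m) :
    (((Fintype.piFinset fun _ : Fin m => Finset.range b) ×ˢ
        (Fintype.piFinset fun _ : Fin n => Finset.range b)).filter
        (fun x => ∀ s : Fin n, ∀ r : Fin m, x.2 s ≤ min (x.1 r) (b - 1 - x.1 r))).card
    = ∑ t ∈ Finset.range ((b + 1) / 2),
        ((b - 2 * t) ^ m - (b - 2 * (t + 1)) ^ m) * (t + 1) ^ n := by
  classical
  have hne : (Finset.univ : Finset (Fin m)).Nonempty := ⟨⟨0, hm⟩, Finset.mem_univ _⟩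
  let f : (Fin m → ℕ) → ℕ := fun a => Finset.univ.inf' hne (fun r => min (a r) (b - 1 - a r))
  have hf : ∀ a t, t ≤ f a ↔ ∀ r, t ≤ min (a r) (b - 1 - a r) := by
    intro a t
    simp only [f, Finset.le_inf'_iff, Finset.mem_univ, true_implies]
  let A : ℕ → Finset (Fin m → ℕ) := fun t => Fintype.piFinset fun _ => Finset.Ico t (b - t)
  have hA : ∀ t a, a ∈ A t ↔ (∀ r, a r < b) ∧ t ≤ f a := by
    intro t a
    rw [hf, ← forall_and]
    simp only [A, Fintype.mem_piFinset, Finset.mem_Ico]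
    refine forall_congr' fun r => ?_
    omega
  have hAc : ∀ t, (A t).card = (b - 2 * t) ^ m := by
    intro t
    simp only [A, Fintype.card_piFinset, Nat.card_Ico, Finset.prod_const, Finset.card_univ,
      Fintype.card_fin]
    congr 1
    omega
  have hsub : ∀ t, A (t + 1) ⊆ A t := by
    intro t a h
    rw [hA] at h ⊢
    exact ⟨h.1, by omega⟩
  rw [Finset.card_eq_sum_card_fiberwise (f := fun x => f x.1) (t := Finset.range ((b + 1) / 2))]
  · refine Finset.sum_congr rfl fun t ht => ?_
    rw [Finset.mem_range] at ht
    have hs : ((A t \ A (t + 1)) ×ˢ (Fintype.piFinset fun _ : Fin n => Finset.range (t + 1))).card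
        = ((b - 2 * t) ^ m - (b - 2 * (t + 1)) ^ m) * (t + 1) ^ n := by
      rw [Finset.card_product, Finset.card_sdiff_of_subset (hsub t), hAc, hAc]
      simp
    rw [← hs]
    congr 1
    ext ⟨x, y⟩
    simp only [Finset.mem_filter, Finset.mem_product, Finset.mem_sdiff, hA, ← hf,
      Fintype.mem_piFinset, Finset.mem_range]
    constructor
    · rintro ⟨⟨⟨h1, h2⟩, h3⟩, h4⟩
      refine ⟨⟨⟨h1, by omega⟩, fun h => by omega⟩, fun s => ?_⟩
      have := h3 s
      omega
    · rintro ⟨⟨⟨h1, h2⟩, h3⟩, h4⟩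
      have h5 : f x = t := by
        by_contra hne
        exact h3 ⟨h1, by omega⟩
      refine ⟨⟨⟨h1, fun s => ?_⟩, fun s => ?_⟩, h5⟩
      · have := h4 s
        omega
      · have := h4 s
        omega
  · intro x hx
    simp only [Finset.coe_filter, Finset.mem_product, Fintype.mem_piFinset, Finset.mem_range,
      Set.mem_ofPred_eq] at hx
    simp only [Finset.coe_range, Set.mem_Iio]
    have h1 := (hf x.1 _).1 le_rfl ⟨0, hm⟩
    have h2 := hx.1.1 ⟨0, hm⟩
    omega

/-- Lemma A.3: cardinality of the set of tuples `(a₀, …, a_{m−1}, b₀, …, b_{n−1})` with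
`0 ≤ a_r ≤ b−1` and `0 ≤ b_s ≤ min_r min(a_r, b−1−a_r)`, for `b` odd and for `b` even.
The rational identities are stated with denominators cleared (multiplying by `2^n`). -/
theorem stmt_6 (b m n : ℕ) (hb : 2 ≤ b) (hm : 0 < m) (hn : 0 < n) :
    (Odd b →
      2 ^ n * (((Fintype.piFinset fun _ : Fin m => Finset.range b) ×ˢ
        (Fintype.piFinset fun _ : Fin n => Finset.range b)).filter
        (fun x => ∀ s : Fin n, ∀ r : Fin m, x.2 s ≤ min (x.1 r) (b - 1 - x.1 r))).card
      = (b + 1) ^ n + ∑ i ∈ Finset.Icc 1 ((b - 1) / 2),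
          ((2 * i + 1) ^ m - (2 * i - 1) ^ m) * (b - 2 * i + 1) ^ n) ∧
    (Even b →
      2 ^ n * (((Fintype.piFinset fun _ : Fin m => Finset.range b) ×ˢ
        (Fintype.piFinset fun _ : Fin n => Finset.range b)).filter
        (fun x => ∀ s : Fin n, ∀ r : Fin m, x.2 s ≤ min (x.1 r) (b - 1 - x.1 r))).card
      = 2 ^ m * ∑ i ∈ Finset.Icc 1 (b / 2),
          (i ^ m - (i - 1) ^ m) * (b - 2 * i + 2) ^ n) := by
  rw [aux_card b m n hb hm]
  constructor
  · rintro ⟨k, rfl⟩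
    rw [show (2 * k + 1 + 1) / 2 = k + 1 by omega, show (2 * k + 1 - 1) / 2 = k by omega,
      Finset.sum_range_succ, mul_add, add_comm]
    congr 1
    · rw [show 2 * k + 1 - 2 * k = 1 by omega, show 2 * k + 1 - 2 * (k + 1) = 0 by omega,
        zero_pow hm.ne', one_pow, Nat.sub_zero, one_mul, ← mul_pow]
      congr 1
    · rw [Finset.mul_sum]
      refine Finset.sum_bij' (fun t _ => k - t) (fun i _ => k - i) ?_ ?_ ?_ ?_ ?_
      · intro t ht; simp only [Finset.mem_range, Finset.mem_Icc] at *; omega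
      · intro t ht; simp only [Finset.mem_range, Finset.mem_Icc] at *; omega
      · intro t ht; simp only [Finset.mem_range, Finset.mem_Icc] at *; omega
      · intro t ht; simp only [Finset.mem_range, Finset.mem_Icc] at *; omega
      · intro t ht
        simp only [Finset.mem_range] at ht
        rw [show 2 * k + 1 - 2 * t = 2 * (k - t) + 1 by omega,
          show 2 * k + 1 - 2 * (t + 1) = 2 * (k - t) - 1 by omega,
          show 2 * k + 1 - 2 * (k - t) + 1 = 2 * (t + 1) by omega, mul_pow]
        ring
  · rintro ⟨k, rfl⟩
    rw [show (k + k + 1) / 2 = k by omega, show (k + k) / 2 = k by omega,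
      Finset.mul_sum, Finset.mul_sum]
    refine Finset.sum_bij' (fun t _ => k - t) (fun i _ => k - i) ?_ ?_ ?_ ?_ ?_
    · intro t ht; simp only [Finset.mem_range, Finset.mem_Icc] at *; omega
    · intro t ht; simp only [Finset.mem_range, Finset.mem_Icc] at *; omega
    · intro t ht; simp only [Finset.mem_range, Finset.mem_Icc] at *; omega
    · intro t ht; simp only [Finset.mem_range, Finset.mem_Icc] at *; omega
    · intro t ht
      simp only [Finset.mem_range] at ht
      rw [show k + k - 2 * t = 2 * (k - t) by omega,
        show k + k - 2 * (t + 1) = 2 * (k - t - 1) by omega,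
        show k + k - 2 * (k - t) + 2 = 2 * (t + 1) by omega, mul_pow, mul_pow, mul_pow,
        ← Nat.mul_sub]
      ring
end

section
/- Let b, m, n be positive integers. The number of tuples (a_0, …, a_{m−1}, b_0, …, b_{2n−1}) of integers with 0 ≤ a_r ≤ b−1 for every r ∈ {0, …, m−1}, 0 ≤ b_s ≤ min{a_0, …, a_{m−1}} for every s ∈ {0, …, n−1}, and 0 ≤ b_s ≤ min{b−1−a_0, …, b−1−a_{m−1}} for every s ∈ {n, …, 2n−1}, equals Σ_{i=0}^{b−1} ((b−i)(i+1))^n + Σ_{1 ≤ j ≤ i ≤ b−1} ((j+1)^m − 2j^m + (j−1)^m)((b−i)(i−j+1))^n. -/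
open Finset in
/-- tuples with minimum exactly `u` and maximum exactly `v` -/
theorem card_minmax (b m u v : ℕ) (hm : 0 < m) (hne : (univ : Finset (Fin m)).Nonempty)
    (hv : v < b) (huv : u < v) :
    ((((Fintype.piFinset fun _ : Fin m => range b)).filter
      (fun a => univ.sup' hne a = v ∧ univ.inf' hne a = u)).card : ℤ)
    = (((v : ℤ) - u) + 1) ^ m - 2 * ((v : ℤ) - u) ^ m + (((v : ℤ) - u) - 1) ^ m := by
  have hset : ((Fintype.piFinset fun _ : Fin m => range b)).filter
      (fun a => univ.sup' hne a = v ∧ univ.inf' hne a = u)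
      = (Fintype.piFinset fun _ : Fin m => Icc u v) \
        ((Fintype.piFinset fun _ : Fin m => Ioc u v) ∪
          (Fintype.piFinset fun _ : Fin m => Ico u v)) := by
    ext a
    simp only [mem_filter, Fintype.mem_piFinset, mem_range, mem_sdiff, mem_union, mem_Icc,
      mem_Ioc, mem_Ico]
    constructor
    · rintro ⟨h, h1, h2⟩
      have hA : ∀ r, u ≤ a r ∧ a r ≤ v := fun r =>
        ⟨h2 ▸ inf'_le a (mem_univ r), h1 ▸ le_sup' a (mem_univ r)⟩
      obtain ⟨r1, -, hr1⟩ := exists_mem_eq_sup' hne a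
      obtain ⟨r2, -, hr2⟩ := exists_mem_eq_inf' hne a
      refine ⟨hA, ?_⟩
      rintro (h3 | h3)
      · have := h3 r2
        omega
      · have := h3 r1
        omega
    · rintro ⟨hA, hB⟩
      push Not at hB
      obtain ⟨⟨r2, hr2⟩, ⟨r1, hr1⟩⟩ := hB
      have e1 := hA r1
      have e2 := hA r2
      refine ⟨fun r => lt_of_le_of_lt (hA r).2 hv, ?_, ?_⟩
      · apply le_antisymm
        · exact sup'_le _ _ fun r _ => (hA r).2
        · exact (hr1 e1.1).trans (le_sup' a (mem_univ r1))
      · apply le_antisymm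
        · refine (inf'_le a (mem_univ r2)).trans ?_
          by_contra h
          have := hr2 (by omega)
          omega
        · exact le_inf' _ _ fun r _ => (hA r).1
  have hint : (Fintype.piFinset fun _ : Fin m => Ioc u v) ∩
      (Fintype.piFinset fun _ : Fin m => Ico u v) = Fintype.piFinset fun _ : Fin m => Ioo u v := by
    ext a
    simp only [mem_inter, Fintype.mem_piFinset, mem_Ioc, mem_Ico, mem_Ioo]
    constructor
    · rintro ⟨h1, h2⟩ r
      exact ⟨(h1 r).1, (h2 r).2⟩
    · intro h
      exact ⟨fun r => ⟨(h r).1, (h r).2.le⟩, fun r => ⟨(h r).1.le, (h r).2⟩⟩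
  have hsub : ((Fintype.piFinset fun _ : Fin m => Ioc u v) ∪
          (Fintype.piFinset fun _ : Fin m => Ico u v)) ⊆
          (Fintype.piFinset fun _ : Fin m => Icc u v) :=
    union_subset (Fintype.piFinset_subset _ _ fun _ => Ioc_subset_Icc_self)
      (Fintype.piFinset_subset _ _ fun _ => Ico_subset_Icc_self)
  have h1 := card_sdiff_add_card_eq_card hsub
  have h2 := card_union_add_card_inter (Fintype.piFinset fun _ : Fin m => Ioc u v)
    (Fintype.piFinset fun _ : Fin m => Ico u v)
  rw [hint] at h2
  rw [hset]
  obtain ⟨k, rfl⟩ := Nat.exists_eq_add_of_lt huv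
  have c1 : (Fintype.piFinset fun _ : Fin m => Icc u (u + k + 1)).card = (k + 2) ^ m := by
    simp [Fintype.card_piFinset]
    congr 1; omega
  have c2 : (Fintype.piFinset fun _ : Fin m => Ioc u (u + k + 1)).card = (k + 1) ^ m := by
    simp [Fintype.card_piFinset]
    congr 1; omega
  have c3 : (Fintype.piFinset fun _ : Fin m => Ico u (u + k + 1)).card = (k + 1) ^ m := by
    simp [Fintype.card_piFinset]
    congr 1; omega
  have c4 : (Fintype.piFinset fun _ : Fin m => Ioo u (u + k + 1)).card = k ^ m := by
    simp [Fintype.card_piFinset]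
    congr 1; omega
  rw [c1] at h1
  rw [c2, c3, c4] at h2
  have e1 : ((u + k + 1 : ℕ) : ℤ) - u + 1 = (k + 2 : ℤ) := by push_cast; ring
  have e2 : ((u + k + 1 : ℕ) : ℤ) - u = (k + 1 : ℤ) := by push_cast; ring
  have e3 : ((u + k + 1 : ℕ) : ℤ) - u - 1 = (k : ℤ) := by push_cast; ring
  rw [e1, e3, e2]
  zify at h1 h2
  linarith

open Finset in
theorem card_minmax_diag (b m v : ℕ) (hm : 0 < m) (hne : (univ : Finset (Fin m)).Nonempty)
    (hv : v < b) :
    (((Fintype.piFinset fun _ : Fin m => range b)).filter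
      (fun a => univ.sup' hne a = v ∧ univ.inf' hne a = v)).card = 1 := by
  rw [card_eq_one]
  refine ⟨fun _ => v, ?_⟩
  ext a
  simp only [mem_filter, Fintype.mem_piFinset, mem_range, mem_singleton]
  constructor
  · rintro ⟨h, h1, h2⟩
    funext r
    exact le_antisymm (h1 ▸ le_sup' a (mem_univ r)) (h2 ▸ inf'_le a (mem_univ r))
  · rintro rfl
    exact ⟨fun _ => hv, by simp, by simp⟩

open Finset in
theorem card_fiber (b m n : ℕ) (hne : (univ : Finset (Fin m)).Nonempty) (a : Fin m → ℕ)
    (ha : ∀ r, a r < b) :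
    ((Fintype.piFinset fun _ : Fin (2 * n) => range b).filter
      (fun y => ∀ s : Fin (2 * n), ∀ r : Fin m,
        ((s : ℕ) < n → y s ≤ a r) ∧ (n ≤ (s : ℕ) → y s ≤ b - 1 - a r))).card
    = ((b - univ.sup' hne a) * (univ.inf' hne a + 1)) ^ n := by
  have hset : (Fintype.piFinset fun _ : Fin (2 * n) => range b).filter
      (fun y => ∀ s : Fin (2 * n), ∀ r : Fin m,
        ((s : ℕ) < n → y s ≤ a r) ∧ (n ≤ (s : ℕ) → y s ≤ b - 1 - a r))
      = Fintype.piFinset fun s : Fin (2 * n) =>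
        range (if (s : ℕ) < n then univ.inf' hne a + 1 else b - univ.sup' hne a) := by
    obtain ⟨r1, -, hr1⟩ := exists_mem_eq_sup' hne a
    obtain ⟨r2, -, hr2⟩ := exists_mem_eq_inf' hne a
    ext y
    simp only [mem_filter, Fintype.mem_piFinset, mem_range]
    constructor
    · rintro ⟨h, h1⟩ s
      split_ifs with hs
      · have := (h1 s r2).1 hs
        omega
      · have := (h1 s r1).2 (by omega)
        have := ha r1
        omega
    · intro h
      refine ⟨fun s => ?_, fun s r => ⟨fun hs => ?_, fun hs => ?_⟩⟩
      · have h5 := h s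
        have := ha r2
        split_ifs at h5 <;> omega
      · have := h s
        have h3 := inf'_le a (mem_univ r)
        rw [if_pos hs] at this
        omega
      · have := h s
        have h3 := le_sup' a (mem_univ r)
        rw [if_neg (by omega)] at this
        omega
  rw [hset, Fintype.card_piFinset]
  simp only [card_range]
  rw [Fin.prod_univ_eq_prod_range
    (fun s => if s < n then univ.inf' hne a + 1 else b - univ.sup' hne a) (2 * n), two_mul,
    prod_range_add, mul_pow, mul_comm]
  congr 1
  · simp
  · rw [prod_congr rfl (g := fun _ => univ.inf' hne a + 1)]
    · simp
    · intro x hx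
      simp [mem_range.1 hx]

open Finset in
theorem stmt_7_aux (b m n : ℕ) (hb : 0 < b) (hm : 0 < m) (hn : 0 < n) :
    ((((Fintype.piFinset fun _ : Fin m => Finset.range b) ×ˢ
      (Fintype.piFinset fun _ : Fin (2 * n) => Finset.range b)).filter
      (fun x => ∀ s : Fin (2 * n), ∀ r : Fin m,
        ((s : ℕ) < n → x.2 s ≤ x.1 r) ∧ (n ≤ (s : ℕ) → x.2 s ≤ b - 1 - x.1 r))).card : ℤ)
    = ∑ i ∈ Finset.range b, (((b : ℤ) - (i : ℤ)) * ((i : ℤ) + 1)) ^ n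
      + ∑ i ∈ Finset.Icc 1 (b - 1), ∑ j ∈ Finset.Icc 1 i,
          (((j : ℤ) + 1) ^ m - 2 * (j : ℤ) ^ m + ((j : ℤ) - 1) ^ m)
            * (((b : ℤ) - (i : ℤ)) * ((i : ℤ) - (j : ℤ) + 1)) ^ n := by
  have hne : (univ : Finset (Fin m)).Nonempty := ⟨⟨0, hm⟩, mem_univ _⟩
  rw [card_filter, sum_product]
  simp_rw [← card_filter]
  rw [sum_congr rfl (fun a ha => card_fiber b m n hne a
    (fun r => mem_range.1 (Fintype.mem_piFinset.1 ha r)))]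
  have key : ∀ i ∈ range b, ∑ a ∈ (Fintype.piFinset fun _ : Fin m => range b) with
        univ.sup' hne a = i, ((((b - univ.sup' hne a) * (univ.inf' hne a + 1)) ^ n : ℕ) : ℤ)
      = (((b : ℤ) - (i : ℤ)) * ((i : ℤ) + 1)) ^ n + ∑ j ∈ Icc 1 i,
          (((j : ℤ) + 1) ^ m - 2 * (j : ℤ) ^ m + ((j : ℤ) - 1) ^ m)
            * (((b : ℤ) - (i : ℤ)) * ((i : ℤ) - (j : ℤ) + 1)) ^ n := by
    intro i hi
    have hib := mem_range.1 hi
    rw [← sum_fiberwise_of_maps_to (t := range (i + 1)) (g := fun a => univ.inf' hne a)]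
    · have h1 : ∀ u ∈ range (i + 1),
          ∑ a ∈ ((Fintype.piFinset fun _ : Fin m => range b).filter
            (fun a => univ.sup' hne a = i)) with univ.inf' hne a = u,
            ((((b - univ.sup' hne a) * (univ.inf' hne a + 1)) ^ n : ℕ) : ℤ)
          = ((((Fintype.piFinset fun _ : Fin m => range b)).filter
      (fun a => univ.sup' hne a = i ∧ univ.inf' hne a = u)).card : ℤ) *
            (((b : ℤ) - (i : ℤ)) * ((u : ℤ) + 1)) ^ n := by
        intro u hu
        rw [filter_filter, ← nsmul_eq_mul]
        apply sum_eq_card_nsmul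
        intro a ha
        obtain ⟨-, h2, h3⟩ := mem_filter.1 ha
        rw [h2, h3]
        push_cast [Nat.cast_sub hib.le]
        rfl
      rw [sum_congr rfl h1, sum_range_succ, card_minmax_diag b m i hm hne hib, Nat.cast_one,
        one_mul, add_comm]
      congr 1
      refine sum_bij' (fun u _ => i - u) (fun j _ => i - j) ?_ ?_ ?_ ?_ ?_
      · intro u hu; simp at hu ⊢; omega
      · intro u hu; simp at hu ⊢; omega
      · intro u hu; simp at hu ⊢; omega
      · intro u hu; simp at hu ⊢; omega
      · intro u hu
        have hu' := mem_range.1 hu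
        rw [card_minmax b m u i hm hne hib hu', Nat.cast_sub hu'.le]
        congr 3
        ring
    · intro a ha
      obtain ⟨-, h2⟩ := mem_filter.1 ha
      have h3 := le_sup' a (mem_univ ⟨0, hm⟩)
      have h4 := inf'_le a (mem_univ (⟨0, hm⟩ : Fin m))
      rw [mem_range]
      omega
  rw [Nat.cast_sum, ← sum_fiberwise_of_maps_to (t := range b) (g := fun a => univ.sup' hne a),
    sum_congr rfl key, sum_add_distrib]
  · congr 1
    symm
    apply sum_subset
    · intro i hi; simp at hi ⊢; omega
    · intro i hi h
      have : i = 0 := by simp at hi h; omega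
      subst this
      simp
  · intro a ha
    obtain ⟨r1, -, hr1⟩ := exists_mem_eq_sup' hne a
    rw [hr1]
    exact Fintype.mem_piFinset.1 ha r1

/-- Lemma A.4: the number of tuples `(a₀, …, a_{m−1}, b₀, …, b_{2n−1})` with
`0 ≤ a_r ≤ b−1`, `0 ≤ b_s ≤ min_r a_r` for `s ≤ n−1` and `0 ≤ b_s ≤ min_r (b−1−a_r)`
for `n ≤ s ≤ 2n−1`, equals
`Σ_{i=0}^{b−1} ((b−i)(i+1))^n + Σ_{1≤j≤i≤b−1} ((j+1)^m − 2j^m + (j−1)^m)((b−i)(i−j+1))^n`. -/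
theorem stmt_7 (b m n : ℕ) (hb : 0 < b) (hm : 0 < m) (hn : 0 < n) :
    ((((Fintype.piFinset fun _ : Fin m => Finset.range b) ×ˢ
      (Fintype.piFinset fun _ : Fin (2 * n) => Finset.range b)).filter
      (fun x => ∀ s : Fin (2 * n), ∀ r : Fin m,
        ((s : ℕ) < n → x.2 s ≤ x.1 r) ∧ (n ≤ (s : ℕ) → x.2 s ≤ b - 1 - x.1 r))).card : ℤ)
    = ∑ i ∈ Finset.range b, (((b : ℤ) - (i : ℤ)) * ((i : ℤ) + 1)) ^ n
      + ∑ i ∈ Finset.Icc 1 (b - 1), ∑ j ∈ Finset.Icc 1 i,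
          (((j : ℤ) + 1) ^ m - 2 * (j : ℤ) ^ m + ((j : ℤ) - 1) ^ m)
            * (((b : ℤ) - (i : ℤ)) * ((i : ℤ) - (j : ℤ) + 1)) ^ n := by
  exact stmt_7_aux b m n hb hm hn
end

section
/- Let p be a prime and h a positive integer. Then the number of pairs (i, j) of natural numbers with 0 ≤ i ≤ j ≤ p^h − 1 and C(j, i) ≢ 0 (mod p) equals (p(p+1)/2)^h. -/
theorem dvd_choose_digit (p a b : ℕ) (hp : p.Prime) (hb : b < p) :
    ¬ p ∣ Nat.choose b a ↔ a ≤ b := by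
  constructor
  · intro h
    by_contra hab
    exact h (by rw [Nat.choose_eq_zero_of_lt (by omega)]; exact dvd_zero p)
  · intro hab h
    have h1 : p ∣ b.factorial := by
      rw [← Nat.choose_mul_factorial_mul_factorial hab, mul_assoc]
      exact h.mul_right _
    have := (hp.dvd_factorial).1 h1
    omega

theorem good_iff (p i j : ℕ) (hp : p.Prime) :
    (i ≤ j ∧ ¬ p ∣ Nat.choose j i) ↔
      ((i / p ≤ j / p ∧ ¬ p ∣ Nat.choose (j / p) (i / p)) ∧ i % p ≤ j % p) := by
  have key : ∀ a b : ℕ, (a ≤ b ∧ ¬ p ∣ Nat.choose b a) ↔ ¬ p ∣ Nat.choose b a := by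
    intro a b
    refine ⟨fun h => h.2, fun h => ⟨?_, h⟩⟩
    by_contra hab
    exact h (by rw [Nat.choose_eq_zero_of_lt (by omega)]; exact dvd_zero p)
  haveI := Fact.mk hp
  rw [key, key, ← dvd_choose_digit p (i % p) (j % p) hp (Nat.mod_lt _ hp.pos),
    (Choose.choose_modEq_choose_mod_mul_choose_div_nat (n := j) (k := i) (p := p)).dvd_iff
      (dvd_refl p), hp.dvd_mul]
  tauto

theorem card_digits (p : ℕ) :
    ((Finset.range p ×ˢ Finset.range p).filter
      (fun ij : ℕ × ℕ => ij.1 ≤ ij.2)).card = p * (p + 1) / 2 := by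
  have : ((Finset.range p ×ˢ Finset.range p).filter
      (fun ij : ℕ × ℕ => ij.1 ≤ ij.2)).card = ∑ j ∈ Finset.range p, (j + 1) := by
    rw [Finset.card_filter, Finset.sum_product_right]
    refine Finset.sum_congr rfl fun j hj => ?_
    rw [← Finset.card_filter]
    rw [show (Finset.range p).filter (fun i => i ≤ j) = Finset.range (j + 1) by
      ext i
      simp only [Finset.mem_filter, Finset.mem_range] at *
      omega]
    simp
  rw [this]
  have h := Finset.sum_range_succ' (fun i => i) p
  simp only [add_zero] at h
  rw [← h, Finset.sum_range_id, Nat.add_sub_cancel, mul_comm]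

/-- The number of pairs `(i, j)` with `0 ≤ i ≤ j ≤ p^h − 1` and `p ∤ C(j, i)`
equals `(p(p+1)/2)^h`. -/
theorem stmt_8 (p h : ℕ) (hp : p.Prime) (hh : 0 < h) :
    ((Finset.range (p ^ h) ×ˢ Finset.range (p ^ h)).filter
      (fun ij : ℕ × ℕ => ij.1 ≤ ij.2 ∧ ¬ p ∣ Nat.choose ij.2 ij.1)).card
    = (p * (p + 1) / 2) ^ h := by
  clear hh
  induction h with
  | zero =>
    simp [Finset.filter_singleton, hp.one_lt.ne']
  | succ h ih =>
    rw [pow_succ (p * (p + 1) / 2), ← ih, ← card_digits, ← Finset.card_product]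
    have hpos := hp.pos
    have hlt : ∀ a r : ℕ, a < p ^ h → r < p → p * a + r < p ^ (h + 1) := by
      intro a r ha hr
      calc p * a + r < p * (a + 1) := by rw [mul_add]; omega
        _ ≤ p * p ^ h := Nat.mul_le_mul_left _ ha
        _ = p ^ (h + 1) := by ring
    have hdiv : ∀ a r : ℕ, r < p → (p * a + r) / p = a := by
      intro a r hr
      rw [Nat.mul_add_div hpos, Nat.div_eq_of_lt hr, add_zero]
    have hmod : ∀ a r : ℕ, r < p → (p * a + r) % p = r := by
      intro a r hr
      rw [Nat.mul_add_mod, Nat.mod_eq_of_lt hr]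
    refine Finset.card_nbij' (fun x => ((x.1 / p, x.2 / p), (x.1 % p, x.2 % p)))
      (fun y => (p * y.1.1 + y.2.1, p * y.1.2 + y.2.2)) ?_ ?_ ?_ ?_
    · rintro ⟨i, j⟩ hx
      simp only [Finset.coe_filter, Finset.mem_product, Finset.mem_range, Set.mem_setOf_eq,
        Finset.mem_coe, Finset.mem_filter] at hx ⊢
      obtain ⟨⟨hi, hj⟩, hg⟩ := hx
      have hg' := (good_iff p i j hp).1 hg
      rw [pow_succ] at hi hj
      exact ⟨⟨⟨Nat.div_lt_of_lt_mul (by rwa [mul_comm]), Nat.div_lt_of_lt_mul (by rwa [mul_comm])⟩,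
        hg'.1⟩, ⟨Nat.mod_lt _ hpos, Nat.mod_lt _ hpos⟩, hg'.2⟩
    · rintro ⟨⟨a, b⟩, ⟨r, s⟩⟩ hx
      simp only [Finset.coe_filter, Finset.mem_product, Finset.mem_range, Set.mem_setOf_eq,
        Finset.mem_coe, Finset.mem_filter] at hx ⊢
      obtain ⟨⟨⟨ha, hb⟩, hg⟩, ⟨hr, hs⟩, hrs⟩ := hx
      refine ⟨⟨hlt a r ha hr, hlt b s hb hs⟩, (good_iff p _ _ hp).2 ?_⟩
      rw [hdiv a r hr, hdiv b s hs, hmod a r hr, hmod b s hs]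
      exact ⟨hg, hrs⟩
    · rintro ⟨i, j⟩ -
      simp only [Nat.div_add_mod]
    · rintro ⟨⟨a, b⟩, ⟨r, s⟩⟩ hx
      simp only [Finset.mem_product, Finset.mem_range,
        Finset.mem_coe, Finset.mem_filter] at hx
      obtain ⟨⟨⟨ha, hb⟩, hg⟩, ⟨hr, hs⟩, hrs⟩ := hx
      simp only [hdiv a r hr, hdiv b s hs, hmod a r hr, hmod b s hs]
end

section
/- Let p be an odd prime and h a positive integer. Then the number of pairs (i, j) of natural numbers with 0 ≤ i ≤ j ≤ p^h − 1, C(j, i) ≢ 0 (mod p), and both i and j even, equals (p+1)^h (p^h + 3)/2^{h+2}. -/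
def wS (p h : ℕ) (a b : ℤ) : ℤ :=
  ∑ j ∈ Finset.range (p ^ h), ∑ i ∈ Finset.range (p ^ h),
    if p ∣ Nat.choose j i then 0 else a ^ i * b ^ j

theorem sum_digits (p n : ℕ) (f : ℕ → ℤ) :
    ∑ i ∈ Finset.range (p * n), f i
      = ∑ y ∈ Finset.range n, ∑ x ∈ Finset.range p, f (x + p * y) := by
  induction n with
  | zero => simp
  | succ n ih =>
    rw [Nat.mul_succ, Finset.sum_range_add, ih, Finset.sum_range_succ]
    congr 1
    exact Finset.sum_congr rfl fun x _ => by rw [add_comm]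

theorem dvd_choose_digits (p : ℕ) (hp : p.Prime) (i0 j0 i1 j1 : ℕ) (hi : i0 < p) (hj : j0 < p) :
    p ∣ Nat.choose (j0 + p * j1) (i0 + p * i1) ↔ p ∣ Nat.choose j0 i0 ∨ p ∣ Nat.choose j1 i1 := by
  haveI := Fact.mk hp
  have h := Choose.choose_modEq_choose_mod_mul_choose_div_nat (p := p)
    (n := j0 + p * j1) (k := i0 + p * i1)
  rw [Nat.add_mul_mod_self_left, Nat.add_mul_mod_self_left, Nat.add_mul_div_left _ _ hp.pos,
    Nat.add_mul_div_left _ _ hp.pos, Nat.mod_eq_of_lt hi, Nat.mod_eq_of_lt hj,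
    Nat.div_eq_of_lt hi, Nat.div_eq_of_lt hj, zero_add, zero_add] at h
  rw [h.dvd_iff dvd_rfl, hp.dvd_mul]

theorem wS_succ (p h : ℕ) (hp : p.Prime) (a b : ℤ) (ha : a ^ p = a) (hb : b ^ p = b) :
    wS p (h + 1) a b = wS p 1 a b * wS p h a b := by
  rw [mul_comm (wS p 1 a b)]
  unfold wS
  rw [pow_succ' p h, pow_one, sum_digits, Finset.sum_mul_sum]
  refine Finset.sum_congr rfl fun j1 _ => Finset.sum_congr rfl fun j0 hj => ?_
  rw [sum_digits, Finset.sum_mul_sum]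
  refine Finset.sum_congr rfl fun i1 _ => Finset.sum_congr rfl fun i0 hi => ?_
  rw [Finset.mem_range] at hi hj
  simp only [dvd_choose_digits p hp i0 j0 i1 j1 hi hj, pow_add, pow_mul, ha, hb]
  by_cases h1 : p ∣ Nat.choose j0 i0 <;> by_cases h2 : p ∣ Nat.choose j1 i1 <;> simp [h1, h2]
  ring

theorem wS_pow (p h : ℕ) (hp : p.Prime) (a b : ℤ) (ha : a ^ p = a) (hb : b ^ p = b) :
    wS p h a b = (wS p 1 a b) ^ h := by
  induction h with
  | zero => simp [wS, hp.one_lt.ne']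
  | succ h ih => rw [wS_succ p h hp a b ha hb, ih, pow_succ']

theorem wS_one (p : ℕ) (hp : p.Prime) (a b : ℤ) :
    wS p 1 a b = ∑ j ∈ Finset.range p, b ^ j * ∑ i ∈ Finset.range (j + 1), a ^ i := by
  unfold wS
  rw [pow_one]
  refine Finset.sum_congr rfl fun j hj => ?_
  rw [Finset.mem_range] at hj
  rw [Finset.mul_sum]
  symm
  rw [← Finset.sum_subset (s₁ := Finset.range (j + 1)) (s₂ := Finset.range p)]
  · refine Finset.sum_congr rfl fun i hi => ?_
    rw [Finset.mem_range] at hi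
    have : ¬ p ∣ Nat.choose j i := by
      intro h
      have h2 : p ∣ j.factorial := by
        rw [← Nat.choose_mul_factorial_mul_factorial (show i ≤ j by omega), mul_assoc]
        exact h.mul_right _
      have := (hp.dvd_factorial).1 h2
      omega
    rw [if_neg this, mul_comm]
  · intro x hx
    rw [Finset.mem_range] at *
    omega
  · intro x _ hx
    rw [Finset.mem_range] at hx
    simp [Nat.choose_eq_zero_of_lt (show j < x by omega)]

theorem geo_neg (m : ℕ) : ∑ i ∈ Finset.range (2 * m), (-1 : ℤ) ^ i = 0 := by
  induction m with
  | zero => simp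
  | succ m ih => rw [Nat.mul_succ, Finset.sum_range_succ, Finset.sum_range_succ, ih]; simp [pow_succ]

theorem base_vals (m : ℕ) :
    (∑ j ∈ Finset.range (2 * m + 1), (1 : ℤ) ^ j * ∑ i ∈ Finset.range (j + 1), (1 : ℤ) ^ i
      = (2 * m + 1) * (m + 1)) ∧
    (∑ j ∈ Finset.range (2 * m + 1), (1 : ℤ) ^ j * ∑ i ∈ Finset.range (j + 1), (-1 : ℤ) ^ i
      = (m + 1)) ∧
    (∑ j ∈ Finset.range (2 * m + 1), (-1 : ℤ) ^ j * ∑ i ∈ Finset.range (j + 1), (1 : ℤ) ^ i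
      = (m + 1)) ∧
    (∑ j ∈ Finset.range (2 * m + 1), (-1 : ℤ) ^ j * ∑ i ∈ Finset.range (j + 1), (-1 : ℤ) ^ i
      = (m + 1)) := by
  induction m with
  | zero => simp
  | succ m ih =>
    obtain ⟨h1, h2, h3, h4⟩ := ih
    have e : 2 * (m + 1) + 1 = 2 * m + 1 + 1 + 1 := by ring
    have g1 : ∑ i ∈ Finset.range (2 * m + 1 + 1), (-1 : ℤ) ^ i = 0 := geo_neg (m + 1)
    have g2 : ∑ i ∈ Finset.range (2 * m + 1 + 1 + 1), (-1 : ℤ) ^ i = 1 := by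
      rw [Finset.sum_range_succ, g1]; simp [pow_succ]
    rw [e]
    refine ⟨?_, ?_, ?_, ?_⟩
    · rw [Finset.sum_range_succ, Finset.sum_range_succ, h1]; simp; ring
    · rw [Finset.sum_range_succ, Finset.sum_range_succ, h2, g1, g2]; simp
    · rw [Finset.sum_range_succ, Finset.sum_range_succ, h3]; simp [pow_succ]; ring
    · rw [Finset.sum_range_succ, Finset.sum_range_succ, h4, g1, g2]; simp [pow_succ]

/-- For `p` odd, the number of pairs `(i, j)` with `0 ≤ i ≤ j ≤ p^h − 1`, `p ∤ C(j, i)`,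
and `i`, `j` both even, equals `(p+1)^h (p^h + 3)/2^(h+2)`. -/
theorem stmt_9 (p h : ℕ) (hp : p.Prime) (hodd : Odd p) (hh : 0 < h) :
    ((Finset.range (p ^ h) ×ˢ Finset.range (p ^ h)).filter
      (fun ij : ℕ × ℕ => ij.1 ≤ ij.2 ∧ ¬ p ∣ Nat.choose ij.2 ij.1 ∧
        Even ij.1 ∧ Even ij.2)).card
    = (p + 1) ^ h * (p ^ h + 3) / 2 ^ (h + 2) := by
  set N := ((Finset.range (p ^ h) ×ˢ Finset.range (p ^ h)).filter
      (fun ij : ℕ × ℕ => ij.1 ≤ ij.2 ∧ ¬ p ∣ Nat.choose ij.2 ij.1 ∧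
        Even ij.1 ∧ Even ij.2)).card with hN
  have key : (4 * N : ℤ) = wS p h 1 1 + wS p h (-1) 1 + wS p h 1 (-1) + wS p h (-1) (-1) := by
    unfold wS
    simp only [← Finset.sum_add_distrib]
    rw [hN, Finset.card_filter, Finset.sum_product_right]
    push_cast
    simp only [Finset.mul_sum]
    refine Finset.sum_congr rfl fun j _ => Finset.sum_congr rfl fun i _ => ?_
    by_cases hd : p ∣ Nat.choose j i
    · simp [hd]
    · have hij : i ≤ j := by
        by_contra hc
        exact hd (by simp [Nat.choose_eq_zero_of_lt (show j < i by omega)])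
      rcases Nat.even_or_odd i with hi | hi <;> rcases Nat.even_or_odd j with hj | hj <;>
        simp [hd, hij, hi, hj, hi.neg_one_pow, hj.neg_one_pow]
  have h1 : (1 : ℤ) ^ p = 1 := one_pow p
  have h2 : (-1 : ℤ) ^ p = -1 := hodd.neg_one_pow
  rw [wS_pow p h hp _ _ h1 h1, wS_pow p h hp _ _ h2 h1, wS_pow p h hp _ _ h1 h2,
    wS_pow p h hp _ _ h2 h2, wS_one p hp, wS_one p hp, wS_one p hp, wS_one p hp] at key
  obtain ⟨m, hm⟩ := hodd
  obtain ⟨b1, b2, b3, b4⟩ := base_vals m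
  rw [← hm] at b1 b2 b3 b4
  rw [b1, b2, b3, b4, mul_pow] at key
  have key2 : 4 * N = (m + 1) ^ h * (p ^ h + 3) := by
    have : (4 * N : ℤ) = (m + 1) ^ h * (p ^ h + 3) := by
      rw [key, hm]; push_cast; ring
    exact_mod_cast this
  symm
  apply Nat.div_eq_of_eq_mul_left (by positivity)
  have e : p + 1 = 2 * (m + 1) := by omega
  rw [e, mul_pow, mul_assoc, ← key2]
  ring
end

section
/- Let p be an odd prime and h a positive integer, and for u, v ∈ {0, 1} let T^{(u,v)} be the set of pairs (i, j) of natural numbers with 0 ≤ i ≤ j ≤ p^h − 1, C(j, i) ≢ 0 (mod p), i ≡ u (mod 2) and j ≡ v (mod 2). Then #T^{(1,0)} = #T^{(0,1)} = #T^{(1,1)} = (p+1)^h (p^h − 1)/2^{h+2}. -/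
/-- Signed count of pairs with nonzero binomial coefficient mod `p`. -/
def sgnSum (p n : ℕ) (x y : ℤ) : ℤ :=
  ∑ j ∈ Finset.range n, ∑ i ∈ Finset.range n, if p ∣ Nat.choose j i then 0 else x ^ i * y ^ j

lemma sum_range_mul_aux (f : ℕ → ℤ) (m n : ℕ) :
    ∑ k ∈ Finset.range (m * n), f k
      = ∑ a ∈ Finset.range m, ∑ b ∈ Finset.range n, f (a * n + b) := by
  induction m with
  | zero => simp
  | succ m ih =>
    rw [Finset.sum_range_succ, Nat.succ_mul, Finset.sum_range_add, ih]

lemma pow_aux (p : ℕ) (hodd : Odd p) (x : ℤ) (hx : x = 1 ∨ x = -1) (a b : ℕ) :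
    x ^ (a * p + b) = x ^ a * x ^ b := by
  rw [pow_add, mul_comm a p, pow_mul]
  rcases hx with rfl | rfl
  · simp
  · rw [hodd.neg_one_pow]

lemma lucas_aux (p : ℕ) (hp : p.Prime) (a b c d : ℕ) (hb : b < p) (hd : d < p) :
    p ∣ Nat.choose (a * p + b) (c * p + d) ↔ (p ∣ Nat.choose a c ∨ p ∣ Nat.choose b d) := by
  haveI : Fact p.Prime := ⟨hp⟩
  have h := Choose.choose_modEq_choose_mod_mul_choose_div_nat (n := a * p + b) (k := c * p + d)
    (p := p)
  have e1 : (a * p + b) % p = b := by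
    rw [add_comm, Nat.add_mul_mod_self_right, Nat.mod_eq_of_lt hb]
  have e2 : (c * p + d) % p = d := by
    rw [add_comm, Nat.add_mul_mod_self_right, Nat.mod_eq_of_lt hd]
  have e3 : (a * p + b) / p = a := by
    rw [add_comm, Nat.add_mul_div_right _ _ hp.pos, Nat.div_eq_of_lt hb, zero_add]
  have e4 : (c * p + d) / p = c := by
    rw [add_comm, Nat.add_mul_div_right _ _ hp.pos, Nat.div_eq_of_lt hd, zero_add]
  rw [e1, e2, e3, e4] at h
  rw [h.dvd_iff dvd_rfl, hp.dvd_mul, or_comm]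

lemma sgnSum_mul (p m : ℕ) (hp : p.Prime) (hodd : Odd p) (x y : ℤ) (hx : x = 1 ∨ x = -1)
    (hy : y = 1 ∨ y = -1) : sgnSum p (m * p) x y = sgnSum p m x y * sgnSum p p x y := by
  unfold sgnSum
  rw [sum_range_mul_aux, Finset.sum_mul]
  refine Finset.sum_congr rfl fun a _ => ?_
  rw [Finset.mul_sum]
  refine Finset.sum_congr rfl fun b hb => ?_
  rw [sum_range_mul_aux, Finset.sum_mul]
  refine Finset.sum_congr rfl fun c _ => ?_
  rw [Finset.mul_sum]
  refine Finset.sum_congr rfl fun d hd => ?_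
  rw [Finset.mem_range] at hb hd
  simp only [lucas_aux p hp a b c d hb hd, pow_aux p hodd x hx, pow_aux p hodd y hy]
  by_cases h1 : p ∣ Nat.choose a c
  · simp [h1]
  · by_cases h2 : p ∣ Nat.choose b d
    · simp [h2]
    · simp [h1, h2]; ring

lemma sgnSum_pow (p h : ℕ) (hp : p.Prime) (hodd : Odd p) (x y : ℤ) (hx : x = 1 ∨ x = -1)
    (hy : y = 1 ∨ y = -1) : sgnSum p (p ^ h) x y = sgnSum p p x y ^ h := by
  induction h with
  | zero =>
    have : ¬ p ∣ 1 := hp.one_lt.ne' ∘ Nat.dvd_one.mp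
    simp [sgnSum, hp.one_lt.ne']
  | succ h ih => rw [pow_succ, sgnSum_mul p _ hp hodd x y hx hy, ih, pow_succ]

lemma sgnSum_self (p : ℕ) (hp : p.Prime) (x y : ℤ) :
    sgnSum p p x y = ∑ j ∈ Finset.range p, (∑ i ∈ Finset.range (j + 1), x ^ i) * y ^ j := by
  unfold sgnSum
  refine Finset.sum_congr rfl fun j hj => ?_
  rw [Finset.mem_range] at hj
  rw [Finset.sum_mul]
  symm
  rw [← Finset.sum_subset (Finset.range_subset_range.mpr (Nat.succ_le_of_lt hj))
    (f := fun i => if p ∣ Nat.choose j i then 0 else x ^ i * y ^ j)]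
  · refine Finset.sum_congr rfl fun i hi => ?_
    rw [Finset.mem_range] at hi
    rw [if_neg]
    intro hd
    have h1 : p ∣ j.factorial := by
      rw [← Nat.choose_mul_factorial_mul_factorial (Nat.lt_succ_iff.mp hi), mul_assoc]
      exact hd.mul_right _
    exact absurd (hp.dvd_factorial.mp h1) (by omega)
  · intro i _ hi
    rw [Finset.mem_range] at hi
    rw [Nat.choose_eq_zero_of_lt (by omega)]
    simp

lemma base_aux (k : ℕ) :
    (∑ j ∈ Finset.range (2 * k + 1), (∑ i ∈ Finset.range (j + 1), (1 : ℤ) ^ i) * 1 ^ j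
      = (2 * k + 1) * (k + 1)) ∧
    (∑ j ∈ Finset.range (2 * k + 1), (∑ i ∈ Finset.range (j + 1), (-1 : ℤ) ^ i) * 1 ^ j
      = k + 1) ∧
    (∑ j ∈ Finset.range (2 * k + 1), (∑ i ∈ Finset.range (j + 1), (1 : ℤ) ^ i) * (-1) ^ j
      = k + 1) ∧
    (∑ j ∈ Finset.range (2 * k + 1), (∑ i ∈ Finset.range (j + 1), (-1 : ℤ) ^ i) * (-1) ^ j
      = k + 1) := by
  simp only [neg_one_geom_sum]
  induction k with
  | zero => simp
  | succ k ih =>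
    obtain ⟨h1, h2, h3, h4⟩ := ih
    have e1 : Even (2 * k + 1 + 1) := ⟨k + 1, by ring⟩
    have e2 : ¬ Even (2 * k + 1 + 1 + 1) := by rw [Nat.not_even_iff_odd]; exact ⟨k + 1, by ring⟩
    have e3 : (-1 : ℤ) ^ (2 * k + 1) = -1 := Odd.neg_one_pow ⟨k, rfl⟩
    have e4 : (-1 : ℤ) ^ (2 * k + 1 + 1) = 1 := e1.neg_one_pow
    rw [show 2 * (k + 1) + 1 = 2 * k + 1 + 1 + 1 by ring]
    refine ⟨?_, ?_, ?_, ?_⟩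
    · rw [Finset.sum_range_succ, Finset.sum_range_succ, h1]; simp; ring
    · rw [Finset.sum_range_succ, Finset.sum_range_succ, h2, if_pos e1, if_neg e2]; simp
    · rw [Finset.sum_range_succ, Finset.sum_range_succ, h3, e3, e4]; simp; ring
    · rw [Finset.sum_range_succ, Finset.sum_range_succ, h4, e3, e4, if_pos e1, if_neg e2]; simp

lemma card_aux (p n : ℕ) (P Q : ℕ → Prop) [DecidablePred P] [DecidablePred Q]
    [DecidablePred fun ij : ℕ × ℕ => ij.1 ≤ ij.2 ∧ ¬ p ∣ Nat.choose ij.2 ij.1 ∧ P ij.1 ∧ Q ij.2]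
    (s t : ℤ) (hP : ∀ i, (if P i then 2 else 0) = 1 + s * (-1) ^ i)
    (hQ : ∀ i, (if Q i then 2 else 0) = 1 + t * (-1) ^ i) :
    4 * (((Finset.range n ×ˢ Finset.range n).filter
      (fun ij : ℕ × ℕ => ij.1 ≤ ij.2 ∧ ¬ p ∣ Nat.choose ij.2 ij.1 ∧ P ij.1 ∧ Q ij.2)).card : ℤ)
    = sgnSum p n 1 1 + s * sgnSum p n (-1) 1 + t * sgnSum p n 1 (-1)
      + s * t * sgnSum p n (-1) (-1) := by
  rw [Finset.card_filter, Finset.sum_product_right]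
  unfold sgnSum
  push_cast
  simp only [Finset.mul_sum, ← Finset.sum_add_distrib]
  refine Finset.sum_congr rfl fun j _ => Finset.sum_congr rfl fun i _ => ?_
  by_cases hd : p ∣ Nat.choose j i
  · simp [hd]
  · have hij : i ≤ j := by
      by_contra hlt
      exact hd (by rw [Nat.choose_eq_zero_of_lt (by omega)]; simp)
    have e : (4 * if i ≤ j ∧ ¬ p ∣ Nat.choose j i ∧ P i ∧ Q j then (1 : ℤ) else 0)
        = (if P i then 2 else 0) * (if Q j then 2 else 0) := by
      by_cases h1 : P i <;> by_cases h2 : Q j <;> simp [hd, hij, h1, h2]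
    rw [e, hP, hQ]
    simp [hd]
    ring

lemma final_aux (p h k c : ℕ) (hk : p = 2 * k + 1)
    (hc : 4 * (c : ℤ) = ((2 * k + 1) * (k + 1)) ^ h - (k + 1) ^ h) :
    c = (p + 1) ^ h * (p ^ h - 1) / 2 ^ (h + 2) := by
  symm
  apply Nat.div_eq_of_eq_mul_right (by positivity)
  have : 1 ≤ p ^ h := Nat.one_le_pow _ _ (by omega)
  zify [this]
  subst hk
  rw [pow_add, mul_assoc, show (2 : ℤ) ^ 2 = 4 by norm_num, hc, mul_pow]
  push_cast
  rw [show (2 * (k : ℤ) + 1 + 1) = 2 * (k + 1) by ring, mul_pow]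
  ring

lemma odd_ind (i : ℕ) : (if Odd i then (2 : ℤ) else 0) = 1 + (-1) * (-1) ^ i := by
  rcases Nat.even_or_odd i with h | h
  · rw [h.neg_one_pow, if_neg (Nat.not_odd_iff_even.mpr h)]; norm_num
  · rw [h.neg_one_pow, if_pos h]; norm_num

lemma even_ind (i : ℕ) : (if Even i then (2 : ℤ) else 0) = 1 + 1 * (-1) ^ i := by
  rcases Nat.even_or_odd i with h | h
  · rw [h.neg_one_pow, if_pos h]; norm_num
  · rw [h.neg_one_pow, if_neg (Nat.not_even_iff_odd.mpr h)]; norm_num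

/-- For `p` odd, the three sets `T^(1,0)`, `T^(0,1)`, `T^(1,1)` of pairs `(i, j)` with
`0 ≤ i ≤ j ≤ p^h − 1`, `p ∤ C(j, i)`, and `i ≡ u`, `j ≡ v (mod 2)` all have cardinality
`(p+1)^h (p^h − 1)/2^(h+2)`. -/
theorem stmt_10 (p h : ℕ) (hp : p.Prime) (hodd : Odd p) (hh : 0 < h) :
    ((Finset.range (p ^ h) ×ˢ Finset.range (p ^ h)).filter
      (fun ij : ℕ × ℕ => ij.1 ≤ ij.2 ∧ ¬ p ∣ Nat.choose ij.2 ij.1 ∧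
        Odd ij.1 ∧ Even ij.2)).card = (p + 1) ^ h * (p ^ h - 1) / 2 ^ (h + 2) ∧
    ((Finset.range (p ^ h) ×ˢ Finset.range (p ^ h)).filter
      (fun ij : ℕ × ℕ => ij.1 ≤ ij.2 ∧ ¬ p ∣ Nat.choose ij.2 ij.1 ∧
        Even ij.1 ∧ Odd ij.2)).card = (p + 1) ^ h * (p ^ h - 1) / 2 ^ (h + 2) ∧
    ((Finset.range (p ^ h) ×ˢ Finset.range (p ^ h)).filter
      (fun ij : ℕ × ℕ => ij.1 ≤ ij.2 ∧ ¬ p ∣ Nat.choose ij.2 ij.1 ∧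
        Odd ij.1 ∧ Odd ij.2)).card = (p + 1) ^ h * (p ^ h - 1) / 2 ^ (h + 2) := by
  obtain ⟨k, hk⟩ := hodd
  have hodd : Odd p := ⟨k, hk⟩
  obtain ⟨b1, b2, b3, b4⟩ := base_aux k
  rw [← hk, ← sgnSum_self p hp] at b1 b2 b3 b4
  have s1 := sgnSum_pow p h hp hodd 1 1 (Or.inl rfl) (Or.inl rfl)
  have s2 := sgnSum_pow p h hp hodd (-1) 1 (Or.inr rfl) (Or.inl rfl)
  have s3 := sgnSum_pow p h hp hodd 1 (-1) (Or.inl rfl) (Or.inr rfl)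
  have s4 := sgnSum_pow p h hp hodd (-1) (-1) (Or.inr rfl) (Or.inr rfl)
  rw [b1] at s1
  rw [b2] at s2
  rw [b3] at s3
  rw [b4] at s4
  refine ⟨?_, ?_, ?_⟩ <;> apply final_aux p h k _ hk
  · rw [card_aux p (p ^ h) Odd Even _ _ odd_ind even_ind, s1, s2, s3, s4]; ring
  · rw [card_aux p (p ^ h) Even Odd _ _ even_ind odd_ind, s1, s2, s3, s4]; ring
  · rw [card_aux p (p ^ h) Odd Odd _ _ odd_ind odd_ind, s1, s2, s3, s4]; ring
end

section
/- Let p be a prime, let m ≥ 2 be a divisor of p−1 and n ≥ 2 a divisor of p+1, and set m_0 = (p−1)/m, n_0 = (p+1)/n, α = n_0(p−1), β = m_0(p+1). Let T = {(i, j) ∈ ℕ² : 0 ≤ iα ≤ jβ ≤ p²−1 and C(jβ, iα) ≢ 0 (mod p)}. Then #T − (m + n + gcd(m, n)) = 2·Σ_{j=⌈m/2⌉}^{m} ⌊(j·m_0 + 1)/n_0⌋ − (m − ⌈m/2⌉ + 2)(n − 1) + 1 − gcd(m, n). -/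
theorem aux_lucas_s11 (p b u v : ℕ) (hp : p.Prime) (hb : b < p) (hu : u < p) (hv : v < p) :
    (¬ p ∣ Nat.choose (b * (p + 1)) (u * p + v)) ↔ (u ≤ b ∧ v ≤ b) := by
  haveI : Fact p.Prime := ⟨hp⟩
  have h := Choose.choose_modEq_choose_mod_mul_choose_div_nat (n := b * (p + 1))
    (k := u * p + v) (p := p)
  have e1 : b * (p + 1) % p = b := by
    rw [show b * (p + 1) = b + p * b by ring, Nat.add_mul_mod_self_left, Nat.mod_eq_of_lt hb]
  have e2 : b * (p + 1) / p = b := by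
    rw [show b * (p + 1) = b + p * b by ring, Nat.add_mul_div_left _ _ hp.pos,
      Nat.div_eq_of_lt hb, zero_add]
  have e3 : (u * p + v) % p = v := by
    rw [show u * p + v = v + p * u by ring, Nat.add_mul_mod_self_left, Nat.mod_eq_of_lt hv]
  have e4 : (u * p + v) / p = u := by
    rw [show u * p + v = v + p * u by ring, Nat.add_mul_div_left _ _ hp.pos,
      Nat.div_eq_of_lt hv, zero_add]
  rw [e1, e2, e3, e4] at h
  rw [(h.dvd_iff (dvd_refl p) : _ ↔ _), hp.dvd_mul]
  have key : ∀ w, (p ∣ Nat.choose b w) ↔ b < w := by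
    intro w
    constructor
    · intro hd
      by_contra hc
      have hw : w ≤ b := by omega
      have := (Nat.choose_mul_factorial_mul_factorial hw)
      have h2 : p ∣ b.factorial := by
        rw [← this, mul_assoc]; exact Dvd.dvd.mul_right hd _
      rw [hp.dvd_factorial] at h2
      omega
    · intro hw
      rw [Nat.choose_eq_zero_of_lt hw]; exact dvd_zero p
  rw [key, key]
  omega

theorem aux_cond (p m n m0 n0 : ℕ) (hp : p.Prime) (hm : 2 ≤ m) (hn : 2 ≤ n)
    (h1 : m * m0 + 1 = p) (h2 : n * n0 = p + 1) (i j : ℕ) (hj : j ≤ m) :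
    (i * (n0 * (p - 1)) ≤ j * (m0 * (p + 1)) ∧
      ¬ p ∣ Nat.choose (j * (m0 * (p + 1))) (i * (n0 * (p - 1)))) ↔
    (i = 0 ∨ (i = n ∧ j = m) ∨
      (n - (j * m0 + 1) / n0 ≤ i ∧ i ≤ (j * m0 + 1) / n0)) := by
  have hp2 := hp.two_le
  have hn0 : 0 < n0 := by
    rcases Nat.eq_zero_or_pos n0 with h | h
    · subst h; omega
    · exact h
  have hm0 : 0 < m0 := by
    rcases Nat.eq_zero_or_pos m0 with h | h
    · subst h; omega
    · exact h
  have hb : j * m0 ≤ m * m0 := Nat.mul_le_mul_right _ hj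
  have hf : (j * m0 + 1) / n0 < n := by
    rw [Nat.div_lt_iff_lt_mul hn0]; omega
  have hbp : j * m0 < p := by omega
  have hle : (i * (n0 * (p - 1)) ≤ j * (m0 * (p + 1)) ∧
      ¬ p ∣ Nat.choose (j * (m0 * (p + 1))) (i * (n0 * (p - 1)))) ↔
      ¬ p ∣ Nat.choose (j * (m0 * (p + 1))) (i * (n0 * (p - 1))) := by
    constructor
    · exact fun h => h.2
    · intro h
      refine ⟨?_, h⟩
      by_contra hc
      exact h (by rw [Nat.choose_eq_zero_of_lt (by omega)]; exact dvd_zero p)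
  rcases Nat.eq_zero_or_pos i with h0 | h0
  · subst h0; simp [hp.one_lt.ne']
  obtain ⟨q, rfl⟩ : ∃ q, p = q + 1 := ⟨p - 1, by omega⟩
  simp only [Nat.add_sub_cancel] at hle ⊢
  rcases lt_trichotomy i n with hi | hi | hi
  · rw [hle]
    have hia : i * n0 + n0 ≤ n * n0 := by
      rw [← Nat.succ_mul]; exact Nat.mul_le_mul_right _ hi
    have hi1 : n0 ≤ i * n0 := Nat.le_mul_of_pos_left _ h0
    obtain ⟨a, ha⟩ : ∃ a, i * n0 = a + 1 := ⟨i * n0 - 1, by omega⟩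
    obtain ⟨c, hc⟩ : ∃ c, q = a + c := ⟨q - a, by omega⟩
    have e : i * (n0 * q) = a * (q + 1) + c := by
      rw [← mul_assoc, ha]; subst hc; ring
    rw [e, ← mul_assoc, aux_lucas_s11 (q + 1) (j * m0) a c hp hbp (by omega) (by omega)]
    rw [Nat.le_div_iff_mul_le hn0]
    have e2 : n - (j * m0 + 1) / n0 ≤ i ↔ (n - i) * n0 ≤ j * m0 + 1 := by
      rw [← Nat.le_div_iff_mul_le hn0]; omega
    rw [e2, Nat.sub_mul]
    omega
  · subst hi
    rw [hle]
    have e : i * (n0 * q) = q * (q + 1) + q := by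
      rw [← mul_assoc, h2]; ring
    rw [e, ← mul_assoc, aux_lucas_s11 (q + 1) (j * m0) q q hp hbp (by omega) (by omega)]
    have : q ≤ j * m0 ↔ j = m := by
      constructor
      · intro h
        have : m * m0 ≤ j * m0 := by omega
        exact le_antisymm hj (Nat.le_of_mul_le_mul_right this hm0)
      · rintro rfl; omega
    rw [this]
    omega
  · have hlt : j * (m0 * (q + 1 + 1)) < i * (n0 * q) := by
      have q0 : 0 < q := by omega
      calc j * (m0 * (q + 1 + 1)) = (j * m0) * (q + 2) := by ring
        _ ≤ q * (q + 2) := Nat.mul_le_mul_right _ (by omega)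
        _ = n * (n0 * q) := by rw [← mul_assoc, h2]; ring
        _ < i * (n0 * q) := Nat.mul_lt_mul_of_pos_right hi (by positivity)
    constructor
    · rintro ⟨h, -⟩; omega
    · intro h; omega

theorem stmt_11 (p m n : ℕ) (hp : p.Prime) (hm : 2 ≤ m) (hn : 2 ≤ n)
    (hmd : m ∣ p - 1) (hnd : n ∣ p + 1)
    (m0 n0 α β : ℕ) (hm0 : m0 = (p - 1) / m) (hn0 : n0 = (p + 1) / n)
    (hα : α = n0 * (p - 1)) (hβ : β = m0 * (p + 1)) :
    (((Finset.range (p ^ 2) ×ˢ Finset.range (p ^ 2)).filter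
      (fun ij : ℕ × ℕ => ij.1 * α ≤ ij.2 * β ∧ ij.2 * β ≤ p ^ 2 - 1 ∧
        ¬ p ∣ Nat.choose (ij.2 * β) (ij.1 * α))).card : ℤ)
      - ((m : ℤ) + n + Nat.gcd m n)
    = 2 * (↑(∑ j ∈ Finset.Icc ((m + 1) / 2) m, (j * m0 + 1) / n0) : ℤ)
      - ((m : ℤ) - ((m + 1) / 2 : ℕ) + 2) * ((n : ℤ) - 1) + 1 - Nat.gcd m n := by
  have hp2 := hp.two_le
  have h1 : m * m0 + 1 = p := by
    rw [hm0, Nat.mul_div_cancel' hmd]; omega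
  have h2 : n * n0 = p + 1 := by
    rw [hn0, Nat.mul_div_cancel' hnd]
  clear hm0 hn0
  have hn0 : 0 < n0 := by
    rcases Nat.eq_zero_or_pos n0 with h | h
    · subst h; omega
    · exact h
  have hm0 : 0 < m0 := by
    rcases Nat.eq_zero_or_pos m0 with h | h
    · subst h; omega
    · exact h
  have hmp : m < p := by
    have := Nat.le_mul_of_pos_right m hm0
    omega
  have hnp : n ≤ p + 1 := by
    have := Nat.le_mul_of_pos_right n hn0
    omega
  have hpp : p + 1 < p ^ 2 := by
    have : 3 ≤ p := by omega
    nlinarith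
  have hjm : ∀ j, j * β ≤ p ^ 2 - 1 ↔ j ≤ m := by
    intro j
    have : p ^ 2 - 1 = m * β := by
      rw [hβ, ← mul_assoc]
      have : m * m0 = p - 1 := by omega
      rw [this]
      obtain ⟨q, rfl⟩ : ∃ q, p = q + 1 := ⟨p - 1, by omega⟩
      simp only [Nat.add_sub_cancel]
      rw [show (q + 1) ^ 2 = q * (q + 1 + 1) + 1 by ring, Nat.add_sub_cancel]
    rw [this]
    exact Nat.mul_le_mul_right_iff (by rw [hβ]; positivity)
  set T := (Finset.range (p ^ 2) ×ˢ Finset.range (p ^ 2)).filter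
      (fun ij : ℕ × ℕ => ij.1 * α ≤ ij.2 * β ∧ ij.2 * β ≤ p ^ 2 - 1 ∧
        ¬ p ∣ Nat.choose (ij.2 * β) (ij.1 * α)) with hT
  let f : ℕ → ℕ := fun j => (j * m0 + 1) / n0
  have hf : ∀ j ≤ m, f j < n := by
    intro j hj
    have hb : j * m0 ≤ m * m0 := Nat.mul_le_mul_right _ hj
    change (j * m0 + 1) / n0 < n
    rw [Nat.div_lt_iff_lt_mul hn0]; omega
  have hmem : ∀ i j, (i, j) ∈ T ↔ j ≤ m ∧ (i = 0 ∨ (i = n ∧ j = m) ∨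
      (n - f j ≤ i ∧ i ≤ f j)) := by
    intro i j
    rw [hT, Finset.mem_filter, Finset.mem_product, Finset.mem_range, Finset.mem_range]
    simp only
    rw [hjm]
    constructor
    · rintro ⟨-, h3, h4, h5⟩
      refine ⟨h4, ?_⟩
      rw [← aux_cond p m n m0 n0 hp hm hn h1 h2 i j h4, ← hα, ← hβ]
      exact ⟨h3, h5⟩
    · rintro ⟨h4, h⟩
      have h' := (aux_cond p m n m0 n0 hp hm hn h1 h2 i j h4).2 h
      rw [← hα, ← hβ] at h'
      have := hf j h4
      exact ⟨⟨by omega, by omega⟩, h'.1, h4, h'.2⟩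
  have hcard : T.card = ∑ j ∈ Finset.range (m + 1),
      (1 + (if j = m then 1 else 0) + (2 * f j + 1 - n)) := by
    rw [Finset.card_eq_sum_card_fiberwise (f := Prod.snd) (t := Finset.range (m + 1))]
    · apply Finset.sum_congr rfl
      intro j hj
      have hj' : j ≤ m := by rw [Finset.mem_range] at hj; omega
      have hfj := hf j hj'
      have e : (T.filter (fun x => x.2 = j)) =
          (({0} ∪ (if j = m then {n} else ∅)) ∪ Finset.Icc (n - f j) (f j)).map
            ⟨fun i => (i, j), fun a b h => (Prod.mk.inj h).1⟩ := by
        ext ⟨i, k⟩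
        rw [Finset.mem_filter, hmem]
        simp only [Finset.mem_map, Finset.mem_union, Finset.mem_singleton, Finset.mem_Icc]
        constructor
        · rintro ⟨⟨a, b⟩, rfl⟩
          refine ⟨i, ?_, rfl⟩
          split_ifs with hk <;> simp <;> omega
        · rintro ⟨a, h, he⟩
          obtain ⟨rfl, rfl⟩ := Prod.mk.inj he
          refine ⟨⟨hj', ?_⟩, rfl⟩
          split_ifs at h with hk <;> simp at h <;> omega
      rw [e, Finset.card_map, Finset.card_union_of_disjoint, Finset.card_union_of_disjoint]
      · rw [Nat.card_Icc]
        split_ifs <;> simp <;> omega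
      · split_ifs <;> simp
        omega
      · rw [Finset.disjoint_left]
        intro a ha
        rw [Finset.mem_Icc]
        split_ifs at ha <;> simp at ha <;> omega
    · rintro ⟨i, j⟩ h
      have := (hmem i j).1 h
      simp; omega
  have hlow : ∀ j, j < (m + 1) / 2 → 2 * f j + 1 ≤ n := by
    intro j hj
    have h3 : (2 * j + 1) * m0 ≤ m * m0 := Nat.mul_le_mul_right _ (by omega)
    have h4 : f j * n0 ≤ j * m0 + 1 := Nat.div_mul_le_self _ _
    have : (2 * f j) * n0 < n * n0 := by
      rw [h2]; nlinarith
    have := Nat.lt_of_mul_lt_mul_right this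
    omega
  have hhigh : ∀ j, (m + 1) / 2 ≤ j → n ≤ 2 * f j + 1 := by
    intro j hj
    have h3 : m * m0 ≤ (2 * j) * m0 := Nat.mul_le_mul_right _ (by omega)
    have h4 : j * m0 + 1 < (f j + 1) * n0 := by
      rw [mul_comm (f j + 1)]; exact Nat.lt_mul_div_succ _ hn0
    have : n * n0 < (2 * f j + 2) * n0 := by
      rw [h2]; nlinarith
    have := Nat.lt_of_mul_lt_mul_right this
    omega
  have hsplit : ∑ j ∈ Finset.range (m + 1), (2 * f j + 1 - n)
      = ∑ j ∈ Finset.Icc ((m + 1) / 2) m, (2 * f j + 1 - n) := by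
    symm
    apply Finset.sum_subset
    · intro j hj
      rw [Finset.mem_Icc] at hj
      rw [Finset.mem_range]; omega
    · intro j hj hj2
      rw [Finset.mem_Icc] at hj2
      rw [Finset.mem_range] at hj
      have := hlow j (by omega)
      omega
  have hz : ((∑ j ∈ Finset.Icc ((m + 1) / 2) m, (2 * f j + 1 - n) : ℕ) : ℤ)
      = 2 * ((∑ j ∈ Finset.Icc ((m + 1) / 2) m, f j : ℕ) : ℤ)
        - ((m : ℤ) - ((m + 1) / 2 : ℕ) + 1) * ((n : ℤ) - 1) := by
    have e : ((∑ j ∈ Finset.Icc ((m + 1) / 2) m, (2 * f j + 1 - n) : ℕ) : ℤ)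
      = ∑ j ∈ Finset.Icc ((m + 1) / 2) m, (2 * (f j : ℤ) - ((n : ℤ) - 1)) := by
      rw [Nat.cast_sum]
      apply Finset.sum_congr rfl
      intro j hj
      rw [Finset.mem_Icc] at hj
      have := hhigh j hj.1
      omega
    rw [e, Finset.sum_sub_distrib, ← Finset.mul_sum, Finset.sum_const, Nat.card_Icc,
      Nat.cast_sum, nsmul_eq_mul, Nat.cast_sub (by omega)]
    push_cast
    ring
  have hfin : (T.card : ℤ) = (m + 2) + (2 * ((∑ j ∈ Finset.Icc ((m + 1) / 2) m, f j : ℕ) : ℤ)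
        - ((m : ℤ) - ((m + 1) / 2 : ℕ) + 1) * ((n : ℤ) - 1)) := by
    rw [← hz, ← hsplit, hcard, Finset.sum_add_distrib, Finset.sum_add_distrib]
    simp
    ring
  rw [hfin]
  ring
end

section
/- Let p be a prime. Then the number of pairs (i, j) of natural numbers with 1 ≤ i < j ≤ p² + p and C(j(p−1), i(p−1)) ≢ 0 (mod p) equals p(p+1)(p²+p+2)/8. -/
lemma aux_small {p : ℕ} (hp : p.Prime) {n k : ℕ} (hn : n < p) :
    ¬ p ∣ Nat.choose n k ↔ k ≤ n := by
  constructor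
  · intro h
    by_contra hk
    exact h (by rw [Nat.choose_eq_zero_of_lt (by omega)]; exact dvd_zero p)
  · intro hk h
    have h1 : p ∣ n.factorial := by
      rw [← Nat.choose_mul_factorial_mul_factorial hk, mul_assoc]
      exact Dvd.dvd.mul_right h _
    rw [hp.dvd_factorial] at h1
    omega

lemma aux_step {p : ℕ} (hp : p.Prime) {n0 k0 : ℕ} (n k : ℕ) (hn : n0 < p) (hk : k0 < p) :
    ¬ p ∣ Nat.choose (n0 + p * n) (k0 + p * k) ↔ k0 ≤ n0 ∧ ¬ p ∣ Nat.choose n k := by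
  have : Fact p.Prime := ⟨hp⟩
  have h := Choose.choose_modEq_choose_mod_mul_choose_div_nat (p := p)
    (n := n0 + p * n) (k := k0 + p * k)
  rw [Nat.add_mul_mod_self_left, Nat.add_mul_mod_self_left, Nat.mod_eq_of_lt hn,
    Nat.mod_eq_of_lt hk, Nat.add_mul_div_left _ _ hp.pos, Nat.add_mul_div_left _ _ hp.pos,
    Nat.div_eq_of_lt hn, Nat.div_eq_of_lt hk, zero_add, zero_add] at h
  rw [h.dvd_iff dvd_rfl, hp.dvd_mul, not_or, aux_small hp hn]

lemma aux_digits {p : ℕ} (hp : p.Prime) {n0 n1 n2 k0 k1 k2 : ℕ} (hn0 : n0 < p) (hk0 : k0 < p)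
    (hn1 : n1 < p) (hk1 : k1 < p) (hn2 : n2 < p) :
    ¬ p ∣ Nat.choose (n0 + p * (n1 + p * n2)) (k0 + p * (k1 + p * k2)) ↔
      k0 ≤ n0 ∧ k1 ≤ n1 ∧ k2 ≤ n2 := by
  rw [aux_step hp _ _ hn0 hk0, aux_step hp _ _ hn1 hk1, aux_small hp hn2]

lemma digits_unique {p a0 a1 a2 b0 b1 b2 : ℕ} (ha0 : a0 < p) (hb0 : b0 < p)
    (ha1 : a1 < p) (hb1 : b1 < p)
    (h : a0 + p * (a1 + p * a2) = b0 + p * (b1 + p * b2)) : a0 = b0 ∧ a1 = b1 ∧ a2 = b2 := by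
  have hp : 0 < p := by omega
  have key : ∀ {x y u v : ℕ}, x < p → y < p → x + p * u = y + p * v → x = y ∧ u = v := by
    intro x y u v hx hy h
    have h1 := congrArg (· % p) h
    have h2 := congrArg (· / p) h
    simp only [Nat.add_mul_mod_self_left, Nat.mod_eq_of_lt hx, Nat.mod_eq_of_lt hy,
      Nat.add_mul_div_left _ _ hp, Nat.div_eq_of_lt hx, Nat.div_eq_of_lt hy, zero_add] at h1 h2
    exact ⟨h1, h2⟩
  obtain ⟨e0, e⟩ := key ha0 hb0 h
  obtain ⟨e1, e2⟩ := key ha1 hb1 e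
  exact ⟨e0, e1, e2⟩

lemma exists_digits {p m : ℕ} (hp : 0 < p) (hm : m < p ^ 3) :
    ∃ a0 a1 a2, a0 < p ∧ a1 < p ∧ a2 < p ∧ m = a0 + p * (a1 + p * a2) := by
  refine ⟨m % p, m / p % p, m / p / p, Nat.mod_lt _ hp, Nat.mod_lt _ hp, ?_, ?_⟩
  · rw [Nat.div_lt_iff_lt_mul hp, Nat.div_lt_iff_lt_mul hp]
    calc m < p ^ 3 := hm
      _ = p * p * p := by ring
  · rw [Nat.mod_add_div, Nat.mod_add_div]

/-- The quadruples parametrizing 3×3 semi-magic squares of line sum `r`. -/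
def magicSet (r : ℕ) : Finset (ℕ × ℕ × ℕ × ℕ) :=
  (Finset.range (r + 1) ×ˢ Finset.range (r + 1) ×ˢ Finset.range (r + 1) ×ˢ
    Finset.range (r + 1)).filter
    (fun x => x.1 + x.2.1 ≤ r ∧ x.2.2.1 + x.2.2.2 ≤ r ∧ x.1 + x.2.2.1 ≤ r ∧
      x.2.1 + x.2.2.2 ≤ r ∧ r ≤ x.1 + x.2.1 + x.2.2.1 + x.2.2.2)

lemma i_mul (r a0 a1 a2 : ℕ) (h : a0 + a1 + a2 = r) :
    (1 + a1 + (r + 2) * a2) * r = a0 + (r + 1) * (a1 + (r + 1) * a2) := by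
  subst h; ring

lemma card_eq_magic (r : ℕ) (hp : (r + 1).Prime) :
    ((Finset.Icc 1 ((r + 1) ^ 2 + (r + 1)) ×ˢ Finset.Icc 1 ((r + 1) ^ 2 + (r + 1))).filter
      (fun ij : ℕ × ℕ => ij.1 < ij.2 ∧
        ¬ (r + 1) ∣ Nat.choose (ij.2 * r) (ij.1 * r))).card = (magicSet r).card := by
  have hr : 0 < r := by have := hp.two_le; omega
  symm
  apply Finset.card_bij (fun x _ => (1 + x.2.1 + (r + 2) * (r - x.1 - x.2.1),
    (1 + x.2.1 + (r + 2) * (r - x.1 - x.2.1)) +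
      (1 + x.2.2.2 + (r + 2) * (r - x.2.2.1 - x.2.2.2))))
  · rintro ⟨a0, a1, d0, d1⟩ h
    simp only [magicSet, Finset.mem_filter, Finset.mem_product, Finset.mem_range,
      Finset.mem_Icc] at h ⊢
    obtain ⟨-, h1, h2, h3, h4, h5⟩ := h
    obtain ⟨a2, ha2⟩ : ∃ a2, a2 = r - a0 - a1 := ⟨_, rfl⟩
    obtain ⟨d2, hd2⟩ : ∃ d2, d2 = r - d0 - d1 := ⟨_, rfl⟩
    rw [← ha2, ← hd2]
    have e1 := i_mul r a0 a1 a2 (by omega)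
    have e2 := i_mul r d0 d1 d2 (by omega)
    have hle : (r + 2) * (a2 + d2) ≤ (r + 2) * r := Nat.mul_le_mul_left _ (by omega)
    have hb : (1 + a1 + (r + 2) * a2) + (1 + d1 + (r + 2) * d2) ≤ (r + 1) ^ 2 + (r + 1) := by
      nlinarith
    refine ⟨⟨⟨by omega, by omega⟩, by omega, hb⟩, by omega, ?_⟩
    rw [add_mul _ _ r, e1, e2]
    have : a0 + (r + 1) * (a1 + (r + 1) * a2) + (d0 + (r + 1) * (d1 + (r + 1) * d2)) =
      (a0 + d0) + (r + 1) * ((a1 + d1) + (r + 1) * (a2 + d2)) := by ring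
    rw [this, aux_digits hp (by omega) (by omega) (by omega) (by omega) (by omega)]
    omega
  · rintro ⟨a0, a1, d0, d1⟩ h ⟨b0, b1, c0, c1⟩ h' heq
    simp only [magicSet, Finset.mem_filter, Finset.mem_product, Finset.mem_range] at h h'
    simp only [Prod.mk.injEq] at heq ⊢
    obtain ⟨q1, q2⟩ := heq
    rw [q1, Nat.add_left_cancel_iff] at q2
    have f1 := i_mul r a0 a1 (r - a0 - a1) (by omega)
    have f2 := i_mul r d0 d1 (r - d0 - d1) (by omega)
    rw [q1, i_mul r b0 b1 (r - b0 - b1) (by omega)] at f1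
    rw [q2, i_mul r c0 c1 (r - c0 - c1) (by omega)] at f2
    have g1 := digits_unique (by omega) (by omega) (by omega) (by omega) f1
    have g2 := digits_unique (by omega) (by omega) (by omega) (by omega) f2
    omega
  · rintro ⟨i, j⟩ h
    simp only [Finset.mem_filter, Finset.mem_product, Finset.mem_Icc] at h
    obtain ⟨⟨⟨hi, -⟩, -, hj⟩, hij, hc⟩ := h
    have hjr : j * r + 1 < (r + 1) ^ 3 := by
      have := Nat.mul_le_mul_right r hj
      nlinarith
    have hijr : i * r < j * r := Nat.mul_lt_mul_of_pos_right hij hr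
    have hir : 0 < i * r := by positivity
    obtain ⟨a0, a1, a2, ha0, ha1, ha2, ha⟩ := exists_digits (p := r + 1) (m := i * r)
      (by omega) (by omega)
    obtain ⟨n0, n1, n2, hn0, hn1, hn2, hn⟩ := exists_digits (p := r + 1) (m := j * r)
      (by omega) (by omega)
    rw [hn, ha, aux_digits hp hn0 ha0 hn1 ha1 hn2] at hc
    have dsum : ∀ {x0 x1 x2 k : ℕ}, k * r = x0 + (r + 1) * (x1 + (r + 1) * x2) →
        r ∣ x0 + x1 + x2 := by
      intro x0 x1 x2 k hk
      have e : x0 + (r + 1) * (x1 + (r + 1) * x2) =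
        (x0 + x1 + x2) + r * (x1 + (r + 2) * x2) := by ring
      rw [e] at hk
      exact (Nat.dvd_add_left (Dvd.intro _ rfl)).1 (hk ▸ Dvd.intro_left _ rfl)
    obtain ⟨s, hs⟩ := dsum ha
    obtain ⟨t, ht⟩ := dsum hn
    have s0 : 0 < a0 + a1 + a2 := by
      rcases Nat.eq_zero_or_pos (a0 + a1 + a2) with h0 | h0
      · obtain rfl : a0 = 0 := by omega
        obtain rfl : a1 = 0 := by omega
        obtain rfl : a2 = 0 := by omega
        simp at ha; omega
      · exact h0
    have s1 : a0 + a1 + a2 < n0 + n1 + n2 := by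
      by_contra hcon
      obtain rfl : a0 = n0 := by omega
      obtain rfl : a1 = n1 := by omega
      obtain rfl : a2 = n2 := by omega
      omega
    have s2 : n0 + n1 + n2 < r * 3 := by
      by_contra hcon
      obtain rfl : n0 = r := by omega
      obtain rfl : n1 = n0 := by omega
      obtain rfl : n2 = n1 := by omega
      nlinarith
    rw [hs] at s0 s1
    rw [ht] at s1 s2
    have t1 := Nat.pos_of_mul_pos_left s0
    have t2 := Nat.lt_of_mul_lt_mul_left s1
    have t3 := Nat.lt_of_mul_lt_mul_left s2
    obtain rfl : s = 1 := by omega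
    obtain rfl : t = 2 := by omega
    obtain ⟨c0, c1, c2⟩ := hc
    refine ⟨(a0, a1, n0 - a0, n1 - a1), ?_, ?_⟩
    · simp only [magicSet, Finset.mem_filter, Finset.mem_product, Finset.mem_range]
      omega
    · obtain ⟨d0, rfl⟩ := Nat.exists_eq_add_of_le c0
      obtain ⟨d1, rfl⟩ := Nat.exists_eq_add_of_le c1
      obtain ⟨d2, rfl⟩ := Nat.exists_eq_add_of_le c2
      have e1 : r - a0 - a1 = a2 := by omega
      have e2 : r - d0 - d1 = d2 := by omega
      simp only [Nat.add_sub_cancel_left, e1, e2, Prod.mk.injEq]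
      have f1 := i_mul r a0 a1 a2 (by omega)
      have f2 := i_mul r d0 d1 d2 (by omega)
      constructor
      · apply Nat.eq_of_mul_eq_mul_right hr
        rw [f1, ha]
      · apply Nat.eq_of_mul_eq_mul_right hr
        rw [add_mul _ _ r, f1, f2, hn]; ring

lemma sum_trunc (a N : ℕ) (h : a ≤ N) :
    2 * ∑ d ∈ Finset.range (N + 1), ((a - d : ℕ) : ℤ) = a * (a + 1) := by
  induction N, h using Nat.le_induction with
  | base =>
    rw [← Finset.sum_range_reflect]
    have : ∀ n : ℕ, 2 * ∑ d ∈ Finset.range (n + 1), (d : ℤ) = n * (n + 1) := by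
      intro n
      induction n with
      | zero => simp
      | succ k ih => rw [Finset.sum_range_succ, mul_add, ih]; push_cast; ring
    rw [← this]
    congr 1
    apply Finset.sum_congr rfl
    intro x hx
    rw [Finset.mem_range] at hx
    congr 1
    omega
  | succ n hn ih =>
    rw [Finset.sum_range_succ, mul_add, ih, Nat.sub_eq_zero_of_le (by omega)]
    simp

lemma count_d1 (r a0 a1 d0 : ℕ) (ha : a0 + a1 ≤ r) (hd : a0 + d0 ≤ r) :
    (∑ d1 ∈ Finset.range (r + 1), if (a0 + a1 ≤ r ∧ d0 + d1 ≤ r ∧ a0 + d0 ≤ r ∧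
      a1 + d1 ≤ r ∧ r ≤ a0 + a1 + d0 + d1) then (1 : ℤ) else 0) =
      r + 1 - d0 - (a1 - d0 : ℕ) - (r - a0 - a1 - d0 : ℕ) := by
  have : (Finset.range (r + 1)).filter (fun d1 => a0 + a1 ≤ r ∧ d0 + d1 ≤ r ∧ a0 + d0 ≤ r ∧
      a1 + d1 ≤ r ∧ r ≤ a0 + a1 + d0 + d1) =
      Finset.Ico (r - a0 - a1 - d0) (r + 1 - d0 - (a1 - d0)) := by
    ext x
    simp only [Finset.mem_filter, Finset.mem_range, Finset.mem_Ico]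
    omega
  rw [Finset.sum_boole, this, Nat.card_Ico]
  omega

lemma count_d (r a0 a1 : ℕ) (ha : a0 + a1 ≤ r) :
    2 * (∑ d0 ∈ Finset.range (r + 1), ∑ d1 ∈ Finset.range (r + 1),
      if (a0 + a1 ≤ r ∧ d0 + d1 ≤ r ∧ a0 + d0 ≤ r ∧
      a1 + d1 ≤ r ∧ r ≤ a0 + a1 + d0 + d1) then (1 : ℤ) else 0) =
      (r + 1) * (r + 2) - a0 * (a0 + 1) - a1 * (a1 + 1) - (r - a0 - a1) * (r - a0 - a1 + 1) := by
  obtain ⟨a2, rfl⟩ := Nat.exists_eq_add_of_le ha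
  have hsub : Finset.range (a1 + a2 + 1) ⊆ Finset.range (a0 + a1 + a2 + 1) :=
    Finset.range_subset_range.2 (by omega)
  rw [← Finset.sum_subset hsub]
  · rw [Finset.sum_congr rfl (fun d0 hd0 => count_d1 (a0 + a1 + a2) a0 a1 d0 ha
      (by rw [Finset.mem_range] at hd0; omega))]
    have e : a0 + a1 + a2 - a0 - a1 = a2 := by omega
    simp only [e, Finset.sum_sub_distrib, mul_sub]
    rw [sum_trunc a1 _ (by omega), sum_trunc a2 _ (by omega)]
    have : ∀ n : ℕ, 2 * ∑ d ∈ Finset.range (n + 1), (d : ℤ) = n * (n + 1) := by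
      intro n
      induction n with
      | zero => simp
      | succ k ih => rw [Finset.sum_range_succ, mul_add, ih]; push_cast; ring
    rw [this]
    simp only [Finset.sum_const, Finset.card_range, nsmul_eq_mul]
    push_cast
    ring
  · intro x _ hx
    apply Finset.sum_eq_zero
    intro y _
    rw [Finset.mem_range] at hx
    rw [if_neg (by omega)]

lemma magic_sum_inner (r : ℤ) (a0 : ℤ) (N : ℕ) :
    6 * ∑ a1 ∈ Finset.range (N + 1), ((r + 1) * (r + 2) - a0 * (a0 + 1) - a1 * (a1 + 1)
      - (N - a1) * (N - a1 + 1) : ℤ) =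
      6 * (N + 1) * ((r + 1) * (r + 2) - a0 * (a0 + 1)) - 4 * N * (N + 1) * (N + 2) := by
  have h1 : ∀ n : ℕ, 3 * ∑ d ∈ Finset.range (n + 1), ((d : ℤ) * (d + 1)) =
      n * (n + 1) * (n + 2) := by
    intro n
    induction n with
    | zero => simp
    | succ k ih => rw [Finset.sum_range_succ, mul_add, ih]; push_cast; ring
  have h2 : ∑ d ∈ Finset.range (N + 1), (((N : ℤ) - d) * (N - d + 1)) =
      ∑ d ∈ Finset.range (N + 1), ((d : ℤ) * (d + 1)) := by
    rw [← Finset.sum_range_reflect]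
    apply Finset.sum_congr rfl
    intro x hx
    rw [Finset.mem_range] at hx
    have : ((N + 1 - 1 - x : ℕ) : ℤ) = N - x := by omega
    rw [this]; ring
  rw [Finset.sum_sub_distrib, Finset.sum_sub_distrib, h2]
  simp only [Finset.sum_const, Finset.card_range, nsmul_eq_mul]
  push_cast
  linear_combination (-4) * h1 N

lemma magic_sum_outer (r : ℤ) (M : ℕ) :
    2 * ∑ N ∈ Finset.range (M + 1), (6 * (N + 1) * ((r + 1) * (r + 2) - (r - N) * (r - N + 1))
       - 4 * N * (N + 1) * (N + 2) : ℤ) =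
      2 * (2 * r + 3) * (M + 1) * (M + 2) * (2 * M + 3) - 5 * (M + 1) ^ 2 * (M + 2) ^ 2
        + 4 * (M + 1) * (M + 2) := by
  induction M with
  | zero => simp; ring
  | succ k ih => rw [Finset.sum_range_succ, mul_add, ih]; push_cast; ring

lemma count_a1 (r N : ℕ) (hN : N ≤ r) :
    12 * (∑ a1 ∈ Finset.range (r + 1), ∑ d0 ∈ Finset.range (r + 1), ∑ d1 ∈ Finset.range (r + 1),
      if ((r - N) + a1 ≤ r ∧ d0 + d1 ≤ r ∧ (r - N) + d0 ≤ r ∧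
      a1 + d1 ≤ r ∧ r ≤ (r - N) + a1 + d0 + d1) then (1 : ℤ) else 0) =
      6 * (N + 1) * ((r + 1) * (r + 2) - (r - N) * (r - N + 1)) - 4 * N * (N + 1) * (N + 2) := by
  have hsub : Finset.range (N + 1) ⊆ Finset.range (r + 1) :=
    Finset.range_subset_range.2 (by omega)
  rw [← Finset.sum_subset hsub]
  · have h := magic_sum_inner r (r - N) N
    rw [← h, show (12 : ℤ) = 6 * 2 by norm_num, mul_assoc, Finset.mul_sum]
    congr 1
    apply Finset.sum_congr rfl
    intro a1 ha1
    rw [Finset.mem_range] at ha1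
    rw [count_d r (r - N) a1 (by omega), Nat.cast_sub hN]
    ring
  · intro x _ hx
    rw [Finset.mem_range] at hx
    apply Finset.sum_eq_zero
    intro y _
    apply Finset.sum_eq_zero
    intro z _
    rw [if_neg (by omega)]

lemma magic_card (r : ℕ) :
    8 * (magicSet r).card = (r + 1) * (r + 2) * ((r + 1) ^ 2 + (r + 1) + 2) := by
  have h : ((magicSet r).card : ℤ) = ∑ N ∈ Finset.range (r + 1), ∑ a1 ∈ Finset.range (r + 1),
      ∑ d0 ∈ Finset.range (r + 1), ∑ d1 ∈ Finset.range (r + 1),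
      if ((r - N) + a1 ≤ r ∧ d0 + d1 ≤ r ∧ (r - N) + d0 ≤ r ∧
      a1 + d1 ≤ r ∧ r ≤ (r - N) + a1 + d0 + d1) then (1 : ℤ) else 0 := by
    rw [magicSet, ← Finset.sum_boole, Finset.sum_product, ← Finset.sum_range_reflect]
    apply Finset.sum_congr rfl
    intro N _
    simp only [Finset.sum_product, Nat.add_sub_cancel]
  have h2 : 12 * ((magicSet r).card : ℤ) = ∑ N ∈ Finset.range (r + 1),
      (6 * (N + 1) * ((r + 1) * (r + 2) - (r - N) * (r - N + 1))
       - 4 * N * (N + 1) * (N + 2) : ℤ) := by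
    rw [h, Finset.mul_sum]
    apply Finset.sum_congr rfl
    intro N hN
    rw [Finset.mem_range] at hN
    exact count_a1 r N (by omega)
  have h3 := magic_sum_outer r r
  rw [← h2] at h3
  zify
  linarith

/-- The number of pairs `(i, j)` with `1 ≤ i < j ≤ p² + p` and
`p ∤ C(j(p−1), i(p−1))` equals `p(p+1)(p²+p+2)/8`. -/
theorem stmt_12 (p : ℕ) (hp : p.Prime) :
    ((Finset.Icc 1 (p ^ 2 + p) ×ˢ Finset.Icc 1 (p ^ 2 + p)).filter
      (fun ij : ℕ × ℕ => ij.1 < ij.2 ∧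
        ¬ p ∣ Nat.choose (ij.2 * (p - 1)) (ij.1 * (p - 1)))).card
    = p * (p + 1) * (p ^ 2 + p + 2) / 8 := by
  obtain ⟨r, rfl⟩ : ∃ r, p = r + 1 := ⟨p - 1, by have := hp.pos; omega⟩
  simp only [Nat.add_sub_cancel]
  rw [card_eq_magic r hp]
  have := magic_card r
  rw [show r + 1 + 1 = r + 2 from rfl, ← this]
  omega
end

section
/- Let p be a prime. For each j ∈ {1, …, p²+p}, let a_{j,1}, a_{j,2}, a_{j,3} ∈ {0, …, p−1} be the base-p digits of j(p−1), i.e. j(p−1) = a_{j,1}p² + a_{j,2}p + a_{j,3}. Then Σ_{j=1}^{p²+p} (a_{j,1}+1)(a_{j,2}+1)(a_{j,3}+1) = p(p+1)²(p²+p+2)/8. -/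
lemma aux_S_s13 (a b : ℤ) (m : ℕ) :
    6 * ∑ t ∈ Finset.range m, (a + t) * (b - t)
      = 6 * a * b * m + 3 * (b - a) * m * (m - 1) - (m - 1) * m * (2 * m - 1) := by
  induction m with
  | zero => simp
  | succ m ih => rw [Finset.sum_range_succ, mul_add, ih]; push_cast; ring

lemma aux_F (P : ℤ) (n : ℕ) :
    4 * ∑ s ∈ Finset.range n, ((P - s) * ((s + 1) * (s + 2) * (s + 3)
        + (P - s) * (6 * (s + 1) * P + (P - s - 1) * (P - s - 2))) : ℤ)
      = (3 * P - 3) * n ^ 2 * (n - 1) ^ 2 + (-4 * P ^ 2 + 2 * P - 6) * (n - 1) * n * (2 * n - 1)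
        + 2 * (2 * P ^ 3 - 3 * P ^ 2 + 7 * P - 6) * n * (n - 1)
        + 4 * (P ^ 4 + 3 * P ^ 3 + 2 * P ^ 2 + 6 * P) * n := by
  induction n with
  | zero => simp
  | succ m ih => rw [Finset.sum_range_succ, mul_add, ih]; push_cast; ring

lemma aux_split (g : ℕ → ℕ) (p m : ℕ) :
    ∑ i ∈ Finset.range (p * m), g i
      = ∑ q ∈ Finset.range m, ∑ s ∈ Finset.range p, g (p * q + s) := by
  induction m with
  | zero => simp
  | succ m ih => rw [Finset.sum_range_succ, ← ih, mul_add, mul_one, Finset.sum_range_add]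

/-- The summand in terms of the digits. -/
lemma aux_digits_s13 (p N a b c : ℕ) (hb : b < p) (hc : c < p) (h : N = (a * p + b) * p + c) :
    (N / p ^ 2 + 1) * (N / p % p + 1) * (N % p + 1) = (a + 1) * (b + 1) * (c + 1) := by
  have hp : 0 < p := by omega
  have h1 : N / p = a * p + b := by
    rw [h, add_comm, Nat.add_mul_div_right _ _ hp, Nat.div_eq_of_lt hc, zero_add]
  have h2 : N % p = c := by
    rw [h, add_comm, Nat.add_mul_mod_self_right, Nat.mod_eq_of_lt hc]
  have h3 : N / p ^ 2 = a := by
    rw [pow_two, ← Nat.div_div_eq_div_mul, h1, add_comm, Nat.add_mul_div_right _ _ hp,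
      Nat.div_eq_of_lt hb, zero_add]
  rw [h3, h2, h1, add_comm (a * p), Nat.add_mul_mod_self_right, Nat.mod_eq_of_lt hb]

lemma aux_inner_s13 (p s : ℕ) (hs : s < p) :
    6 * ((∑ q ∈ Finset.range (p + 1),
      ((p * q + s + 1) * (p - 1) / p ^ 2 + 1) * ((p * q + s + 1) * (p - 1) / p % p + 1)
        * ((p * q + s + 1) * (p - 1) % p + 1) : ℕ) : ℤ)
    = ((p - s) * ((s + 1) * (s + 2) * (s + 3)
        + (p - s) * (6 * (s + 1) * p + (p - s - 1) * (p - s - 2))) : ℤ) := by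
  obtain ⟨n, rfl⟩ : ∃ n, p = s + n + 1 := ⟨p - s - 1, by omega⟩
  rw [show s + n + 1 + 1 = (s + 1) + (n + 1) by ring, Finset.sum_range_add]
  have h1 := aux_S_s13 1 (s + 1) (s + 1)
  have h2 := aux_S_s13 (s + 1) (s + n + 1) (n + 1)
  push_cast [-Nat.cast_sum] at h1 h2
  rw [Nat.cast_add, Nat.cast_sum, Nat.cast_sum]
  have e1 : ∀ q ∈ Finset.range (s + 1),
      ((((((s + n + 1) * q + s + 1) * (s + n + 1 - 1) / (s + n + 1) ^ 2 + 1) *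
        (((s + n + 1) * q + s + 1) * (s + n + 1 - 1) / (s + n + 1) % (s + n + 1) + 1)
        * (((s + n + 1) * q + s + 1) * (s + n + 1 - 1) % (s + n + 1) + 1) : ℕ)) : ℤ)
      = ((1 + q) * (s + 1 - q)) * (n + 1) := by
    intro q hq
    obtain ⟨d, rfl⟩ : ∃ d, s = q + d := ⟨s - q, by simp at hq; omega⟩
    rw [aux_digits_s13 _ _ q d n (by omega) (by omega) (by rw [Nat.add_sub_cancel]; ring)]
    push_cast; ring
  have e2 : ∀ t ∈ Finset.range (n + 1),
      ((((((s + n + 1) * (s + 1 + t) + s + 1) * (s + n + 1 - 1) / (s + n + 1) ^ 2 + 1) *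
        (((s + n + 1) * (s + 1 + t) + s + 1) * (s + n + 1 - 1) / (s + n + 1) % (s + n + 1) + 1)
        * (((s + n + 1) * (s + 1 + t) + s + 1) * (s + n + 1 - 1) % (s + n + 1) + 1) : ℕ)) : ℤ)
      = ((s + 1 + t) * (s + n + 1 - t)) * (n + 1) := by
    intro t ht
    obtain ⟨d, rfl⟩ : ∃ d, n = t + d := ⟨n - t, by simp at ht; omega⟩
    rw [aux_digits_s13 _ _ (s + t) (s + d) (t + d) (by omega) (by omega)
      (by rw [Nat.add_sub_cancel]; ring)]
    push_cast; ring
  rw [Finset.sum_congr rfl e1, Finset.sum_congr rfl e2, ← Finset.sum_mul, ← Finset.sum_mul]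
  push_cast
  linear_combination ((n : ℤ) + 1) * h1 + ((n : ℤ) + 1) * h2

/-- For each `j ∈ {1, …, p²+p}`, writing `j(p−1) = a₁p² + a₂p + a₃` in base `p`
(so `a₁ = j(p−1)/p²`, `a₂ = (j(p−1)/p) mod p`, `a₃ = j(p−1) mod p`), one has
`Σ_{j=1}^{p²+p} (a₁+1)(a₂+1)(a₃+1) = p(p+1)²(p²+p+2)/8`. -/
theorem stmt_13 (p : ℕ) (hp : p.Prime) :
    ∑ j ∈ Finset.Icc 1 (p ^ 2 + p),
      (j * (p - 1) / p ^ 2 + 1) * (j * (p - 1) / p % p + 1) * (j * (p - 1) % p + 1)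
    = p * (p + 1) ^ 2 * (p ^ 2 + p + 2) / 8 := by
  symm
  apply Nat.div_eq_of_eq_mul_right (by norm_num)
  have hI : Finset.Icc 1 (p ^ 2 + p) = Finset.Ico 1 (p * (p + 1) + 1) := by
    ext x; simp only [Finset.mem_Icc, Finset.mem_Ico]
    rw [show p * (p + 1) = p ^ 2 + p by ring]; omega
  rw [hI, Finset.sum_Ico_eq_sum_range, Nat.add_sub_cancel, aux_split, Finset.sum_comm]
  simp only [add_comm 1 (_ + _)]
  have h := aux_F p p
  rw [← Finset.sum_congr rfl (fun s hs => aux_inner_s13 p s (Finset.mem_range.1 hs)),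
    ← Finset.mul_sum, ← Nat.cast_sum] at h
  zify
  push_cast at h ⊢
  linarith
end

section
/- Let p be a prime, let m, n be positive integers, and set d = gcd(m, n), q = p^{mn/d}, α = (q−1)/(p^n−1), β = (q−1)/(p^m−1). Then the number of pairs (i, j) of natural numbers with 0 ≤ iα ≤ jβ ≤ q−1 and C(jβ, iα) ≢ 0 (mod p) equals (Σ_{i=0}^{p−1} ((i+1)^{m/d} − i^{m/d})(p−i)^{n/d})^d. -/
open Finset in
lemma core_count (p a b : ℕ) (hb : 0 < b) :
    (univ.filter (fun uv : (Fin a → Fin p) × (Fin b → Fin p) => ∀ x y, uv.1 x ≤ uv.2 y)).card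
    = ∑ i ∈ range p, ((i + 1) ^ b - i ^ b) * (p - i) ^ a := by
  classical
  haveI : Nonempty (Fin b) := ⟨⟨0, hb⟩⟩
  have h1 : (univ.filter (fun uv : (Fin a → Fin p) × (Fin b → Fin p) => ∀ x y, uv.1 x ≤ uv.2 y))
      = (univ : Finset (Fin p)).biUnion (fun c =>
        (Fintype.piFinset (fun _ : Fin a => Iic c)) ×ˢ
        ((Fintype.piFinset (fun _ : Fin b => Ici c)) \ (Fintype.piFinset (fun _ : Fin b => Ioi c)))) := by
    ext ⟨u, v⟩
    simp only [mem_filter, mem_univ, true_and, mem_biUnion, mem_product, Fintype.mem_piFinset,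
      mem_Iic, mem_sdiff, mem_Ici, mem_Ioi, not_forall, not_lt]
    constructor
    · intro h
      obtain ⟨y, hy⟩ := Finite.exists_min v
      exact ⟨v y, fun x => h x y, hy, y, le_rfl⟩
    · rintro ⟨c, hu, hv, -⟩ x y
      exact (hu x).trans (hv y)
  rw [h1, card_biUnion]
  · have h2 : ∀ c : Fin p, ((Fintype.piFinset (fun _ : Fin a => Iic c)) ×ˢ
        ((Fintype.piFinset (fun _ : Fin b => Ici c)) \
          (Fintype.piFinset (fun _ : Fin b => Ioi c)))).card
        = ((p - c) ^ b - (p - 1 - c) ^ b) * ((c : ℕ) + 1) ^ a := by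
      intro c
      rw [card_product, card_sdiff_of_subset]
      · simp [Fintype.card_piFinset, mul_comm]
      · apply Fintype.piFinset_subset
        intro _
        exact Ioi_subset_Ici_self
    rw [sum_congr rfl (fun c _ => h2 c),
      Fin.sum_univ_eq_sum_range (fun c => ((p - c) ^ b - (p - 1 - c) ^ b) * (c + 1) ^ a) p,
      ← sum_range_reflect]
    apply sum_congr rfl
    intro i hi
    have := mem_range.1 hi
    rw [show p - (p - 1 - i) = i + 1 by omega, show p - 1 - (p - 1 - i) = i by omega,
      show p - 1 - i + 1 = p - i by omega]
  · intro c _ c' _ hne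
    rw [Function.onFun, Finset.disjoint_left]
    rintro ⟨u, v⟩ h h'
    simp only [mem_product, Fintype.mem_piFinset,
      mem_Iic, mem_sdiff, mem_Ici, mem_Ioi, not_forall, not_lt] at h h'
    obtain ⟨-, h1, y, h2⟩ := h
    obtain ⟨-, h3, z, h4⟩ := h'
    exact hne (le_antisymm ((h1 z).trans h4) ((h3 y).trans h2))

open Finset in
lemma prod_count (p a b d : ℕ) (hb : 0 < b) :
    (univ.filter (fun uv : (Fin (a * d) → Fin p) × (Fin (b * d) → Fin p) =>
      ∀ (x : Fin (a * d)) (y : Fin (b * d)), (x : ℕ) % d = (y : ℕ) % d → uv.1 x ≤ uv.2 y)).card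
    = (∑ i ∈ range p, ((i + 1) ^ b - i ^ b) * (p - i) ^ a) ^ d := by
  classical
  rw [← core_count p a b hb]
  set S := (univ.filter (fun uv : (Fin a → Fin p) × (Fin b → Fin p) => ∀ x y, uv.1 x ≤ uv.2 y))
    with hS
  have : S.card ^ d = (Fintype.piFinset (fun _ : Fin d => S)).card := by
    simp [Fintype.card_piFinset]
  rw [this]
  have hmod : ∀ {c : ℕ} (z : Fin c × Fin d), ((finProdFinEquiv z : Fin (c * d)) : ℕ) % d = z.2 := by
    intro c z
    simp [finProdFinEquiv, Nat.mod_eq_of_lt z.2.2]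
  refine card_nbij'
    (fun uv k => (fun x => uv.1 (finProdFinEquiv (x, k)), fun y => uv.2 (finProdFinEquiv (y, k))))
    (fun f => (fun x => (f (finProdFinEquiv.symm x).2).1 (finProdFinEquiv.symm x).1,
      fun x => (f (finProdFinEquiv.symm x).2).2 (finProdFinEquiv.symm x).1)) ?_ ?_ ?_ ?_
  · rintro ⟨u, v⟩ h
    simp only [coe_filter, mem_univ, true_and, Set.mem_setOf_eq] at h
    simp only [mem_coe, Fintype.mem_piFinset, hS, mem_filter, mem_univ, true_and]
    intro k x y
    apply h
    rw [hmod, hmod]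
  · intro f h
    simp only [mem_coe, Fintype.mem_piFinset, hS, mem_filter, mem_univ, true_and] at h
    simp only [coe_filter, mem_univ, true_and, Set.mem_setOf_eq]
    intro x y hxy
    obtain ⟨x, rfl⟩ := finProdFinEquiv.surjective x
    obtain ⟨y, rfl⟩ := finProdFinEquiv.surjective y
    rw [hmod, hmod] at hxy
    have hxy := Fin.ext hxy
    simp only [Equiv.symm_apply_apply]
    rw [hxy]
    apply h
  · rintro ⟨u, v⟩ _
    simp only [Prod.mk.eta, Equiv.apply_symm_apply]
  · intro f _
    simp

lemma digit_rep (p n i : ℕ) (hp : 0 < p) (hn : 0 < n) (hi : i < p ^ n) (c k : ℕ) (hk : k < n * c) :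
    (i * ∑ t ∈ Finset.range c, (p ^ n) ^ t) / p ^ k % p = i / p ^ (k % n) % p := by
  induction c generalizing k with
  | zero => simp at hk
  | succ c ih =>
    have e : i * ∑ t ∈ Finset.range (c + 1), (p ^ n) ^ t
        = i + p ^ n * (i * ∑ t ∈ Finset.range c, (p ^ n) ^ t) := by
      rw [Finset.sum_range_succ']
      simp only [pow_succ, ← Finset.sum_mul]
      ring
    rw [e]
    rcases lt_or_ge k n with h | h
    · rw [Nat.mod_eq_of_lt h]
      obtain ⟨r, rfl⟩ := Nat.exists_eq_add_of_lt h
      rw [show p ^ (k + r + 1) * (i * ∑ t ∈ Finset.range c, (p ^ (k + r + 1)) ^ t)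
        = p ^ k * (p * (p ^ r * (i * ∑ t ∈ Finset.range c, (p ^ (k + r + 1)) ^ t))) by ring,
        Nat.add_mul_div_left _ _ (by positivity), Nat.add_mul_mod_self_left]
    · obtain ⟨r, rfl⟩ := Nat.exists_eq_add_of_le h
      rw [pow_add, ← Nat.div_div_eq_div_mul, Nat.add_mul_div_left _ _ (by positivity),
        Nat.div_eq_of_lt hi, zero_add, ih r (by rw [mul_add] at hk; omega), Nat.add_mod_left]

lemma lucas_dvd (p N A B : ℕ) (hp : p.Prime) (hA : A < p ^ N) (hB : B < p ^ N) :
    ¬ p ∣ Nat.choose A B ↔ ∀ k < N, B / p ^ k % p ≤ A / p ^ k % p := by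
  haveI := Fact.mk hp
  have h := Choose.choose_modEq_prod_range_choose_nat (p := p) hA hB
  rw [(h.dvd_iff dvd_rfl), hp.prime.dvd_finsetProd_iff]
  push Not
  simp only [Finset.mem_range]
  refine forall₂_congr fun k _ => ?_
  constructor
  · intro h
    by_contra hlt
    rw [Nat.choose_eq_zero_of_lt (not_le.1 hlt)] at h
    exact h (dvd_zero _)
  · intro hle hd
    have h1 := Nat.choose_mul_factorial_mul_factorial hle
    have : p ∣ (A / p ^ k % p).factorial := by
      rw [← h1, mul_assoc]; exact Dvd.dvd.mul_right hd _
    rw [hp.dvd_factorial] at this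
    exact absurd (Nat.mod_lt (A / p ^ k) hp.pos) (not_lt.2 this)

open Finset in
lemma main_count (p a b d : ℕ) (hp : p.Prime) (ha : 0 < a) (hb : 0 < b) (hd : 0 < d)
    (hab : Nat.Coprime b a) (α β q : ℕ) (hq : q = p ^ (a * b * d))
    (hα : α = ∑ t ∈ range b, (p ^ (a * d)) ^ t) (hβ : β = ∑ t ∈ range a, (p ^ (b * d)) ^ t)
    (hα1 : α * (p ^ (a * d) - 1) = q - 1) (hβ1 : β * (p ^ (b * d) - 1) = q - 1) :
    ((range q ×ˢ range q).filter
      (fun ij : ℕ × ℕ => ij.1 * α ≤ ij.2 * β ∧ ij.2 * β ≤ q - 1 ∧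
        ¬ p ∣ Nat.choose (ij.2 * β) (ij.1 * α))).card
    = (∑ i ∈ range p, ((i + 1) ^ b - i ^ b) * (p - i) ^ a) ^ d := by
  rw [← prod_count p a b d hb]
  have hp0 := hp.pos
  have had : 0 < a * d := by positivity
  have hbd : 0 < b * d := by positivity
  have hq0 : 0 < q := by rw [hq]; positivity
  have hq2 : 1 < q := by rw [hq]; exact Nat.one_lt_pow (by positivity) hp.one_lt
  have hα0 : 0 < α := by
    rcases Nat.eq_zero_or_pos α with h | h
    · rw [h] at hα1; omega
    · exact h
  have hβ0 : 0 < β := by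
    rcases Nat.eq_zero_or_pos β with h | h
    · rw [h] at hβ1; omega
    · exact h
  have hpa : 0 < p ^ (a * d) := by positivity
  have hpb : 0 < p ^ (b * d) := by positivity
  have iα : ∀ i, i * α ≤ q - 1 ↔ i < p ^ (a * d) := by
    intro i
    rw [← hα1, mul_comm i, Nat.mul_le_mul_left_iff hα0]; omega
  have jβ : ∀ i, i * β ≤ q - 1 ↔ i < p ^ (b * d) := by
    intro i
    rw [← hβ1, mul_comm i, Nat.mul_le_mul_left_iff hβ0]; omega
  have key : ∀ (u : Fin (a * d) → Fin p) (v : Fin (b * d) → Fin p),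
      (∀ (x : Fin (a * d)) (y : Fin (b * d)), (x : ℕ) % d = (y : ℕ) % d → u x ≤ v y) ↔
      ¬ p ∣ Nat.choose ((finFunctionFinEquiv v : ℕ) * β) ((finFunctionFinEquiv u : ℕ) * α) := by
    intro u v
    have hu := (finFunctionFinEquiv u).2
    have hv := (finFunctionFinEquiv v).2
    have hu' := (iα _).2 hu
    have hv' := (jβ _).2 hv
    rw [lucas_dvd p (a * b * d) _ _ hp (by rw [← hq]; omega) (by rw [← hq]; omega)]
    have du : ∀ k < a * b * d, (finFunctionFinEquiv u : ℕ) * α / p ^ k % p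
        = u ⟨k % (a * d), Nat.mod_lt _ had⟩ := by
      intro k hk
      rw [hα, digit_rep p (a * d) _ hp0 had hu b k (by linarith [mul_right_comm a b d])]
      have := finFunctionFinEquiv_symm_apply_val (finFunctionFinEquiv u) ⟨k % (a * d), Nat.mod_lt _ had⟩
      rw [Equiv.symm_apply_apply] at this
      exact this.symm
    have dv : ∀ k < a * b * d, (finFunctionFinEquiv v : ℕ) * β / p ^ k % p
        = v ⟨k % (b * d), Nat.mod_lt _ hbd⟩ := by
      intro k hk
      rw [hβ, digit_rep p (b * d) _ hp0 hbd hv a k (by linarith [mul_rotate a b d, mul_comm a (b * d), mul_assoc a b d])]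
      have := finFunctionFinEquiv_symm_apply_val (finFunctionFinEquiv v) ⟨k % (b * d), Nat.mod_lt _ hbd⟩
      rw [Equiv.symm_apply_apply] at this
      exact this.symm
    constructor
    · intro h k hk
      rw [du k hk, dv k hk]
      apply h
      simp [Nat.mod_mul_left_mod]
    · intro h x y hxy
      have hg : Nat.gcd (a * d) (b * d) = d := by
        rw [Nat.gcd_mul_right, hab.symm.gcd_eq_one, one_mul]
      have hxy' : (x : ℕ) ≡ y [MOD Nat.gcd (a * d) (b * d)] := by rw [hg]; exact hxy
      have hl : Nat.lcm (a * d) (b * d) = a * b * d := by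
        rw [Nat.lcm_mul_right, hab.symm.lcm_eq_mul]
      have hk := Nat.chineseRemainder'_lt_lcm hxy' had.ne' hbd.ne'
      obtain ⟨h1, h2⟩ := (Nat.chineseRemainder' hxy').2
      set k : ℕ := (Nat.chineseRemainder' hxy').1 with hkdef
      rw [hl] at hk
      have h3 := h k hk
      rw [du k hk, dv k hk] at h3
      have e1 : (⟨k % (a * d), Nat.mod_lt _ had⟩ : Fin (a * d)) = x :=
        Fin.ext (by have := h1; unfold Nat.ModEq at this; simpa [Nat.mod_eq_of_lt x.2] using this)
      have e2 : (⟨k % (b * d), Nat.mod_lt _ hbd⟩ : Fin (b * d)) = y :=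
        Fin.ext (by have := h2; unfold Nat.ModEq at this; simpa [Nat.mod_eq_of_lt y.2] using this)
      rw [e1, e2] at h3
      exact h3
  symm
  refine card_bij (fun uv _ => ((finFunctionFinEquiv uv.1 : ℕ), (finFunctionFinEquiv uv.2 : ℕ))) ?_ ?_ ?_
  · rintro ⟨u, v⟩ h
    simp only [mem_filter, mem_univ, true_and] at h
    have h' := (key u v).1 h
    have hu := (finFunctionFinEquiv u).2
    have hv := (finFunctionFinEquiv v).2
    have hu' := (iα _).2 hu
    have hv' := (jβ _).2 hv
    simp only [mem_filter, mem_product, mem_range]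
    have t1 := Nat.le_mul_of_pos_right (finFunctionFinEquiv u : ℕ) hα0
    have t2 := Nat.le_mul_of_pos_right (finFunctionFinEquiv v : ℕ) hβ0
    refine ⟨⟨by omega, by omega⟩, ?_, hv', h'⟩
    by_contra hlt
    rw [Nat.choose_eq_zero_of_lt (not_le.1 hlt)] at h'
    exact h' (dvd_zero _)
  · rintro ⟨u, v⟩ _ ⟨u', v'⟩ _ h
    simp only [Prod.mk.injEq] at h
    have h1 := finFunctionFinEquiv.injective (Fin.ext h.1)
    have h2 := finFunctionFinEquiv.injective (Fin.ext h.2)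
    simp [h1, h2]
  · rintro ⟨i, j⟩ h
    simp only [mem_filter, mem_product, mem_range] at h
    obtain ⟨-, h1, h2, h3⟩ := h
    have hi := (iα i).1 (h1.trans h2)
    have hj := (jβ j).1 h2
    refine ⟨(finFunctionFinEquiv.symm ⟨i, hi⟩, finFunctionFinEquiv.symm ⟨j, hj⟩), ?_, ?_⟩
    · simp only [mem_filter, mem_univ, true_and]
      rw [key, Equiv.apply_symm_apply, Equiv.apply_symm_apply]
      exact h3
    · simp only [Equiv.apply_symm_apply]

lemma geom_aux (p n c : ℕ) (hp : 1 < p) (hn : 0 < n) :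
    (p ^ (n * c) - 1) / (p ^ n - 1) = ∑ t ∈ Finset.range c, (p ^ n) ^ t ∧
    (∑ t ∈ Finset.range c, (p ^ n) ^ t) * (p ^ n - 1) = p ^ (n * c) - 1 := by
  have h1 : 1 < p ^ n := Nat.one_lt_pow hn.ne' hp
  constructor
  · rw [Nat.geomSum_eq h1, ← pow_mul]
  · rw [pow_mul]
    have := geom_sum_mul_add (p ^ n - 1) c
    rw [Nat.sub_add_cancel h1.le] at this
    omega


/-- Theorem 4.5 (`+formulas-thm1`), counting part: with `d = gcd(m,n)`, `q = p^(mn/d)`,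
`α = (q−1)/(pⁿ−1)`, `β = (q−1)/(pᵐ−1)`, the number of pairs `(i, j)` with
`iα ≤ jβ ≤ q−1` and `p ∤ C(jβ, iα)` equals
`(Σ_{i=0}^{p−1} ((i+1)^(m/d) − i^(m/d))(p−i)^(n/d))^d`. -/
theorem stmt_14 (p m n : ℕ) (hp : p.Prime) (hm : 0 < m) (hn : 0 < n)
    (d q α β : ℕ) (hd : d = Nat.gcd m n) (hq : q = p ^ (m * n / d))
    (hα : α = (q - 1) / (p ^ n - 1)) (hβ : β = (q - 1) / (p ^ m - 1)) :
    ((Finset.range q ×ˢ Finset.range q).filter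
      (fun ij : ℕ × ℕ => ij.1 * α ≤ ij.2 * β ∧ ij.2 * β ≤ q - 1 ∧
        ¬ p ∣ Nat.choose (ij.2 * β) (ij.1 * α))).card
    = (∑ i ∈ Finset.range p, ((i + 1) ^ (m / d) - i ^ (m / d)) * (p - i) ^ (n / d)) ^ d := by
  obtain ⟨b, a, hab, hmb, hna⟩ := Nat.exists_coprime m n
  rw [← hd] at hmb hna
  have hd0 : 0 < d := hd ▸ Nat.gcd_pos_of_pos_left _ hm
  clear hd
  subst hmb hna
  have ha : 0 < a := Nat.pos_of_mul_pos_right hn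
  have hb : 0 < b := Nat.pos_of_mul_pos_right hm
  have e : b * d * (a * d) / d = a * b * d := by
    rw [show b * d * (a * d) = a * b * d * d by ring, Nat.mul_div_cancel _ hd0]
  rw [e] at hq
  rw [Nat.mul_div_cancel _ hd0, Nat.mul_div_cancel _ hd0]
  obtain ⟨g1, g2⟩ := geom_aux p (a * d) b hp.one_lt hn
  obtain ⟨g3, g4⟩ := geom_aux p (b * d) a hp.one_lt hm
  rw [show a * d * b = a * b * d by ring, ← hq] at g1 g2
  rw [show b * d * a = a * b * d by ring, ← hq] at g3 g4
  rw [g1] at hα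
  rw [g3] at hβ
  exact main_count p a b d hp ha hb hd0 hab α β q hq hα hβ (hα ▸ g2) (hβ ▸ g4)
end

section
/- Let p be a prime, let u, v be positive integers, and set d = gcd(u, v), q = p^{2uv/d}, α = (q−1)/(p^u+1), β = (q−1)/(p^v+1). Then for all integers i, j with 1 ≤ i ≤ p^u, 1 ≤ j ≤ p^v, and i(p^v+1) < j(p^u+1), the binomial coefficient C(jβ, iα) is divisible by p. -/
lemma aux_S_s15 (p r x : ℕ) (hp : 1 < p) (hr : r < p) :
    (Nat.digits p (r + p * x)).sum = r + (Nat.digits p x).sum := by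
  by_cases h : r = 0 ∧ x = 0
  · obtain ⟨rfl, rfl⟩ := h
    simp
  · rw [Nat.digits_add p hp r x hr (by omega)]
    simp

lemma aux_A (p : ℕ) (hp : 1 < p) (n : ℕ) : ∀ a b : ℕ, a < p ^ n →
    (Nat.digits p (a + p ^ n * b)).sum = (Nat.digits p a).sum + (Nat.digits p b).sum := by
  induction n with
  | zero =>
    intro a b h
    have : a = 0 := by simpa using h
    subst this
    simp
  | succ n ih =>
    intro a b h
    have h1 : a % p < p := Nat.mod_lt _ (by omega)
    have h2 : a / p < p ^ n := Nat.div_lt_of_lt_mul (by rwa [pow_succ, mul_comm] at h)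
    have h3 := Nat.mod_add_div a p
    have e : a + p ^ (n + 1) * b = a % p + p * (a / p + p ^ n * b) := by
      conv_lhs => rw [← h3]
      ring
    rw [e, aux_S_s15 p _ _ hp h1, ih _ _ h2]
    conv_rhs => rw [← h3, aux_S_s15 p _ _ hp h1]
    ring

lemma aux_B (p : ℕ) (hp : 1 < p) (n : ℕ) : ∀ a b : ℕ, a + b + 1 = p ^ n →
    (Nat.digits p a).sum + (Nat.digits p b).sum = n * (p - 1) := by
  induction n with
  | zero =>
    intro a b h
    have h1 : a = 0 := by simp at h; omega
    have h2 : b = 0 := by simp at h; omega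
    subst h1 h2
    simp
  | succ n ih =>
    intro a b h
    have h1 : a % p < p := Nat.mod_lt _ (by omega)
    have h2 : a / p < p ^ n := Nat.div_lt_of_lt_mul (by rw [pow_succ, mul_comm] at h; omega)
    have h3 := Nat.mod_add_div a p
    obtain ⟨c, hc⟩ := Nat.exists_eq_add_of_lt h2
    obtain ⟨r, hr⟩ := Nat.exists_eq_add_of_lt h1
    have hb : b = r + p * c := by
      have : a + b + 1 = p * (a / p) + p * c + p := by
        rw [h, pow_succ, hc]; ring
      omega
    have ea : (Nat.digits p a).sum = a % p + (Nat.digits p (a / p)).sum := by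
      conv_lhs => rw [← h3, aux_S_s15 p _ _ hp h1]
    rw [ea, hb, aux_S_s15 p r c hp (by omega)]
    have := ih (a / p) c hc.symm
    rw [Nat.succ_mul, ← this]
    omega

lemma aux_C (p : ℕ) (hp : 1 < p) (n w : ℕ) (hw : w < p ^ n) (k : ℕ) :
    (Nat.digits p (w * ∑ i ∈ Finset.range k, (p ^ n) ^ i)).sum
      = k * (Nat.digits p w).sum := by
  induction k with
  | zero => simp
  | succ k ih =>
    have e : w * ∑ i ∈ Finset.range (k + 1), (p ^ n) ^ i
        = w + p ^ n * (w * ∑ i ∈ Finset.range k, (p ^ n) ^ i) := by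
      rw [Finset.sum_range_succ', mul_add, Finset.mul_sum, Finset.mul_sum, Finset.mul_sum,
        pow_zero, mul_one, add_comm]
      congr 1
      apply Finset.sum_congr rfl
      intros
      ring
    rw [e, aux_A p hp n _ _ hw, ih]
    ring

lemma aux_D (p : ℕ) (hp : 1 < p) (u k α : ℕ)
    (hα : α = (p ^ (2 * u * k) - 1) / (p ^ u + 1)) :
    α * (p ^ u + 1) = p ^ (2 * u * k) - 1 ∧ ∀ i, 1 ≤ i → i ≤ p ^ u →
    (Nat.digits p (i * α)).sum = u * k * (p - 1) := by
  have hP : 1 ≤ p ^ u := Nat.one_le_pow _ _ (by omega)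
  obtain ⟨c, hc⟩ := Nat.exists_eq_add_of_le hP
  have hg : (∑ i ∈ Finset.range k, (p ^ (2 * u)) ^ i) * (c * (p ^ u + 1)) + 1
      = p ^ (2 * u * k) := by
    have h1 : p ^ (2 * u) = c * (p ^ u + 1) + 1 := by
      rw [mul_comm 2 u, pow_mul, hc]; ring
    rw [pow_mul p (2 * u) k, h1]
    generalize c * (p ^ u + 1) = x
    exact geom_sum_mul_add x k
  have hα' : α = c * ∑ i ∈ Finset.range k, (p ^ (2 * u)) ^ i := by
    rw [hα]
    apply Nat.div_eq_of_eq_mul_left (by omega)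
    rw [← hg, Nat.add_sub_cancel]; ring
  refine ⟨?_, ?_⟩
  · rw [hα', ← hg, Nat.add_sub_cancel]; ring
  · intro i h1 h2
    obtain ⟨a, rfl⟩ := Nat.exists_eq_add_of_le h1
    obtain ⟨b, hb⟩ := Nat.exists_eq_add_of_le h2
    have hw : (1 + a) * c = b + p ^ u * a := by
      have : c = a + b := by omega
      rw [hb, this]; ring
    have hlt : b + p ^ u * a < p ^ (2 * u) := by
      have : p ^ (2 * u) = p ^ u * p ^ u := by rw [two_mul, pow_add]
      rw [this]
      nlinarith
    rw [hα', ← mul_assoc, hw, aux_C p hp _ _ hlt, aux_A p hp _ _ _ (by omega),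
      aux_B p hp u b a (by omega)]
    ring


/-- Theorem 4.7 (`+formulas-thm4`), key vanishing: with `d = gcd(u,v)`, `q = p^(2uv/d)`,
`α = (q−1)/(pᵘ+1)`, `β = (q−1)/(pᵛ+1)`, for all `1 ≤ i ≤ pᵘ`, `1 ≤ j ≤ pᵛ` with
`i(pᵛ+1) < j(pᵘ+1)`, the binomial coefficient `C(jβ, iα)` is divisible by `p`. -/
theorem stmt_15 (p u v : ℕ) (hp : p.Prime) (hu : 0 < u) (hv : 0 < v)
    (d q α β : ℕ) (hd : d = Nat.gcd u v) (hq : q = p ^ (2 * u * v / d))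
    (hα : α = (q - 1) / (p ^ u + 1)) (hβ : β = (q - 1) / (p ^ v + 1))
    (i j : ℕ) (hi1 : 1 ≤ i) (hi2 : i ≤ p ^ u) (hj1 : 1 ≤ j) (hj2 : j ≤ p ^ v)
    (hij : i * (p ^ v + 1) < j * (p ^ u + 1)) :
    p ∣ Nat.choose (j * β) (i * α) := by
  have hp1 := hp.one_lt
  have hdu : d ∣ u := hd ▸ Nat.gcd_dvd_left u v
  have hdv : d ∣ v := hd ▸ Nat.gcd_dvd_right u v
  have e1 : 2 * u * v / d = 2 * u * (v / d) := Nat.mul_div_assoc _ hdv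
  have e2 : 2 * u * v / d = 2 * v * (u / d) := by
    rw [← Nat.mul_div_assoc _ hdu]; congr 1; ring
  have e3 : u * (v / d) = v * (u / d) := by
    have : 2 * u * (v / d) = 2 * v * (u / d) := e1.symm.trans e2
    rw [mul_assoc, mul_assoc] at this
    omega
  have hk : 0 < v / d := Nat.div_pos (Nat.le_of_dvd hv hdv) (Nat.pos_of_dvd_of_pos hdu hu)
  obtain ⟨a1, a2⟩ := aux_D p hp1 u (v / d) α (by rw [hα, hq, e1])
  obtain ⟨b1, b2⟩ := aux_D p hp1 v (u / d) β (by rw [hβ, hq, e2])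
  rw [← e2] at b1
  rw [← e1] at a1
  have hQ : 0 < p ^ (2 * u * v / d) - 1 := by
    have : 1 < p ^ (2 * u * v / d) := Nat.one_lt_pow (by rw [e1]; positivity) hp1
    omega
  generalize p ^ (2 * u * v / d) - 1 = Q at *
  have hlt : i * α < j * β := by
    have h := Nat.mul_lt_mul_of_pos_right hij hQ
    have l : i * (p ^ v + 1) * Q = i * α * ((p ^ u + 1) * (p ^ v + 1)) := by
      rw [← a1]; ring
    have r : j * (p ^ u + 1) * Q = j * β * ((p ^ u + 1) * (p ^ v + 1)) := by
      rw [← b1]; ring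
    rw [l, r] at h
    exact lt_of_mul_lt_mul_right h (Nat.zero_le _)
  haveI : Fact p.Prime := ⟨hp⟩
  have key := sub_one_mul_padicValNat_choose_eq_sub_sum_digits (p := p) hlt.le
  rw [a2 i hi1 hi2, b2 j hj1 hj2, e3, Nat.add_sub_cancel_left] at key
  by_contra hnd
  rw [padicValNat.eq_zero_of_not_dvd hnd, mul_zero] at key
  have hne : j * β - i * α ≠ 0 := by omega
  have hz := List.sum_eq_zero_iff.mp key.symm
  exact Nat.getLast_digit_ne_zero p hne
    (hz _ (List.getLast_mem (Nat.digits_ne_nil_iff_ne_zero.mpr hne)))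
end

section
/- Let p be a prime and m, n positive integers with d = gcd(m, n) such that n/d is even. Set q = p^{mn/d}, α = (q−1)/(p^n−1), β = (q−1)/(p^m+1). Then the number of pairs (i, j) of natural numbers with 0 ≤ iα ≤ jβ ≤ q−1 and C(jβ, iα) ≢ 0 (mod p) equals (Σ_{i=0}^{p−1} ((p−i)(i+1))^{n/(2d)} + Σ_{1 ≤ j ≤ i ≤ p−1} ((j+1)^{m/d} − 2j^{m/d} + (j−1)^{m/d})((p−i)(i−j+1))^{n/(2d)})^d + p^n + 1. -/
def dig (p x t : ℕ) : ℕ := x / p ^ t % p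

theorem lucas_dig {p : ℕ} (hp : p.Prime) {x L : ℕ} (y : ℕ) (hx : x < p ^ L) (hy : y < p ^ L) :
    ¬ p ∣ Nat.choose x y ↔ ∀ t < L, dig p y t ≤ dig p x t := by
  have : Fact p.Prime := ⟨hp⟩
  have h := Choose.choose_modEq_prod_range_choose_nat (p := p) (n := x) (k := y) hx hy
  rw [Nat.ModEq.dvd_iff h (dvd_refl p), hp.prime.dvd_finsetProd_iff]
  push Not
  constructor
  · intro H t ht
    have := H t (Finset.mem_range.2 ht)
    by_contra hlt
    apply this
    rw [Nat.choose_eq_zero_of_lt (by simpa [dig] using hlt)]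
    exact dvd_zero _
  · intro H t ht hdv
    have h1 := H t (Finset.mem_range.1 ht)
    have h2 : dig p x t < p := Nat.mod_lt _ hp.pos
    have h3 : p ∣ (dig p x t).factorial := by
      rw [← Nat.choose_mul_factorial_mul_factorial h1]
      exact Dvd.dvd.mul_right (Dvd.dvd.mul_right hdv _) _
    rw [hp.dvd_factorial] at h3
    omega

theorem base_digit (P : ℕ) (f : ℕ → ℕ) (K k : ℕ) (hk : k < K) (hf : ∀ k, f k < P) :
    (∑ k ∈ Finset.range K, f k * P ^ k) / P ^ k % P = f k := by
  induction K generalizing f k with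
  | zero => omega
  | succ K ih =>
    have hP : 0 < P := lt_of_le_of_lt (Nat.zero_le _) (hf 0)
    have e : ∑ k ∈ Finset.range (K+1), f k * P ^ k
        = f 0 + P * ∑ k ∈ Finset.range K, f (k+1) * P ^ k := by
      rw [Finset.sum_range_succ', Finset.mul_sum, add_comm]
      congr 1
      · simp
      · exact Finset.sum_congr rfl fun i _ => by ring
    rw [e]
    cases k with
    | zero => simp [Nat.mod_eq_of_lt (hf 0)]
    | succ k =>
      rw [pow_succ', ← Nat.div_div_eq_div_mul, Nat.add_mul_div_left _ _ hP,
        Nat.div_eq_of_lt (hf 0), zero_add]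
      exact ih (fun k => f (k+1)) k (by omega) (fun k => hf (k+1))

theorem dig_split (p m x k r : ℕ) (hr : r < m) :
    dig p x (m * k + r) = dig p (x / (p ^ m) ^ k % p ^ m) r := by
  unfold dig
  rw [pow_add, ← Nat.div_div_eq_div_mul, pow_mul]
  generalize x / (p ^ m) ^ k = y
  obtain ⟨s, rfl⟩ : ∃ s, m = r + (s + 1) := ⟨m - r - 1, by omega⟩
  rw [pow_add, Nat.mod_mul_right_div_self, pow_succ', Nat.mod_mul_right_mod]

theorem dig_fin (p m : ℕ) (a : Fin m → Fin p) (r : Fin m) :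
    dig p (finFunctionFinEquiv a : ℕ) r = a r := by
  have := finFunctionFinEquiv.symm_apply_apply a
  have := congrArg (fun g => (g r : ℕ)) this
  simpa [dig, finFunctionFinEquiv] using this

theorem rev_fin (p m : ℕ) (a : Fin m → Fin p) :
    (finFunctionFinEquiv (fun r => (a r).rev) : ℕ) + finFunctionFinEquiv a + 1 = p ^ m := by
  rw [finFunctionFinEquiv_apply, finFunctionFinEquiv_apply, ← Finset.sum_add_distrib]
  have : ∀ i : Fin m, ((a i).rev : ℕ) * p ^ (i:ℕ) + a i * p ^ (i:ℕ) = (p - 1) * p ^ (i:ℕ) := by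
    intro i
    rw [← add_mul, Fin.val_rev]
    congr 1
    have := (a i).2
    omega
  simp_rw [this]
  rw [Fin.sum_univ_eq_sum_range (fun i => (p-1) * p ^ i), ← Finset.mul_sum]
  rcases Nat.eq_zero_or_pos p with h | h
  · subst h
    cases m with
    | zero => simp
    | succ m => exact (a 0).elim0
  · have := Nat.geomSum_eq (m := p)
    have h2 := mul_geom_sum ((p : ℤ)) m
    zify [h, Nat.one_le_iff_ne_zero]
    rw [h2]; ring

theorem sum_range_fin (p m : ℕ) (f : ℕ → ℕ) :
    ∑ c ∈ Finset.range (p ^ m), f c = ∑ c : Fin m → Fin p, f (finFunctionFinEquiv c) := by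
  rw [← Fin.sum_univ_eq_sum_range, ← finFunctionFinEquiv.sum_comp]


/-- the digit comparison condition -/
def Cond (p N M L : ℕ) [NeZero N] [NeZero M] (a : Fin N → Fin p) (c : Fin M → Fin p) : Prop :=
  ∀ t < L, a (Fin.ofNat N t) ≤
    if (t / M) % 2 = 0 then (c (Fin.ofNat M t)).rev else c (Fin.ofNat M t)

theorem alpha_dig (p n K : ℕ) [NeZero n] (a : Fin n → Fin p) (t : ℕ) (ht : t < n * K) :
    dig p ((finFunctionFinEquiv a : ℕ) * ∑ k ∈ Finset.range K, (p ^ n) ^ k) t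
      = a (Fin.ofNat n t) := by
  have h := dig_split p n ((finFunctionFinEquiv a : ℕ) * ∑ k ∈ Finset.range K, (p ^ n) ^ k)
    (t / n) (t % n) (Nat.mod_lt _ (NeZero.pos n))
  rw [Nat.div_add_mod, Finset.mul_sum, base_digit (p ^ n) (fun _ => (finFunctionFinEquiv a : ℕ)) K
    (t / n) (Nat.div_lt_of_lt_mul ht) (fun _ => (finFunctionFinEquiv a).2)] at h
  rw [Finset.mul_sum, h]
  exact dig_fin p n a (Fin.ofNat n t)

theorem beta_dig (p m K : ℕ) [NeZero m] (c : Fin m → Fin p) (t : ℕ) (ht : t < m * K) :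
    dig p (∑ k ∈ Finset.range K, (if k % 2 = 0 then
        (finFunctionFinEquiv (fun r => (c r).rev) : ℕ) else finFunctionFinEquiv c) * (p ^ m) ^ k) t
      = (if (t / m) % 2 = 0 then (c (Fin.ofNat m t)).rev else c (Fin.ofNat m t) : Fin p) := by
  have h := dig_split p m (∑ k ∈ Finset.range K, (if k % 2 = 0 then
        (finFunctionFinEquiv (fun r => (c r).rev) : ℕ) else finFunctionFinEquiv c) * (p ^ m) ^ k)
    (t / m) (t % m) (Nat.mod_lt _ (NeZero.pos m))
  rw [Nat.div_add_mod, base_digit (p ^ m) (fun k => (if k % 2 = 0 then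
        (finFunctionFinEquiv (fun r => (c r).rev) : ℕ) else finFunctionFinEquiv c)) K
    (t / m) (Nat.div_lt_of_lt_mul ht) (fun k => by
      split_ifs
      · exact (finFunctionFinEquiv (fun r => (c r).rev)).2
      · exact (finFunctionFinEquiv c).2)] at h
  rw [h]
  split_ifs
  · exact dig_fin p m (fun r => (c r).rev) (Fin.ofNat m t)
  · exact dig_fin p m c (Fin.ofNat m t)

theorem alt_sum (P c c' h : ℕ) (hc : c' + c + 1 = P) :
    (P + 1) * (∑ k ∈ Finset.range (2 * h), (if k % 2 = 0 then c' else c) * P ^ k) + (c + 1)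
      = (c + 1) * P ^ (2 * h) := by
  induction h with
  | zero => simp
  | succ h ih =>
    rw [mul_add, mul_one, Finset.sum_range_succ, Finset.sum_range_succ]
    have e1 : (2 * h) % 2 = 0 := by omega
    have e2 : (2 * h + 1) % 2 ≠ 0 := by omega
    rw [if_pos e1, if_neg e2, mul_add, mul_add, add_right_comm, add_right_comm _ _ (c+1), ih]
    subst hc
    ring

theorem beta_sum (p m h β : ℕ) (hβ : (p ^ m + 1) * β + 1 = p ^ (m * (2 * h)))
    (c : Fin m → Fin p) :
    ((finFunctionFinEquiv c : ℕ) + 1) * β = ∑ k ∈ Finset.range (2 * h), (if k % 2 = 0 then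
        (finFunctionFinEquiv (fun r => (c r).rev) : ℕ) else finFunctionFinEquiv c) * (p ^ m) ^ k := by
  have h1 := alt_sum (p ^ m) (finFunctionFinEquiv c) (finFunctionFinEquiv (fun r => (c r).rev)) h
    (rev_fin p m c)
  rw [← pow_mul, ← hβ] at h1
  apply Nat.eq_of_mul_eq_mul_left (Nat.succ_pos (p ^ m))
  have : (p ^ m + 1) * (((finFunctionFinEquiv c : ℕ) + 1) * β) + ((finFunctionFinEquiv c : ℕ) + 1)
    = ((finFunctionFinEquiv c : ℕ) + 1) * ((p ^ m + 1) * β + 1) := by ring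
  rw [← h1] at this
  exact Nat.add_right_cancel this

open Classical in
theorem count_total (p m n h K α β L : ℕ) [NeZero m] [NeZero n] (hp : p.Prime)
    (hL1 : L = m * (2 * h)) (hL2 : L = n * K) (hL0 : 0 < L)
    (hα : (p ^ n - 1) * α + 1 = p ^ L) (hβ : (p ^ m + 1) * β + 1 = p ^ L) :
    ((Finset.range (p ^ L) ×ˢ Finset.range (p ^ L)).filter
      (fun ij : ℕ × ℕ => ij.1 * α ≤ ij.2 * β ∧ ij.2 * β ≤ p ^ L - 1 ∧
        ¬ p ∣ Nat.choose (ij.2 * β) (ij.1 * α))).card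
    = (∑ c : Fin m → Fin p, ∑ a : Fin n → Fin p, if Cond p n m L a c then 1 else 0)
      + p ^ n + 1 := by
  have hp1 := hp.one_lt
  have hq1 : 1 < p ^ L := Nat.one_lt_pow hL0.ne' hp1
  have hn1 : 1 < p ^ n := Nat.one_lt_pow (NeZero.ne n) hp1
  have hm1 : 1 < p ^ m := Nat.one_lt_pow (NeZero.ne m) hp1
  have hαs : α = ∑ k ∈ Finset.range K, (p ^ n) ^ k := by
    have := Nat.geomSum_eq (m := p ^ n) hn1 K
    rw [this, ← pow_mul, ← hL2, ← hα, Nat.add_sub_cancel,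
      Nat.mul_div_cancel_left _ (by omega)]
  have hα0 : 0 < α := by
    rcases Nat.eq_zero_or_pos α with h | h
    · subst h; omega
    · exact h
  have hβ0 : 0 < β := by
    rcases Nat.eq_zero_or_pos β with h | h
    · subst h; omega
    · exact h
  have hnL : p ^ n ≤ p ^ L := by nlinarith [Nat.sub_add_cancel hn1.le]
  have hβ1 : p ^ m + 2 ≤ p ^ L := by nlinarith
  have hjβ : ∀ j, j * β ≤ p ^ L - 1 ↔ j < p ^ m + 2 := by
    intro j
    rw [← hβ, Nat.add_sub_cancel, Nat.mul_le_mul_right_iff hβ0]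
    omega
  have hiα : ∀ i, i * α ≤ p ^ L - 1 ↔ i < p ^ n := by
    intro j
    rw [← hα, Nat.add_sub_cancel, Nat.mul_le_mul_right_iff hα0]
    omega
  have hset : ((Finset.range (p ^ L) ×ˢ Finset.range (p ^ L)).filter
      (fun ij : ℕ × ℕ => ij.1 * α ≤ ij.2 * β ∧ ij.2 * β ≤ p ^ L - 1 ∧
        ¬ p ∣ Nat.choose (ij.2 * β) (ij.1 * α)))
      = (Finset.range (p ^ n) ×ˢ Finset.range (p ^ m + 2)).filter
        (fun ij : ℕ × ℕ => ¬ p ∣ Nat.choose (ij.2 * β) (ij.1 * α)) := by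
    ext ⟨i, j⟩
    simp only [Finset.mem_filter, Finset.mem_product, Finset.mem_range]
    constructor
    · rintro ⟨_, h1, h2, h3⟩
      exact ⟨⟨(hiα i).1 (h1.trans h2), (hjβ j).1 h2⟩, h3⟩
    · rintro ⟨⟨h1, h2⟩, h3⟩
      refine ⟨⟨by omega, by omega⟩, ?_, (hjβ j).2 h2, h3⟩
      by_contra hlt
      apply h3
      rw [Nat.choose_eq_zero_of_lt (by omega)]
      exact dvd_zero _
  rw [hset, Finset.card_filter, Finset.sum_product_right, Finset.sum_range_succ,
    Finset.sum_range_succ']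
  have e1 : (∑ x ∈ Finset.range (p ^ n), if ¬p ∣ ((p ^ m + 1) * β).choose (x * α) then 1 else 0)
      = p ^ n := by
    rw [Finset.sum_congr rfl (g := fun _ => 1)]
    · simp
    intro x hx
    rw [if_pos]
    have hx' := (hiα x).2 (Finset.mem_range.1 hx)
    rw [lucas_dig hp (L := L) _ (by omega) (by omega)]
    intro t ht
    have h1 : (p ^ m + 1) * β = ∑ k ∈ Finset.range L, (p - 1) * p ^ k := by
      rw [← Finset.mul_sum, Nat.geomSum_eq hp1, Nat.mul_div_cancel']
      · omega
      · simpa using Nat.sub_dvd_pow_sub_pow p 1 L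
    have h2 : dig p ((p ^ m + 1) * β) t = p - 1 := by
      rw [h1]
      exact base_digit p (fun _ => p - 1) L t ht (fun _ => by omega)
    have h3 : dig p (x * α) t < p := Nat.mod_lt _ hp.pos
    omega
  have e0 : (∑ x ∈ Finset.range (p ^ n), if ¬p ∣ (0 * β).choose (x * α) then 1 else 0)
      = 1 := by
    rw [Finset.sum_eq_single 0]
    · simp [hp.one_lt.ne']
    · intro b _ hb
      rw [zero_mul, Nat.choose_eq_zero_of_lt (by positivity)]
      simp
    · intro h; simp at h; omega
  rw [e1, e0]
  have e2 : (∑ k ∈ Finset.range (p ^ m), ∑ x ∈ Finset.range (p ^ n),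
      if ¬p ∣ ((k + 1) * β).choose (x * α) then 1 else 0)
      = ∑ c : Fin m → Fin p, ∑ a : Fin n → Fin p, if Cond p n m L a c then 1 else 0 := by
    rw [sum_range_fin]
    refine Finset.sum_congr rfl fun c _ => ?_
    rw [sum_range_fin]
    refine Finset.sum_congr rfl fun a _ => ?_
    have hx' := (hiα _).2 (finFunctionFinEquiv a).2
    have hy' := (hjβ ((finFunctionFinEquiv c : ℕ) + 1)).2
      (by have := (finFunctionFinEquiv c).2; omega)
    have : (¬p ∣ (((finFunctionFinEquiv c : ℕ) + 1) * β).choose ((finFunctionFinEquiv a : ℕ) * α))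
        ↔ Cond p n m L a c := by
      rw [lucas_dig hp (L := L) _ (by omega) (by omega), Cond]
      refine forall_congr' fun t => forall_congr' fun ht => ?_
      rw [hαs, alpha_dig p n K a t (hL2 ▸ ht), beta_sum p m h β (hL1 ▸ hβ) c,
        beta_dig p m _ c t (hL1 ▸ ht), Fin.le_def]
    simp only [this]
  rw [e2]
  ring

/-- splitting an index by its residue modulo `d` -/
def splitE (p N d : ℕ) : (Fin (N * d) → Fin p) ≃ (Fin d → Fin N → Fin p) where
  toFun a r k := a (finProdFinEquiv (k, r))
  invFun b u := b (finProdFinEquiv.symm u).2 (finProdFinEquiv.symm u).1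
  left_inv a := by
    funext u
    exact congrArg a (finProdFinEquiv.apply_symm_apply u)
  right_inv b := by
    funext r k
    dsimp only
    rw [finProdFinEquiv.symm_apply_apply]

theorem ofNat_split (N d : ℕ) [NeZero N] [NeZero d] [NeZero (N * d)] (r : Fin d) (T : ℕ) :
    Fin.ofNat (N * d) (r + d * T) = finProdFinEquiv (Fin.ofNat N T, r) := by
  apply Fin.ext
  simp only [Fin.val_ofNat, finProdFinEquiv_apply_val]
  rw [mul_comm N d, Nat.mod_mul, Nat.add_mul_mod_self_left, Nat.mod_eq_of_lt r.2,
    Nat.add_mul_div_left _ _ (NeZero.pos d), Nat.div_eq_of_lt r.2, zero_add]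

theorem cond_split (p N M d : ℕ) [NeZero N] [NeZero M] [NeZero d] [NeZero (N * d)]
    [NeZero (M * d)] (a : Fin (N * d) → Fin p) (c : Fin (M * d) → Fin p) :
    Cond p (N * d) (M * d) (N * M * d) a c ↔
      ∀ r, Cond p N M (N * M) (splitE p N d a r) (splitE p M d c r) := by
  have hd : 0 < d := NeZero.pos d
  have key : ∀ (r : Fin d) (T : ℕ), ((r : ℕ) + d * T) / (M * d) = T / M := by
    intro r T
    rw [mul_comm M d, ← Nat.div_div_eq_div_mul, Nat.add_mul_div_left _ _ hd,
      Nat.div_eq_of_lt r.2, zero_add]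
  have hlt : ∀ (r : Fin d) (T : ℕ), (r : ℕ) + d * T < N * M * d ↔ T < N * M := by
    intro r T
    have := r.2
    constructor
    · intro h
      by_contra h2
      have : N * M ≤ T := by omega
      have := Nat.mul_le_mul_left d this
      have e : d * (N * M) = N * M * d := by ring
      omega
    · intro h
      have : T + 1 ≤ N * M := h
      have := Nat.mul_le_mul_left d this
      have e : d * (N * M) = N * M * d := by ring
      have e' : d * (T + 1) = d * T + d := by ring
      omega
  constructor
  · intro H r T hT
    have := H (r + d * T) ((hlt r T).2 hT)
    rw [key, ofNat_split, ofNat_split] at this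
    exact this
  · intro H t ht
    obtain ⟨r, T, rfl⟩ : ∃ (r : Fin d) (T : ℕ), t = r + d * T :=
      ⟨⟨t % d, Nat.mod_lt _ hd⟩, t / d, (Nat.mod_add_div t d).symm⟩
    have := H r T ((hlt r T).1 ht)
    rw [key, ofNat_split, ofNat_split]
    exact this

open Classical in
theorem count_pow (p N M d : ℕ) [NeZero N] [NeZero M] [NeZero d] [NeZero (N * d)]
    [NeZero (M * d)] :
    (∑ c : Fin (M * d) → Fin p, ∑ a : Fin (N * d) → Fin p,
      if Cond p (N * d) (M * d) (N * M * d) a c then 1 else 0)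
    = (∑ c : Fin M → Fin p, ∑ a : Fin N → Fin p, if Cond p N M (N * M) a c then 1 else 0) ^ d := by
  rw [← Fintype.sum_prod_type', ← Fintype.sum_prod_type', ← Finset.card_filter,
    ← Finset.card_filter]
  have : (Finset.univ.filter (fun x : (Fin M → Fin p) × (Fin N → Fin p) =>
      Cond p N M (N * M) x.2 x.1)).card ^ d
      = (Fintype.piFinset (fun _ : Fin d =>
        (Finset.univ.filter (fun x : (Fin M → Fin p) × (Fin N → Fin p) =>
      Cond p N M (N * M) x.2 x.1)))).card := by
    rw [Fintype.card_piFinset]; simp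
  rw [this]
  apply Finset.card_equiv (((splitE p M d).prodCongr (splitE p N d)).trans
    (Equiv.arrowProdEquivProdArrow (Fin d) (fun _ => Fin M → Fin p) (fun _ => Fin N → Fin p)).symm)
  rintro ⟨c, a⟩
  simp only [Finset.mem_filter, Finset.mem_univ, true_and, Fintype.mem_piFinset]
  rw [cond_split]
  rfl

/-- twisting -/
def tw {p M : ℕ} (c : Fin M → Fin p) : Fin M → Fin p :=
  fun l => if (l : ℕ) % 2 = 0 then c l else (c l).rev

theorem tw_tw {p M : ℕ} (c : Fin M → Fin p) : tw (tw c) = c := by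
  funext l
  unfold tw
  split_ifs <;> simp

theorem cond_coprime (p h M : ℕ) [NeZero (2 * h)] [NeZero M] (hc : Nat.Coprime (2 * h) M)
    (a : Fin (2 * h) → Fin p) (c : Fin M → Fin p) :
    Cond p (2 * h) M (2 * h * M) a c ↔
      ∀ u l, a u ≤ if (u : ℕ) % 2 = 0 then (tw c l).rev else tw c l := by
  have hodd : M % 2 = 1 := by
    have : Nat.Coprime 2 M := Nat.Coprime.coprime_mul_right hc
    exact Nat.odd_iff.1 ((Nat.coprime_two_left).1 this)
  have key : ∀ t, (if (t / M) % 2 = 0 then (c (Fin.ofNat M t)).rev else c (Fin.ofNat M t))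
      = if ((Fin.ofNat (2 * h) t : Fin (2 * h)) : ℕ) % 2 = 0 then (tw c (Fin.ofNat M t)).rev
        else tw c (Fin.ofNat M t) := by
    intro t
    have h1 := Nat.div_add_mod t M
    have h2 : (M * (t / M)) % 2 = (t / M) % 2 := by
      rw [Nat.mul_mod, hodd]; simp
    have h3 : t % (2 * h) % 2 = t % 2 := Nat.mod_mul_right_mod t 2 h
    simp only [tw, Fin.val_ofNat, h3]
    split_ifs <;> first | rfl | (exfalso; omega) | simp
  constructor
  · intro H u l
    have hlt := Nat.chineseRemainder_lt_mul hc u l (NeZero.ne _) (NeZero.ne _)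
    obtain ⟨h1, h2⟩ := (Nat.chineseRemainder hc (u : ℕ) (l : ℕ)).2
    have := H _ hlt
    rw [key] at this
    have e1 : Fin.ofNat (2 * h) (Nat.chineseRemainder hc (u : ℕ) (l : ℕ) : ℕ) = u := by
      apply Fin.ext
      rw [Fin.val_ofNat, h1, Nat.mod_eq_of_lt u.2]
    have e2 : Fin.ofNat M (Nat.chineseRemainder hc (u : ℕ) (l : ℕ) : ℕ) = l := by
      apply Fin.ext
      rw [Fin.val_ofNat, h2, Nat.mod_eq_of_lt l.2]
    rw [e1, e2] at this
    exact this
  · intro H t _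
    rw [key]
    exact H _ _

/-- maximum value -/
def mx {p M : ℕ} [NeZero M] (c : Fin M → Fin p) : ℕ :=
  Finset.univ.sup' Finset.univ_nonempty (fun l => (c l : ℕ))

/-- minimum value -/
def mn {p M : ℕ} [NeZero M] (c : Fin M → Fin p) : ℕ :=
  Finset.univ.inf' Finset.univ_nonempty (fun l => (c l : ℕ))

theorem mx_le {p M : ℕ} [NeZero M] (c : Fin M → Fin p) (k : ℕ) :
    mx c ≤ k ↔ ∀ l, (c l : ℕ) ≤ k := by
  simp [mx]

theorem le_mn {p M : ℕ} [NeZero M] (c : Fin M → Fin p) (k : ℕ) :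
    k ≤ mn c ↔ ∀ l, k ≤ (c l : ℕ) := by
  simp [mn]

theorem mx_lt {p M : ℕ} [NeZero M] (c : Fin M → Fin p) : mx c < p := by
  simp [mx]

theorem mn_le_mx {p M : ℕ} [NeZero M] (c : Fin M → Fin p) : mn c ≤ mx c :=
  ((le_mn c _).1 le_rfl 0).trans ((mx_le c _).1 le_rfl 0)

theorem card_box (p s t : ℕ) (ht : t ≤ p) :
    (Finset.univ.filter (fun x : Fin p => s ≤ (x : ℕ) ∧ (x : ℕ) < t)).card = t - s := by
  rw [← Nat.card_Ico, ← Finset.card_map Fin.valEmbedding]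
  congr 1
  ext x
  simp only [Finset.mem_map, Finset.mem_filter, Finset.mem_univ, true_and, Fin.valEmbedding_apply,
    Finset.mem_Ico]
  constructor
  · rintro ⟨y, hy, rfl⟩; exact hy
  · intro hx; exact ⟨⟨x, by omega⟩, hx, rfl⟩

theorem prod_alt (h A B : ℕ) :
    (∏ u : Fin (2 * h), if (u : ℕ) % 2 = 0 then A else B) = (A * B) ^ h := by
  rw [Fin.prod_univ_eq_prod_range (fun u => if u % 2 = 0 then A else B)]
  induction h with
  | zero => simp
  | succ h ih =>
    rw [mul_add, mul_one, Finset.prod_range_succ, Finset.prod_range_succ, ih, if_pos (by omega),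
      if_neg (by omega)]
    ring

open Classical in
theorem count_coprime (p h M : ℕ) [NeZero (2 * h)] [NeZero M] (hc : Nat.Coprime (2 * h) M) :
    (∑ c : Fin M → Fin p, ∑ a : Fin (2 * h) → Fin p,
      if Cond p (2 * h) M (2 * h * M) a c then 1 else 0)
    = ∑ c : Fin M → Fin p, ((p - mx c) * (mn c + 1)) ^ h := by
  have e : ∀ f : (Fin M → Fin p) → ℕ, ∑ c, f (tw c) = ∑ c, f c := fun f =>
    Equiv.sum_comp (Function.Involutive.toPerm tw tw_tw) f
  simp_rw [cond_coprime p h M hc]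
  rw [e (fun c => ∑ a : Fin (2 * h) → Fin p,
    if (∀ u l, a u ≤ if (u : ℕ) % 2 = 0 then (c l).rev else c l) then 1 else 0)]
  refine Finset.sum_congr rfl fun c _ => ?_
  rw [← Finset.card_filter]
  have : (Finset.univ.filter (fun a : Fin (2 * h) → Fin p =>
      ∀ u l, a u ≤ if (u : ℕ) % 2 = 0 then (c l).rev else c l))
      = Fintype.piFinset (fun u : Fin (2 * h) => Finset.univ.filter
        (fun x : Fin p => ∀ l, x ≤ if (u : ℕ) % 2 = 0 then (c l).rev else c l)) := by
    ext a
    simp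
  rw [this, Fintype.card_piFinset, ← prod_alt]
  refine Finset.prod_congr rfl fun u _ => ?_
  have hmx := mx_lt c
  have hmn := mn_le_mx c
  split_ifs with hu
  · have := card_box p 0 (p - mx c) (by omega)
    rw [Nat.sub_zero] at this
    rw [← this]
    congr 1
    ext x
    simp only [Finset.mem_filter, Finset.mem_univ, true_and, Fin.le_def, Fin.val_rev]
    have h1 := mx_le c (p - 1 - x)
    have h2 := x.2
    have h3 : (∀ l, (x : ℕ) ≤ p - (c l + 1)) ↔ ∀ l, (c l : ℕ) ≤ p - 1 - x :=
      forall_congr' fun l => by have := (c l).2; omega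
    rw [h3, ← h1]
    omega
  · have := card_box p 0 (mn c + 1) (by omega)
    rw [Nat.sub_zero] at this
    rw [← this]
    congr 1
    ext x
    simp only [Finset.mem_filter, Finset.mem_univ, true_and, Fin.le_def]
    rw [← le_mn]
    omega

theorem card_cube (p M s t : ℕ) (ht : t ≤ p) :
    (Finset.univ.filter (fun c : Fin M → Fin p => ∀ l, s ≤ (c l : ℕ) ∧ (c l : ℕ) < t)).card
      = (t - s) ^ M := by
  have : (Finset.univ.filter (fun c : Fin M → Fin p => ∀ l, s ≤ (c l : ℕ) ∧ (c l : ℕ) < t))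
    = Fintype.piFinset (fun _ : Fin M => Finset.univ.filter
        (fun x : Fin p => s ≤ (x : ℕ) ∧ (x : ℕ) < t)) := by
    ext a; simp
  rw [this, Fintype.card_piFinset]
  simp [card_box p s t ht]

theorem card_mm (p M s t : ℕ) [NeZero M] (ht : t ≤ p) :
    (Finset.univ.filter (fun c : Fin M → Fin p => s ≤ mn c ∧ mx c < t)).card
      = (t - s) ^ M := by
  rw [← card_cube p M s t ht]
  congr 1
  ext c
  simp only [Finset.mem_filter, Finset.mem_univ, true_and, le_mn, forall_and]
  refine and_congr_right fun _ => ?_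
  cases t with
  | zero => exact ⟨fun h => absurd h (Nat.not_lt_zero _), fun h => absurd (h 0) (Nat.not_lt_zero _)⟩
  | succ t => simp only [Nat.lt_succ_iff, mx_le]

theorem card_eq_mm (p M s t : ℕ) [NeZero M] (hst : s < t) (ht : t < p) :
    ((Finset.univ.filter (fun c : Fin M → Fin p => mn c = s ∧ mx c = t)).card : ℤ)
      = ((t : ℤ) - s + 1) ^ M - 2 * ((t : ℤ) - s) ^ M + ((t : ℤ) - s - 1) ^ M := by
  have h1 := card_mm p M s (t + 1) ht
  have h2 := card_mm p M (s + 1) (t + 1) ht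
  have h3 := card_mm p M s t ht.le
  have h4 := card_mm p M (s + 1) t ht.le
  have e : ((Finset.univ.filter (fun c : Fin M → Fin p => mn c = s ∧ mx c = t)).card : ℤ)
    = (Finset.univ.filter (fun c : Fin M → Fin p => s ≤ mn c ∧ mx c < t + 1)).card
    - (Finset.univ.filter (fun c : Fin M → Fin p => s + 1 ≤ mn c ∧ mx c < t + 1)).card
    - (Finset.univ.filter (fun c : Fin M → Fin p => s ≤ mn c ∧ mx c < t)).card
    + (Finset.univ.filter (fun c : Fin M → Fin p => s + 1 ≤ mn c ∧ mx c < t)).card := by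
    simp only [Finset.card_filter]
    push_cast
    rw [← Finset.sum_sub_distrib, ← Finset.sum_sub_distrib, ← Finset.sum_add_distrib]
    refine Finset.sum_congr rfl fun c _ => ?_
    split_ifs <;> first | rfl | omega
  rw [e, h1, h2, h3, h4]
  push_cast [Nat.cast_sub (show s ≤ t + 1 by omega), Nat.cast_sub (show s + 1 ≤ t + 1 by omega),
    Nat.cast_sub hst.le, Nat.cast_sub (show s + 1 ≤ t by omega)]
  ring

theorem card_eq_mm_diag (p M s : ℕ) [NeZero M] (hs : s < p) :
    (Finset.univ.filter (fun c : Fin M → Fin p => mn c = s ∧ mx c = s)).card = 1 := by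
  have h1 := card_mm p M s (s + 1) hs
  rw [Nat.add_sub_cancel_left, one_pow] at h1
  rw [← h1]
  congr 1
  ext c
  have := mn_le_mx c
  simp only [Finset.mem_filter, Finset.mem_univ, true_and]
  omega

theorem sum_mm (p M : ℕ) [NeZero M] (F : ℕ → ℕ → ℤ) :
    ∑ c : Fin M → Fin p, F (mx c) (mn c)
      = ∑ i ∈ Finset.range p, F i i
        + ∑ i ∈ Finset.Icc 1 (p - 1), ∑ j ∈ Finset.Icc 1 i,
          (((j : ℤ) + 1) ^ M - 2 * (j : ℤ) ^ M + ((j : ℤ) - 1) ^ M) * F i (i - j) := by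
  have e1 : ∑ c : Fin M → Fin p, F (mx c) (mn c)
      = ∑ i ∈ Finset.range p, ∑ j ∈ Finset.range (i + 1),
        ((Finset.univ.filter (fun c : Fin M → Fin p => mn c = i - j ∧ mx c = i)).card : ℤ)
          * F i (i - j) := by
    have : ∀ c : Fin M → Fin p, F (mx c) (mn c)
        = ∑ i ∈ Finset.range p, ∑ j ∈ Finset.range (i + 1),
          if mn c = i - j ∧ mx c = i then F i (i - j) else 0 := by
      intro c
      have h1 := mx_lt c
      have h2 := mn_le_mx c
      rw [Finset.sum_eq_single (mx c), Finset.sum_eq_single (mx c - mn c)]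
      · rw [if_pos ⟨by omega, rfl⟩]
        congr 1
        omega
      · intro j hj hne
        rw [if_neg]
        have := Finset.mem_range.1 hj
        omega
      · intro hj
        exact absurd (Finset.mem_range.2 (by omega)) hj
      · intro i _ hne
        refine Finset.sum_eq_zero fun j _ => ?_
        rw [if_neg]
        omega
      · intro hj
        exact absurd (Finset.mem_range.2 h1) hj
    rw [Finset.sum_congr rfl fun c _ => this c, Finset.sum_comm]
    refine Finset.sum_congr rfl fun i _ => ?_
    rw [Finset.sum_comm]
    refine Finset.sum_congr rfl fun j _ => ?_
    rw [← Finset.sum_filter, Finset.sum_const, nsmul_eq_mul]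
  rw [e1]
  have e2 : ∀ i ∈ Finset.range p, ∑ j ∈ Finset.range (i + 1),
        ((Finset.univ.filter (fun c : Fin M → Fin p => mn c = i - j ∧ mx c = i)).card : ℤ)
          * F i (i - j)
      = F i i + ∑ j ∈ Finset.Icc 1 i,
          (((j : ℤ) + 1) ^ M - 2 * (j : ℤ) ^ M + ((j : ℤ) - 1) ^ M) * F i (i - j) := by
    intro i hi
    have hi' := Finset.mem_range.1 hi
    have : Finset.range (i + 1) = insert 0 (Finset.Icc 1 i) := by
      ext x; simp only [Finset.mem_range, Finset.mem_insert, Finset.mem_Icc]; omega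
    rw [this, Finset.sum_insert (by simp), Nat.sub_zero, card_eq_mm_diag p M i hi', Nat.cast_one,
      one_mul]
    congr 1
    refine Finset.sum_congr rfl fun j hj => ?_
    obtain ⟨h1, h2⟩ := Finset.mem_Icc.1 hj
    rw [card_eq_mm p M (i - j) i (by omega) hi', Nat.cast_sub h2]
    congr 1
    ring
  rw [Finset.sum_congr rfl e2, Finset.sum_add_distrib]
  congr 1
  symm
  apply Finset.sum_subset
  · intro x hx
    have := Finset.mem_Icc.1 hx
    exact Finset.mem_range.2 (by omega)
  · intro x hx hx2
    have h1 := Finset.mem_range.1 hx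
    have : x = 0 := by
      by_contra h
      exact hx2 (Finset.mem_Icc.2 (by omega))
    subst this
    simp

/-- Theorem 4.8 (i), counting part, `n/d` even: with `d = gcd(m,n)`, `q = p^(mn/d)`,
`α = (q−1)/(pⁿ−1)`, `β = (q−1)/(pᵐ+1)`, the number of pairs `(i, j)` with
`iα ≤ jβ ≤ q−1` and `p ∤ C(jβ, iα)` equals
`(Σ_{i=0}^{p−1} ((p−i)(i+1))^(n/2d) + Σ_{1≤j≤i≤p−1} ((j+1)^(m/d) − 2j^(m/d) + (j−1)^(m/d))
   ((p−i)(i−j+1))^(n/2d))^d + pⁿ + 1`. -/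
theorem stmt_16 (p m n : ℕ) (hp : p.Prime) (hm : 0 < m) (hn : 0 < n)
    (d q α β : ℕ) (hd : d = Nat.gcd m n) (heven : Even (n / d))
    (hq : q = p ^ (m * n / d))
    (hα : α = (q - 1) / (p ^ n - 1)) (hβ : β = (q - 1) / (p ^ m + 1)) :
    (((Finset.range q ×ˢ Finset.range q).filter
      (fun ij : ℕ × ℕ => ij.1 * α ≤ ij.2 * β ∧ ij.2 * β ≤ q - 1 ∧
        ¬ p ∣ Nat.choose (ij.2 * β) (ij.1 * α))).card : ℤ)
    = (∑ i ∈ Finset.range p, (((p : ℤ) - (i : ℤ)) * ((i : ℤ) + 1)) ^ (n / (2 * d))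
        + ∑ i ∈ Finset.Icc 1 (p - 1), ∑ j ∈ Finset.Icc 1 i,
            (((j : ℤ) + 1) ^ (m / d) - 2 * (j : ℤ) ^ (m / d) + ((j : ℤ) - 1) ^ (m / d))
              * (((p : ℤ) - (i : ℤ)) * ((i : ℤ) - (j : ℤ) + 1)) ^ (n / (2 * d))) ^ d
      + (p : ℤ) ^ n + 1 := by
  have hd0 : 0 < d := hd ▸ Nat.gcd_pos_of_pos_left n hm
  obtain ⟨M, hM⟩ : d ∣ m := hd ▸ Nat.gcd_dvd_left m n
  obtain ⟨N, hN⟩ : d ∣ n := hd ▸ Nat.gcd_dvd_right m n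
  have hmM : m = M * d := by rw [hM, mul_comm]
  have hnN : n = N * d := by rw [hN, mul_comm]
  have hMd : m / d = M := by rw [hM, Nat.mul_div_cancel_left _ hd0]
  have hNd : n / d = N := by rw [hN, Nat.mul_div_cancel_left _ hd0]
  rw [hNd] at heven
  obtain ⟨h, hh⟩ := heven
  have hh : N = 2 * h := by omega
  have hhd : n / (2 * d) = h := by
    rw [hnN, hh]
    exact Nat.div_eq_of_eq_mul_left (by omega) (by ring)
  have hcop : Nat.Coprime N M := by
    have := Nat.coprime_div_gcd_div_gcd (m := m) (n := n) (hd ▸ hd0)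
    rw [← hd, hMd, hNd] at this
    exact this.symm
  have hM0 : M ≠ 0 := by rintro rfl; simp at hmM; omega
  have hN0 : N ≠ 0 := by rintro rfl; simp at hnN; omega
  have hL : m * n / d = N * M * d := by
    rw [hmM, hN, mul_left_comm, Nat.mul_div_cancel_left _ hd0]
    ring
  rw [hL] at hq
  rw [hMd, hhd]
  have hp1 := hp.one_lt
  have hL0 : 0 < N * M * d := by positivity
  have hqpos : 0 < q := hq ▸ Nat.pow_pos hp.pos
  have hα' : (p ^ n - 1) * α + 1 = p ^ (N * M * d) := by
    have : p ^ n - 1 ∣ q - 1 := by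
      rw [hq, show N * M * d = n * M by rw [hnN]; ring, pow_mul]
      simpa using Nat.sub_dvd_pow_sub_pow (p ^ n) 1 M
    rw [hα, Nat.mul_div_cancel' this, ← hq]
    omega
  have hβ' : (p ^ m + 1) * β + 1 = p ^ (N * M * d) := by
    have : p ^ m + 1 ∣ q - 1 := by
      rw [hq, show N * M * d = m * 2 * h by rw [hmM, hh]; ring, pow_mul, pow_mul]
      have h1 : (p ^ m) ^ 2 - 1 ∣ ((p ^ m) ^ 2) ^ h - 1 := by
        simpa using Nat.sub_dvd_pow_sub_pow ((p ^ m) ^ 2) 1 h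
      refine dvd_trans ⟨p ^ m - 1, ?_⟩ h1
      simpa using Nat.sq_sub_sq (p ^ m) 1
    rw [hβ, Nat.mul_div_cancel' this, ← hq]
    omega
  subst hq
  clear hα hβ hMd hNd hL hhd hM hN hd
  subst hmM hnN hh
  have : NeZero M := ⟨hM0⟩
  have : NeZero (2 * h) := ⟨hN0⟩
  have : NeZero d := ⟨hd0.ne'⟩
  have : NeZero (M * d) := ⟨hm.ne'⟩
  have : NeZero (2 * h * d) := ⟨hn.ne'⟩
  rw [count_total p (M * d) (2 * h * d) h M α β (2 * h * M * d) hp (by ring) (by ring) hL0 hα' hβ',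
    count_pow, count_coprime p h M hcop]
  push_cast
  congr 3
  have := sum_mm p M (fun i j => (((p : ℤ) - i) * (j + 1)) ^ h)
  rw [Finset.sum_congr rfl (g := fun c : Fin M → Fin p =>
    (((p : ℤ) - (mx c : ℕ)) * ((mn c : ℕ) + 1)) ^ h)
    (fun c _ => by rw [Nat.cast_sub (mx_lt c).le]), this]
  congr 1
  refine Finset.sum_congr rfl fun i _ => Finset.sum_congr rfl fun j hj => ?_
  rw [Nat.cast_sub (Finset.mem_Icc.1 hj).2]
end
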